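/- Let F be a number field with ring of integers O_F. Let Ξ_f be a finite set of maximal ideals of O_F, Ξ_∞ a set of real embeddings of F, S a finite set of maximal ideals of O_F, and I a nonzero ideal of O_F not contained in any member of Ξ_f. Then there exist a maximal ideal 𝔮 of O_F with 𝔮 ∉ S ∪ Ξ_f and an element α ∈ Fˣ such that I·𝔮 = α·O_F, α is a square of a unit at every 𝔭 ∈ Ξ_f, σ(α) < 0 for every real embedding σ ∈ Ξ_∞, and σ(α) > 0 for every real embedding σ of F not in Ξ_∞. -/

import Mathlib

/-!
Let `𝔪 = ∏_{𝔭 ∈ Ξf} 𝔭 ^ e`, where `e` is so large that `4 ∉ 𝔭 ^ e` for every `𝔭`. By Hensel's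
lemma every integer congruent to `1` modulo `𝔪` is the square of a unit at each `𝔭 ∈ Ξf`
(`isUnitSquareAt_of_sub_mem`). As `I` is prime to `𝔪`, it contains some `β ≡ 1` modulo `𝔪` with the
prescribed signs at the real places (`exists_signs`, `exists_mem_sign`); write `(β) = I 𝔯`. The narrow
ray class of `𝔯` modulo `𝔪` contains infinitely many primes (`infinite_primes_rayClass`), so there is
a prime `𝔮 ∉ S` in it: `(α₁) 𝔮 = (β₁) 𝔯` with `α₁` and `β₁` totally positive and congruent to `1`
modulo `𝔪`. Then `α = β β₁ / α₁` generates `I 𝔮` and has the required local behaviour.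

The substance is Dirichlet's theorem for narrow ray classes, proved here with real variables and
smooth weights only.

* Counting (`exists_rayCount`). The sum of a smooth compactly supported function over a translate of
  a lattice, dilated by `T`, equals its volume main term up to `O(T ^ (-k))` for every `k`
  (`exists_latticeSum_sub_integral_le`). The totally positive units congruent to `1` modulo `𝔪` form
  a full lattice in the logarithmic space, and a smooth partition of unity for that lattice replaces
  a fundamental domain. Hence the smoothed number of ideals of norm about `exp X` in a narrow ray
  class is `κ exp X + O(exp (-X))`, with `κ` independent of the class.
* Nonvanishing (`ClassCount.mellin_ne_zero`). Let `A_χ` be the twist of the counting function by a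
  character `χ ≠ 1`. Its smoothed sums decay exponentially in `X`, and their Mellin transform at `1`
  is a positive multiple of `L(1, χ)`. If it vanished, the smoothed sums of `A_χ * A_1` would decay as
  well, and so would those of `f = A_χ * A_1 * A_χ̄ * A_1`. But the coefficients of `f` are
  nonnegative, and its value at the powers `q ^ i` of a suitable integer `q` is at least a constant
  times `1 / i`, which contradicts the exponential decay.
* Conclusion (`ClassCount.not_summable`). The logarithmic derivatives of the nontrivial twists stay
  bounded as `s → 1⁺` while that of the trivial one does not, so by orthogonality of characters the
  von Mangoldt function restricted to any class has divergent sum `∑ Λ_c(n) / n`. Proper prime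
  powers contribute a convergent sum, and infinitely many primes remain.
-/

open NumberField IsDedekindDomain
open scoped nonZeroDivisors

noncomputable section

namespace PrincipalizationLemma

variable (F : Type*) [Field F] [NumberField F]

/-- `α ∈ Fˣ` is the square of a unit at the finite place `𝔭`, i.e. its image in the
completion `F_𝔭` lies in `(O_𝔭ˣ)²`. -/
def IsUnitSquareAt (α : F) (𝔭 : HeightOneSpectrum (𝓞 F)) : Prop :=
  ∃ y : (𝔭.adicCompletionIntegers F)ˣ,
    (((y : 𝔭.adicCompletionIntegers F) : 𝔭.adicCompletion F)) ^ 2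
      = algebraMap F (𝔭.adicCompletion F) α

/-! ### Smooth lattice sums -/

section LatticeSum

open MeasureTheory Module

set_option linter.unusedSectionVars false

variable {E ι : Type*} [NormedAddCommGroup E] [NormedSpace ℝ E] [FiniteDimensional ℝ E]
  [Fintype ι] (b : Basis ι ℝ E)

/-- The smoothed count `∑ Φ((v + t) / T)` over the lattice spanned by `b`. -/
noncomputable def latticeSum (Φ : E → ℝ) (T : ℝ) (t : E) : ℝ :=
  ∑' v : Submodule.span ℤ (Set.range b), Φ (T⁻¹ • ((v : E) + t))

/-- The lattice points in a ball of radius `R` number at most `K (R + 1) ^ n`, uniformly in the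
centre. -/
lemma exists_lattice_card_le : ∃ K : ℝ, 0 ≤ K ∧ ∀ R : ℝ, 0 ≤ R → ∀ t : E,
    ∃ s : Finset (Submodule.span ℤ (Set.range b)),
      (∀ v : Submodule.span ℤ (Set.range b), ‖(v : E) + t‖ ≤ R → v ∈ s) ∧
        (s.card : ℝ) ≤ K * (R + 1) ^ Fintype.card ι := by
  classical
  obtain ⟨c, hc0, hc⟩ : ∃ c : ℝ, 0 ≤ c ∧ ∀ (x : E) (i : ι), |b.repr x i| ≤ c * ‖x‖ := by
    let f : E →L[ℝ] (ι → ℝ) := LinearMap.toContinuousLinearMap b.equivFun.toLinearMap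
    refine ⟨‖f‖, norm_nonneg _, fun x i => ?_⟩
    have h1 := f.le_opNorm x
    have h2 := norm_le_pi_norm (f x) i
    simpa [f] using h2.trans h1
  let e := (b.restrictScalars ℤ).equivFun
  refine ⟨(2 * c + 1) ^ Fintype.card ι, by positivity, fun R hR t => ?_⟩
  let B : ι → Finset ℤ := fun i => Finset.Icc ⌈-(b.repr t i) - c * R⌉ ⌊-(b.repr t i) + c * R⌋
  refine ⟨(Fintype.piFinset B).map e.symm.toEquiv.toEmbedding, fun v hv => ?_, ?_⟩
  · rw [Finset.mem_map]
    refine ⟨e v, ?_, by simp⟩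
    rw [Fintype.mem_piFinset]
    intro i
    have h1 : ((e v i : ℤ) : ℝ) = b.repr (v : E) i := by
      have := b.restrictScalars_repr_apply ℤ v i
      simpa [e] using this
    have h2 := (hc ((v : E) + t) i).trans (mul_le_mul_of_nonneg_left hv hc0)
    rw [map_add, Finsupp.add_apply, ← h1, abs_le] at h2
    simp only [B, Finset.mem_Icc, Int.ceil_le, Int.le_floor]
    constructor <;> linarith [h2.1, h2.2]
  · rw [Finset.card_map, Fintype.card_piFinset]
    push_cast
    rw [← mul_pow, ← Finset.card_univ, ← Finset.prod_const]
    refine Finset.prod_le_prod (fun _ _ => by positivity) fun i _ => ?_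
    have hcR : 0 ≤ c * R := by positivity
    rw [Int.card_Icc]
    have h0 : ((⌊-(b.repr t i) + c * R⌋ + 1 - ⌈-(b.repr t i) - c * R⌉).toNat : ℝ)
        ≤ max ((⌊-(b.repr t i) + c * R⌋ + 1 - ⌈-(b.repr t i) - c * R⌉ : ℤ) : ℝ) 0 := by
      have : ((⌊-(b.repr t i) + c * R⌋ + 1 - ⌈-(b.repr t i) - c * R⌉).toNat : ℤ)
        ≤ max (⌊-(b.repr t i) + c * R⌋ + 1 - ⌈-(b.repr t i) - c * R⌉ : ℤ) 0 := by omega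
      exact_mod_cast this
    refine h0.trans (max_le ?_ (by positivity))
    push_cast
    have h1 := Int.floor_le (-(b.repr t i) + c * R)
    have h2 := Int.le_ceil (-(b.repr t i) - c * R)
    nlinarith

lemma exists_support_bound {Φ : E → ℝ} (hΦ : HasCompactSupport Φ) :
    ∃ R : ℝ, 0 ≤ R ∧ ∀ x, R < ‖x‖ → Φ x = 0 := by
  obtain ⟨R, hR⟩ := hΦ.isCompact.isBounded.exists_norm_le
  refine ⟨max R 0, le_max_right _ _, fun x hx => ?_⟩
  by_contra h
  exact absurd (hR x (subset_tsupport _ h)) (not_le.2 ((le_max_left _ _).trans_lt hx))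

lemma latticeSum_finite {Φ : E → ℝ} (hΦ : HasCompactSupport Φ) {T : ℝ} (hT : 0 < T) (t : E)
    (r : ℝ) :
    ∃ s : Finset (Submodule.span ℤ (Set.range b)), ∀ t', ‖t' - t‖ ≤ r → ∀ v ∉ s,
      Φ (T⁻¹ • ((v : E) + t')) = 0 := by
  obtain ⟨R, hR0, hR⟩ := exists_support_bound hΦ
  obtain ⟨K, -, hK⟩ := exists_lattice_card_le b
  obtain ⟨s, hs, -⟩ := hK (T * R + |r|) (by positivity) t
  refine ⟨s, fun t' ht' v hv => hR _ ?_⟩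
  by_contra h
  rw [not_lt, norm_smul, norm_inv, Real.norm_of_nonneg hT.le, inv_mul_le_iff₀ hT] at h
  refine hv (hs v ?_)
  calc ‖(v : E) + t‖ = ‖((v : E) + t') - (t' - t)‖ := by congr 1; abel
    _ ≤ T * R + |r| := (norm_sub_le _ _).trans (add_le_add h (ht'.trans (le_abs_self r)))

lemma exists_latticeSum_le {Φ : E → ℝ} (hc : Continuous Φ) (hΦ : HasCompactSupport Φ) :
    ∃ C : ℝ, ∀ T : ℝ, 1 ≤ T → ∀ t, |latticeSum b Φ T t| ≤ C * T ^ Fintype.card ι := by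
  obtain ⟨R, hR0, hR⟩ := exists_support_bound hΦ
  obtain ⟨K, hK0, hK⟩ := exists_lattice_card_le b
  obtain ⟨M, hM⟩ := hc.bounded_above_of_compact_support hΦ
  have hM0 : 0 ≤ M := (norm_nonneg _).trans (hM 0)
  refine ⟨K * (R + 1) ^ Fintype.card ι * M, fun T hT t => ?_⟩
  have hT0 : 0 < T := by linarith
  obtain ⟨s, hs, hcard⟩ := hK (T * R) (by positivity) t
  rw [latticeSum, tsum_eq_sum (s := s)]
  · calc |∑ v ∈ s, Φ (T⁻¹ • ((v : E) + t))| ≤ ∑ v ∈ s, M :=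
          (Finset.abs_sum_le_sum_abs _ _).trans (Finset.sum_le_sum fun v _ => hM _)
      _ = s.card * M := by simp
      _ ≤ K * (T * R + 1) ^ Fintype.card ι * M := by gcongr
      _ ≤ K * (T * (R + 1)) ^ Fintype.card ι * M := by gcongr; nlinarith
      _ = _ := by rw [mul_pow]; ring
  · intro v hv
    refine hR _ ?_
    by_contra h
    rw [not_lt, norm_smul, norm_inv, Real.norm_of_nonneg hT0.le, inv_mul_le_iff₀ hT0] at h
    exact hv (hs v h)

lemma hasDerivAt_latticeSum {Φ : E → ℝ} (hc : ContDiff ℝ 1 Φ) (hΦ : HasCompactSupport Φ)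
    {T : ℝ} (hT : 0 < T) (t w : E) (s : ℝ) :
    HasDerivAt (fun s : ℝ => latticeSum b Φ T (t + s • w))
      (T⁻¹ * latticeSum b (fun x => fderiv ℝ Φ x w) T (t + s • w)) s := by
  obtain ⟨F, hF⟩ := latticeSum_finite b hΦ hT (t + s • w) ‖w‖
  obtain ⟨F', hF'⟩ := latticeSum_finite b (hΦ.fderiv_apply (𝕜 := ℝ) w) hT (t + s • w) 0
  classical
  have h1 : (fun s : ℝ => latticeSum b Φ T (t + s • w)) =ᶠ[nhds s]
      fun s => ∑ v ∈ F ∪ F', Φ (T⁻¹ • ((v : E) + (t + s • w))) := by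
    filter_upwards [Metric.ball_mem_nhds s one_pos] with s' hs'
    refine tsum_eq_sum fun v hv => hF _ ?_ v (fun h => hv (Finset.mem_union_left _ h))
    rw [Metric.mem_ball, Real.dist_eq] at hs'
    have : t + s' • w - (t + s • w) = (s' - s) • w := by rw [sub_smul]; abel
    rw [this, norm_smul, Real.norm_eq_abs]
    exact mul_le_of_le_one_left (norm_nonneg _) hs'.le
  refine HasDerivAt.congr_of_eventuallyEq ?_ h1
  rw [latticeSum, tsum_eq_sum (s := F ∪ F') fun v hv => hF' _ (by simp) v
    (fun h => hv (Finset.mem_union_right _ h)), Finset.mul_sum]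
  refine HasDerivAt.fun_sum fun v _ => ?_
  have h2 : HasDerivAt (fun s : ℝ => T⁻¹ • ((v : E) + (t + s • w))) (T⁻¹ • w) s := by
    have := (((hasDerivAt_id s).smul_const w).const_add t).const_add (v : E)
    rw [one_smul] at this
    exact this.const_smul T⁻¹
  have h3 := ((hc.differentiable one_ne_zero _).hasFDerivAt
    (x := T⁻¹ • ((v : E) + (t + s • w)))).comp_hasDerivAt s h2
  rw [map_smul, smul_eq_mul] at h3
  exact h3

lemma latticeSum_add_lattice (Φ : E → ℝ) (T : ℝ) (t : E) (w : Submodule.span ℤ (Set.range b)) :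
    latticeSum b Φ T (t + w) = latticeSum b Φ T t := by
  rw [latticeSum, latticeSum, ← (Equiv.addRight w).tsum_eq (fun v =>
    Φ (T⁻¹ • ((v : E) + t)))]
  refine tsum_congr fun v => ?_
  simp only [Equiv.coe_addRight, Submodule.coe_add]
  congr 2; abel

/-- Moving along a basis direction changes the lattice sum of a test function by `O(T ^ (n - k))`
for every `k`: the sum is periodic in that direction, so its derivative vanishes somewhere, and the
derivative is `T⁻¹` times a lattice sum of the same kind. -/
lemma exists_latticeSum_sub_le (i : ι) (k : ℕ) : ∀ {Φ : E → ℝ}, ContDiff ℝ (⊤ : ℕ∞) Φ →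
    HasCompactSupport Φ → ∃ C : ℝ, ∀ T : ℝ, 1 ≤ T → ∀ (t : E) (s : ℝ),
      |latticeSum b Φ T (t + s • b i) - latticeSum b Φ T t| ≤
        C * T ^ Fintype.card ι * (T⁻¹) ^ k := by
  induction k with
  | zero =>
    intro Φ hc hΦ
    obtain ⟨C, hC⟩ := exists_latticeSum_le b hc.continuous hΦ
    refine ⟨C + C, fun T hT t s => (abs_sub _ _).trans ?_⟩
    rw [pow_zero, mul_one, add_mul]
    exact add_le_add (hC T hT _) (hC T hT _)
  | succ k ih =>
    intro Φ hc hΦ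
    have hc' : ContDiff ℝ (⊤ : ℕ∞) (fun x => fderiv ℝ Φ x (b i)) :=
      (hc.fderiv_right (m := (⊤ : ℕ∞)) (by simp)).clm_apply contDiff_const
    obtain ⟨C, hC⟩ := ih hc' (hΦ.fderiv_apply (𝕜 := ℝ) (b i))
    have hC0 : 0 ≤ C := by
      simpa using (abs_nonneg _).trans (hC 1 le_rfl 0 0)
    refine ⟨C, fun T hT t s => ?_⟩
    have hT0 : 0 < T := by linarith
    set f : ℝ → ℝ := fun s => latticeSum b Φ T (t + s • b i) with hf
    set g : ℝ → ℝ := fun s => latticeSum b (fun x => fderiv ℝ Φ x (b i)) T (t + s • b i) with hg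
    have hd : ∀ s, HasDerivAt f (T⁻¹ * g s) s := fun s =>
      hasDerivAt_latticeSum b (hc.of_le (by exact_mod_cast le_top)) hΦ hT0 t (b i) s
    have hper : ∀ (m : ℤ) (s : ℝ), f (s + m) = f s := by
      intro m s
      have := latticeSum_add_lattice b Φ T (t + s • b i)
        (m • ⟨b i, Submodule.subset_span ⟨i, rfl⟩⟩)
      rw [hf]
      simp only
      rw [← this]
      congr 1
      simp only [Submodule.coe_smul, add_smul, Int.cast_smul_eq_zsmul]
      abel
    obtain ⟨s₀, -, hs₀⟩ := exists_deriv_eq_zero (f := f) (a := 0) (b := 1) one_pos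
      (fun s _ => (hd s).continuousAt.continuousWithinAt)
      (by have := hper 1 0; simpa using this.symm)
    rw [(hd s₀).deriv] at hs₀
    have hg0 : g s₀ = 0 := by
      rcases mul_eq_zero.1 hs₀ with h | h
      · exact absurd h (inv_ne_zero hT0.ne')
      · exact h
    have hgb : ∀ s, |g s| ≤ C * T ^ Fintype.card ι * (T⁻¹) ^ k := by
      intro s
      have := hC T hT (t + s₀ • b i) (s - s₀)
      rw [add_assoc, ← add_smul] at this
      simp only [add_sub_cancel] at this
      change |g s - g s₀| ≤ _ at this
      rwa [hg0, sub_zero] at this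
    have hlip : ∀ s ∈ Set.Icc (0 : ℝ) 1, |f s - f 0| ≤ C * T ^ Fintype.card ι * (T⁻¹) ^ (k + 1) := by
      intro s hs
      have := (convex_univ (𝕜 := ℝ)).norm_image_sub_le_of_norm_hasDerivWithin_le
        (f := f) (f' := fun s => T⁻¹ * g s) (C := C * T ^ Fintype.card ι * (T⁻¹) ^ (k + 1))
        (x := (0 : ℝ)) (y := s)
        (fun x _ => (hd x).hasDerivWithinAt) (fun x _ => ?_) trivial trivial
      · rw [Real.norm_eq_abs, Real.norm_eq_abs, sub_zero, abs_of_nonneg hs.1] at this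
        exact this.trans (mul_le_of_le_one_right (by positivity) hs.2)
      · rw [norm_mul, norm_inv, Real.norm_of_nonneg hT0.le, Real.norm_eq_abs]
        calc T⁻¹ * |g x| ≤ T⁻¹ * (C * T ^ Fintype.card ι * (T⁻¹) ^ k) := by
              gcongr; exact hgb x
          _ = _ := by ring
    have hfr : f s = f (Int.fract s) := by
      conv_lhs => rw [← Int.fract_add_floor s]
      exact hper _ _
    have := hlip (Int.fract s) ⟨Int.fract_nonneg s, (Int.fract_lt_one s).le⟩
    rw [← hfr] at this
    simpa [hf] using this

lemma exists_latticeSum_osc_le (k : ℕ) {Φ : E → ℝ} (hc : ContDiff ℝ (⊤ : ℕ∞) Φ)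
    (hΦ : HasCompactSupport Φ) : ∃ C : ℝ, ∀ T : ℝ, 1 ≤ T → ∀ (t t' : E),
      |latticeSum b Φ T t' - latticeSum b Φ T t| ≤ C * T ^ Fintype.card ι * (T⁻¹) ^ k := by
  classical
  choose C hC using fun i => exists_latticeSum_sub_le b i k hc hΦ
  refine ⟨∑ i, C i, fun T hT t t' => ?_⟩
  have key : ∀ s : Finset ι, ∀ (t : E) (c : ι → ℝ),
      |latticeSum b Φ T (t + ∑ i ∈ s, c i • b i) - latticeSum b Φ T t| ≤
        (∑ i ∈ s, C i) * T ^ Fintype.card ι * (T⁻¹) ^ k := by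
    intro s t c
    induction s using Finset.induction_on with
    | empty => simp
    | insert i s his ih =>
      rw [Finset.sum_insert his, Finset.sum_insert his, add_mul, add_mul]
      have h1 := hC i T hT (t + ∑ i ∈ s, c i • b i) (c i)
      have h2 : t + (c i • b i + ∑ i ∈ s, c i • b i) = t + ∑ i ∈ s, c i • b i + c i • b i := by abel
      rw [h2]
      refine (abs_sub_le _ (latticeSum b Φ T (t + ∑ i ∈ s, c i • b i)) _).trans ?_
      exact add_le_add h1 ih
  have := key Finset.univ t (b.repr (t' - t))
  rw [b.sum_repr] at this
  simpa using this

variable [MeasurableSpace E] [BorelSpace E] (μ : Measure E) [μ.IsAddHaarMeasure]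

lemma integral_latticeSum {Φ : E → ℝ} (hc : Continuous Φ) (hΦ : HasCompactSupport Φ)
    {T : ℝ} (hT : 0 < T) :
    ∫ t in ZSpan.fundamentalDomain b, latticeSum b Φ T t ∂μ = T ^ Fintype.card ι * ∫ x, Φ x ∂μ := by
  have hΨc : Continuous fun x => Φ (T⁻¹ • x) := hc.comp (continuous_const_smul _)
  have hΨ : HasCompactSupport fun x => Φ (T⁻¹ • x) :=
    hΦ.comp_homeomorph (Homeomorph.smulOfNeZero T⁻¹ (inv_ne_zero hT.ne'))
  have hinteg := hΨc.integrable_of_hasCompactSupport (μ := μ) hΨ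
  have : VAddInvariantMeasure (Submodule.span ℤ (Set.range b)) E μ :=
    ⟨fun c s _ => measure_preimage_add μ (c : E) s⟩
  have h1 := (ZSpan.isAddFundamentalDomain b μ).integral_eq_tsum'' _ hinteg
  have h2 : ∫ x, Φ (T⁻¹ • x) ∂μ = T ^ Fintype.card ι * ∫ x, Φ x ∂μ := by
    rw [Measure.integral_comp_inv_smul, finrank_eq_card_basis b, smul_eq_mul, abs_of_pos (by positivity)]
  rw [← h2, h1]
  -- only finitely many lattice translates of the bounded domain meet the support
  obtain ⟨r, hr⟩ := (ZSpan.fundamentalDomain_isBounded b).exists_norm_le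
  obtain ⟨F, hF⟩ := latticeSum_finite b hΦ hT (0 : E) r
  have hF' : ∀ t ∈ ZSpan.fundamentalDomain b, ∀ v ∉ F, Φ (T⁻¹ • ((v : E) + t)) = 0 :=
    fun t ht v hv => hF t (by simpa using hr t ht) v hv
  have hms : MeasurableSet (ZSpan.fundamentalDomain b) := ZSpan.fundamentalDomain_measurableSet b
  rw [tsum_eq_sum (s := F), setIntegral_congr_fun (g := fun t => ∑ v ∈ F, Φ (T⁻¹ • ((v : E) + t)))
    hms, integral_finsetSum]
  · rfl
  · intro v _
    refine Integrable.integrableOn ?_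
    exact hinteg.comp_add_left (v : E)
  · intro t ht
    exact tsum_eq_sum fun v hv => hF' t ht v hv
  · intro v hv
    refine setIntegral_eq_zero_of_forall_eq_zero fun t ht => ?_
    exact hF' t ht v hv

/-- A smooth lattice sum equals `T ^ n` times the integral divided by the covolume, up to
`O(T ^ (-k))` for each `k` and uniformly in the translation `t`: by the oscillation bound it may be
replaced by its average over a fundamental domain. -/
theorem exists_latticeSum_sub_integral_le (k : ℕ) {Φ : E → ℝ} (hc : ContDiff ℝ (⊤ : ℕ∞) Φ)
    (hΦ : HasCompactSupport Φ) : ∃ C : ℝ, ∀ T : ℝ, 1 ≤ T → ∀ (t : E),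
      |latticeSum b Φ T t -
        T ^ Fintype.card ι * (∫ x, Φ x ∂μ) / μ.real (ZSpan.fundamentalDomain b)| ≤
        C * (T⁻¹) ^ k := by
  obtain ⟨C, hC⟩ := exists_latticeSum_osc_le b (k + Fintype.card ι) hc hΦ
  refine ⟨C, fun T hT t => ?_⟩
  have hT0 : 0 < T := by linarith
  set D := ZSpan.fundamentalDomain b with hD
  have hms : MeasurableSet D := ZSpan.fundamentalDomain_measurableSet b
  have hfin : μ D < ⊤ := (ZSpan.fundamentalDomain_isBounded b).measure_lt_top
  have hpos : 0 < μ.real D := by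
    rw [measureReal_def, ENNReal.toReal_pos_iff]
    exact ⟨pos_iff_ne_zero.2 (ZSpan.measure_fundamentalDomain_ne_zero b), hfin⟩
  rw [← integral_latticeSum b μ hc.continuous hΦ hT0]
  have hcont : Continuous (fun t' => latticeSum b Φ T t') := by
    rw [continuous_iff_continuousAt]
    intro t₀
    obtain ⟨F, hF⟩ := latticeSum_finite b hΦ hT0 t₀ 1
    have : (fun t' => latticeSum b Φ T t') =ᶠ[nhds t₀]
        fun t' => ∑ v ∈ F, Φ (T⁻¹ • ((v : E) + t')) := by
      filter_upwards [Metric.closedBall_mem_nhds t₀ one_pos] with t' ht'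
      rw [mem_closedBall_iff_norm] at ht'
      exact tsum_eq_sum fun v hv => hF t' ht' v hv
    refine ContinuousAt.congr ?_ this.symm
    have hcc := hc.continuous
    fun_prop
  have hinteg : IntegrableOn (fun t' => latticeSum b Φ T t') D μ :=
    (hcont.continuousOn.integrableOn_compact
      (ZSpan.fundamentalDomain_isBounded b).isCompact_closure).mono_set subset_closure
  have h1 : ∫ t' in D, (latticeSum b Φ T t - latticeSum b Φ T t') ∂μ =
      μ.real D * latticeSum b Φ T t - ∫ t' in D, latticeSum b Φ T t' ∂μ := by
    have hconst : IntegrableOn (fun _ : E => latticeSum b Φ T t) D μ :=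
      integrableOn_const hfin.ne (by simp)
    rw [integral_sub hconst hinteg, setIntegral_const, smul_eq_mul]
  have h2 := norm_setIntegral_le_of_norm_le_const (μ := μ) (s := D)
    (f := fun t' => latticeSum b Φ T t - latticeSum b Φ T t')
    (C := C * (T⁻¹) ^ k) hfin (fun t' _ => ?_)
  · rw [h1, Real.norm_eq_abs] at h2
    have h3 : latticeSum b Φ T t - (∫ t' in D, latticeSum b Φ T t' ∂μ) / μ.real D =
        (μ.real D * latticeSum b Φ T t - ∫ t' in D, latticeSum b Φ T t' ∂μ) / μ.real D := by
      field_simp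
    rw [h3, abs_div, abs_of_pos hpos, div_le_iff₀ hpos]
    exact h2
  · refine (hC T hT t' t).trans_eq ?_
    rw [pow_add, inv_pow T (Fintype.card ι)]
    field_simp

end LatticeSum

/-! ### Smoothed sums of arithmetic functions -/

section Smoothing

open MeasureTheory Module

open ArithmeticFunction

/-- `g` is a continuous nonnegative weight supported in `[-R, R]` and positive at `0`. -/
structure IsWeight (g : ℝ → ℝ) (R : ℝ) : Prop where
  cont : Continuous g
  nonneg : ∀ u, 0 ≤ g u
  supp : ∀ u, R < |u| → g u = 0
  pos : 0 < g 0
  R_nonneg : 0 ≤ R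

/-- The smoothed sum `∑ a(n) g(log n - X)`, which sees the integers `n` of size about `exp X`. -/
noncomputable def smoothSum (a : ArithmeticFunction ℂ) (g : ℝ → ℝ) (X : ℝ) : ℂ :=
  ∑' n : ℕ, a n * (g (Real.log n - X) : ℂ)

/-- Additive convolution of two weights. -/
noncomputable def weightConv (g h : ℝ → ℝ) (v : ℝ) : ℝ := ∫ u, g u * h (v - u)

variable {g h : ℝ → ℝ} {R R' : ℝ}

lemma IsWeight.hasCompactSupport (hg : IsWeight g R) : HasCompactSupport g :=
  HasCompactSupport.intro (isCompact_Icc (a := -R) (b := R)) fun u hu => hg.supp u (by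
    by_contra h
    rw [not_lt, abs_le] at h
    exact hu h)

lemma IsWeight.eq_zero_of_lt (hg : IsWeight g R) {N n : ℕ} {X : ℝ} (hN : Real.exp (X + R) ≤ N)
    (hn : N < n) : g (Real.log n - X) = 0 := by
  apply hg.supp
  have h0 : (0 : ℝ) < n := by exact_mod_cast Nat.zero_lt_of_lt hn
  have h1 : X + R < Real.log n := by
    rw [Real.lt_log_iff_exp_lt h0]
    exact hN.trans_lt (by exact_mod_cast hn)
  rw [lt_abs]; left; linarith

lemma smoothSum_eq_sum (a : ArithmeticFunction ℂ) (hg : IsWeight g R) {N : ℕ} {X : ℝ}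
    (hN : Real.exp (X + R) ≤ N) :
    smoothSum a g X = ∑ n ∈ Finset.range (N + 1), a n * (g (Real.log n - X) : ℂ) := by
  refine tsum_eq_sum fun n hn => ?_
  rw [Finset.mem_range, not_lt] at hn
  rw [hg.eq_zero_of_lt hN (by omega)]
  simp

lemma smoothSum_eq_zero (a : ArithmeticFunction ℂ) (hg : IsWeight g R) {X : ℝ} (hX : X < -R) :
    smoothSum a g X = 0 := by
  rw [smoothSum_eq_sum a hg (N := 0 + 1) (X := X)
    (by simpa using Real.exp_le_one_iff.2 (by linarith : X + R ≤ 0))]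
  refine Finset.sum_eq_zero fun n hn => ?_
  rcases Nat.eq_zero_or_pos n with rfl | hn0
  · simp
  · rw [hg.supp, Complex.ofReal_zero, mul_zero]
    have : 0 ≤ Real.log n := Real.log_nonneg (by exact_mod_cast hn0)
    rw [lt_abs]; left; linarith

lemma continuous_smoothSum (a : ArithmeticFunction ℂ) (hg : IsWeight g R) :
    Continuous (smoothSum a g) := by
  rw [continuous_iff_continuousAt]
  intro X
  obtain ⟨N, hN⟩ := exists_nat_ge (Real.exp (X + 1 + R))
  have : smoothSum a g =ᶠ[nhds X]
      fun X => ∑ n ∈ Finset.range (N + 1), a n * (g (Real.log n - X) : ℂ) := by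
    filter_upwards [Iio_mem_nhds (lt_add_one X)] with Y hY
    exact smoothSum_eq_sum a hg ((Real.exp_le_exp.2 (by simpa using (Set.mem_Iio.1 hY).le)).trans hN)
  refine ContinuousAt.congr ?_ this.symm
  have := hg.cont
  fun_prop

lemma weightConv_integrable (hg : IsWeight g R) (hh : IsWeight h R') (v : ℝ) :
    Integrable fun u => g u * h (v - u) := by
  refine Continuous.integrable_of_hasCompactSupport ?_ (hg.hasCompactSupport.mul_right)
  have := hg.cont; have := hh.cont
  fun_prop

lemma IsWeight.conv (hg : IsWeight g R) (hh : IsWeight h R') :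
    IsWeight (weightConv g h) (R + R') where
  cont := by
    have : weightConv g h = convolution g h (ContinuousLinearMap.mul ℝ ℝ) volume := by
      ext v; simp [weightConv, convolution]
    rw [this]
    exact hh.hasCompactSupport.continuous_convolution_right _
      hg.cont.locallyIntegrable hh.cont
  nonneg v := integral_nonneg fun u => mul_nonneg (hg.nonneg u) (hh.nonneg _)
  supp v hv := by
    rw [weightConv, integral_eq_zero_of_ae]
    filter_upwards with u
    by_cases hu : R < |u|
    · simp [hg.supp u hu]
    · have : R' < |v - u| := by
        have := abs_sub_abs_le_abs_sub v u
        linarith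
      simp [hh.supp _ this]
  pos := by
    have hc : Continuous fun u => g u * h (0 - u) := by
      have := hg.cont; have := hh.cont
      fun_prop
    refine hc.integral_pos_of_hasCompactSupport_nonneg_nonzero
      hg.hasCompactSupport.mul_right
      (fun u => mul_nonneg (hg.nonneg u) (hh.nonneg _)) (x := 0) ?_
    simpa using (mul_pos hg.pos hh.pos).ne'
  R_nonneg := add_nonneg hg.R_nonneg hh.R_nonneg

/-- The smoothed sum of a Dirichlet convolution is the convolution of the smoothed sums. -/
lemma integral_smoothSum_mul (a b : ArithmeticFunction ℂ) (hg : IsWeight g R) (hh : IsWeight h R')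
    (Y : ℝ) :
    ∫ X, smoothSum a g X * smoothSum b h (Y - X) = smoothSum (a * b) (weightConv g h) Y := by
  obtain ⟨N, hN⟩ := exists_nat_ge (Real.exp (Y + (R + R')))
  have hR := hg.R_nonneg
  have hR' := hh.R_nonneg
  set S := Finset.range (N + 1)
  -- for every `X` the product of sums may be truncated at `N`
  have h1 : ∀ X, smoothSum a g X * smoothSum b h (Y - X) =
      ∑ n ∈ S, ∑ m ∈ S, a n * b m *
        ((g (Real.log n - X) * h (Real.log m - (Y - X)) : ℝ) : ℂ) := by
    intro X
    have h2 : (∑ n ∈ S, ∑ m ∈ S, a n * b m *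
        ((g (Real.log n - X) * h (Real.log m - (Y - X)) : ℝ) : ℂ)) =
        (∑ n ∈ S, a n * (g (Real.log n - X) : ℂ)) *
          ∑ m ∈ S, b m * (h (Real.log m - (Y - X)) : ℂ) := by
      rw [Finset.sum_mul_sum]
      refine Finset.sum_congr rfl fun n _ => Finset.sum_congr rfl fun m _ => ?_
      push_cast; ring
    rw [h2]
    by_cases hX1 : Y - X < -R'
    · rw [smoothSum_eq_zero b hh hX1, mul_zero]
      rw [show (∑ m ∈ S, b m * (h (Real.log m - (Y - X)) : ℂ)) = 0 from ?_, mul_zero]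
      refine Finset.sum_eq_zero fun n hn => ?_
      rcases Nat.eq_zero_or_pos n with rfl | hn0
      · simp
      · rw [hh.supp, Complex.ofReal_zero, mul_zero]
        have : 0 ≤ Real.log n := Real.log_nonneg (by exact_mod_cast hn0)
        rw [lt_abs]; left; linarith
    by_cases hX2 : X < -R
    · rw [smoothSum_eq_zero a hg hX2, zero_mul]
      rw [show (∑ n ∈ S, a n * (g (Real.log n - X) : ℂ)) = 0 from ?_, zero_mul]
      refine Finset.sum_eq_zero fun n hn => ?_
      rcases Nat.eq_zero_or_pos n with rfl | hn0
      · simp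
      · rw [hg.supp, Complex.ofReal_zero, mul_zero]
        have : 0 ≤ Real.log n := Real.log_nonneg (by exact_mod_cast hn0)
        rw [lt_abs]; left; linarith
    rw [smoothSum_eq_sum a hg (N := N), smoothSum_eq_sum b hh (N := N)]
    · exact (Real.exp_le_exp.2 (by linarith)).trans hN
    · exact (Real.exp_le_exp.2 (by linarith)).trans hN
  -- integrate each term
  have hI : ∀ n m : ℕ, Integrable fun X : ℝ => a n * b m *
      ((g (Real.log n - X) * h (Real.log m - (Y - X)) : ℝ) : ℂ) := by
    intro n m
    refine Continuous.integrable_of_hasCompactSupport ?_ ?_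
    · have := hg.cont; have := hh.cont
      fun_prop
    · refine HasCompactSupport.intro
        (isCompact_Icc (a := Real.log n - R) (b := Real.log n + R)) fun X hX => ?_
      rw [hg.supp, zero_mul, Complex.ofReal_zero, mul_zero]
      by_contra hcon
      rw [not_lt, abs_le] at hcon
      exact hX ⟨by linarith [hcon.2], by linarith [hcon.1]⟩
  have hT : ∀ n m : ℕ, n ≠ 0 → m ≠ 0 → ∫ X : ℝ, a n * b m *
      ((g (Real.log n - X) * h (Real.log m - (Y - X)) : ℝ) : ℂ) =
      a n * b m * (weightConv g h (Real.log (n * m : ℕ) - Y) : ℂ) := by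
    intro n m hn hm
    rw [integral_const_mul, integral_complex_ofReal, weightConv]
    congr 2
    rw [← integral_sub_left_eq_self _ volume (Real.log n)]
    refine integral_congr_ae (Filter.Eventually.of_forall fun X => ?_)
    simp only [Nat.cast_mul]
    rw [Real.log_mul (by exact_mod_cast hn) (by exact_mod_cast hm)]
    congr 2 <;> ring
  simp_rw [h1]
  rw [integral_finsetSum _ fun n _ => integrable_finsetSum _ fun m _ => hI n m]
  simp_rw [integral_finsetSum _ fun m _ => hI _ m]
  rw [smoothSum_eq_sum (a * b) (hg.conv hh) hN]
  -- regroup by the product `n * m`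
  have h3 : ∀ k ∈ Finset.range (N + 1), (a * b) k * (weightConv g h (Real.log k - Y) : ℂ) =
      ∑ x ∈ k.divisorsAntidiagonal,
        a x.1 * b x.2 * (weightConv g h (Real.log (x.1 * x.2 : ℕ) - Y) : ℂ) := by
    intro k _
    rw [mul_apply, Finset.sum_mul]
    refine Finset.sum_congr rfl fun x hx => ?_
    rw [(Nat.mem_divisorsAntidiagonal.1 hx).1]
  rw [Finset.sum_congr rfl h3, ← Finset.sum_product' S S]
  symm
  rw [Finset.sum_sigma']
  refine Finset.sum_bij_ne_zero (fun x _ _ => x.2) ?_ ?_ ?_ ?_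
  · rintro ⟨k, x⟩ hx _
    simp only [Finset.mem_sigma, Finset.mem_range, Nat.mem_divisorsAntidiagonal] at hx
    have h1 : 0 < x.1 := Nat.pos_of_ne_zero fun h => hx.2.2 (by rw [← hx.2.1, h, zero_mul])
    have h2 : 0 < x.2 := Nat.pos_of_ne_zero fun h => hx.2.2 (by rw [← hx.2.1, h, mul_zero])
    have h3 : x.1 ≤ k := by rw [← hx.2.1]; exact Nat.le_mul_of_pos_right _ h2
    have h4 : x.2 ≤ k := by rw [← hx.2.1]; exact Nat.le_mul_of_pos_left _ h1
    simp only [S, Finset.mem_product, Finset.mem_range]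
    omega
  · rintro ⟨k, x⟩ hx _ ⟨k', x'⟩ hx' _ hxx
    simp only [Finset.mem_sigma, Nat.mem_divisorsAntidiagonal] at hx hx' hxx
    obtain rfl : x = x' := hxx
    obtain rfl : k = k' := hx.2.1.symm.trans hx'.2.1
    rfl
  · rintro ⟨n, m⟩ hnm hne
    have hn0 : n ≠ 0 := by
      rintro rfl; simp at hne
    have hm0 : m ≠ 0 := by
      rintro rfl; simp at hne
    rw [hT n m hn0 hm0] at hne
    refine ⟨⟨n * m, (n, m)⟩, ?_, hne, rfl⟩
    simp only [Finset.mem_sigma, Finset.mem_range, Nat.mem_divisorsAntidiagonal]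
    refine ⟨?_, trivial, mul_ne_zero hn0 hm0⟩
    by_contra hcon
    refine hne ?_
    rw [(hg.conv hh).eq_zero_of_lt hN (by omega)]
    simp
  · rintro ⟨k, x⟩ hx _
    simp only [Finset.mem_sigma, Finset.mem_range, Nat.mem_divisorsAntidiagonal] at hx
    rw [hT x.1 x.2 (fun h => hx.2.2 (by rw [← hx.2.1, h, zero_mul]))
      (fun h => hx.2.2 (by rw [← hx.2.1, h, mul_zero]))]

lemma smoothSum_conj (a : ArithmeticFunction ℂ) (a' : ArithmeticFunction ℂ)
    (h : ∀ n, a' n = starRingEnd ℂ (a n)) (g : ℝ → ℝ) (X : ℝ) :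
    smoothSum a' g X = starRingEnd ℂ (smoothSum a g X) := by
  rw [smoothSum, smoothSum, Complex.conj_tsum]
  refine tsum_congr fun n => ?_
  rw [h n, map_mul, Complex.conj_ofReal]

lemma exp_neg_abs_integrable {c : ℝ} (hc : 0 < c) : Integrable fun X : ℝ => Real.exp (-c * |X|) := by
  rw [← integrableOn_univ, ← Set.Iic_union_Ioi (a := (0 : ℝ))]
  refine IntegrableOn.union ?_ ?_
  · refine (integrableOn_exp_mul_Iic hc 0).congr_fun (fun X hX => ?_) measurableSet_Iic
    simp only [abs_of_nonpos (Set.mem_Iic.1 hX)]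
    congr 1; ring
  · refine (integrableOn_exp_mul_Ioi (neg_lt_zero.2 hc) 0).congr_fun (fun X hX => ?_)
      measurableSet_Ioi
    simp only [abs_of_pos (Set.mem_Ioi.1 hX)]

/-- Exponential decay is preserved by convolution, at half the rate. -/
lemma norm_integral_conv_le {T E : ℝ → ℂ} {C C' c : ℝ} (hc : 0 < c)
    (hT : ∀ X, ‖T X‖ ≤ C * Real.exp (-c * |X|)) (hE : ∀ X, ‖E X‖ ≤ C' * Real.exp (-c * |X|)) :
    ∃ D : ℝ, ∀ Y, ‖∫ X, T X * E (Y - X)‖ ≤ D * Real.exp (-(c / 2) * |Y|) := by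
  have hC : 0 ≤ C := by simpa using (norm_nonneg _).trans (hT 0)
  have hC' : 0 ≤ C' := by simpa using (norm_nonneg _).trans (hE 0)
  refine ⟨C * C' * ∫ X, Real.exp (-(c / 2) * |X|), fun Y => ?_⟩
  have hb : ∀ X, ‖T X * E (Y - X)‖ ≤
      C * C' * Real.exp (-(c / 2) * |Y|) * Real.exp (-(c / 2) * |X|) := by
    intro X
    rw [norm_mul]
    calc ‖T X‖ * ‖E (Y - X)‖ ≤ (C * Real.exp (-c * |X|)) * (C' * Real.exp (-c * |Y - X|)) :=
          mul_le_mul (hT X) (hE _) (norm_nonneg _) (by positivity)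
      _ = C * C' * Real.exp (-c * |X| + -c * |Y - X|) := by rw [Real.exp_add]; ring
      _ ≤ C * C' * Real.exp (-(c / 2) * |Y| + -(c / 2) * |X|) := by
          refine mul_le_mul_of_nonneg_left (Real.exp_le_exp.2 ?_) (by positivity)
          have h1 : |Y| ≤ |X| + |Y - X| := by
            simpa using abs_add_le X (Y - X)
          nlinarith [abs_nonneg (Y - X)]
      _ = _ := by rw [Real.exp_add]; ring
  refine (norm_integral_le_of_norm_le ((exp_neg_abs_integrable (half_pos hc)).const_mul _)
    (Filter.Eventually.of_forall hb)).trans_eq ?_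
  rw [integral_const_mul]
  ring

end Smoothing

/-! ### Equidistributed class counts and their twists -/

section AbstractDirichlet

open MeasureTheory Module

open ArithmeticFunction Filter Topology

variable {Γ : Type*} [AddCommGroup Γ] [Fintype Γ]

/-- The counting data of a family of ideal classes: `A c n` counts the ideals of norm `n` in the
class `c`, and `L c` is the von Mangoldt function restricted to prime powers in the class `c`.
The field `count` says that every class has the same smoothed density `κ`, with an error term
that decays, and `q` is a number all of whose
positive powers carry a mass of `L 0` bounded away from `0`. -/
structure ClassCount (A L : Γ → ArithmeticFunction ℝ) (g : ℝ → ℝ) (R κ C δ : ℝ) (q : ℕ) :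
    Prop where
  weight : IsWeight g R
  A_nonneg : ∀ c n, 0 ≤ A c n
  L_nonneg : ∀ c n, 0 ≤ L c n
  A_zero_one : A 0 1 = 1
  A_one : ∀ c, c ≠ 0 → A c 1 = 0
  log_eq : ∀ c n, A c n * Real.log n = ∑ c', (L c' * A (c - c')) n
  summable : ∀ c, ∀ s : ℝ, 1 < s → Summable fun n : ℕ => A c n / (n : ℝ) ^ s
  κ_pos : 0 < κ
  count : ∀ c X, -R ≤ X →
    |∑' n, A c n * g (Real.log n - X) - κ * Real.exp X| ≤ C * Real.exp (-X)
  two_le : 2 ≤ q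
  δ_pos : 0 < δ
  δ_le : ∀ i : ℕ, 1 ≤ i → δ ≤ L 0 (q ^ i)

/-- The twist `∑ χ(c) a_c` of a family of arithmetic functions by a character. The group of classes
and its character group are written additively, so `χ = 0` is the trivial character. -/
noncomputable def twist (a : Γ → ArithmeticFunction ℝ) (χ : AddChar Γ ℂ) : ArithmeticFunction ℂ :=
  ⟨fun n => ∑ c, χ c * (a c n : ℂ), by simp⟩

lemma twist_apply (a : Γ → ArithmeticFunction ℝ) (χ : AddChar Γ ℂ) (n : ℕ) :
    twist a χ n = ∑ c, χ c * (a c n : ℂ) := rfl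

lemma twist_inv (a : Γ → ArithmeticFunction ℝ) (χ : AddChar Γ ℂ) (n : ℕ) :
    twist a χ⁻¹ n = starRingEnd ℂ (twist a χ n) := by
  simp only [twist_apply, map_sum, map_mul, Complex.conj_ofReal, AddChar.inv_apply,
    AddChar.map_neg_eq_conj]

variable {A L : Γ → ArithmeticFunction ℝ} {g : ℝ → ℝ} {R κ C δ : ℝ} {q : ℕ}

namespace ClassCount

lemma twist_log (h : ClassCount A L g R κ C δ q) (χ : AddChar Γ ℂ) (n : ℕ) :
    twist A χ n * (Real.log n : ℂ) = (twist L χ * twist A χ) n := by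
  have h1 : ∀ c, (A c n : ℂ) * (Real.log n : ℂ) =
      ∑ c', ∑ x ∈ n.divisorsAntidiagonal, (L c' x.1 : ℂ) * (A (c - c') x.2 : ℂ) := by
    intro c
    have := h.log_eq c n
    simp only [mul_apply] at this
    exact_mod_cast this
  rw [twist_apply, Finset.sum_mul]
  simp only [mul_assoc, h1]
  simp only [mul_apply, twist_apply, Finset.mul_sum, Finset.sum_mul]
  -- substitute `c = c' + c''`
  calc ∑ c, ∑ c', ∑ x ∈ n.divisorsAntidiagonal, χ c * ((L c' x.1 : ℂ) * (A (c - c') x.2 : ℂ))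
      = ∑ c', ∑ c, ∑ x ∈ n.divisorsAntidiagonal,
          χ c * ((L c' x.1 : ℂ) * (A (c - c') x.2 : ℂ)) := Finset.sum_comm
    _ = ∑ c', ∑ c, ∑ x ∈ n.divisorsAntidiagonal,
          χ c' * (L c' x.1 : ℂ) * (χ c * (A c x.2 : ℂ)) := by
        refine Finset.sum_congr rfl fun c' _ => ?_
        rw [← Equiv.sum_comp (Equiv.addRight c')]
        refine Finset.sum_congr rfl fun c _ => Finset.sum_congr rfl fun x _ => ?_
        simp only [Equiv.coe_addRight, add_sub_cancel_right, AddChar.map_add_eq_mul]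
        ring
    _ = _ := by
        rw [Finset.sum_comm, Finset.sum_comm (s := n.divisorsAntidiagonal)]
        refine Finset.sum_congr rfl fun c' _ => ?_
        rw [Finset.sum_comm]

lemma twist_one (h : ClassCount A L g R κ C δ q) (χ : AddChar Γ ℂ) : twist A χ 1 = 1 := by
  classical
  rw [twist_apply, Finset.sum_eq_single 0]
  · simp [h.A_zero_one]
  · intro c _ hc; simp [h.A_one c hc]
  · simp

lemma L_one (h : ClassCount A L g R κ C δ q) (c : Γ) : L c 1 = 0 := by
  classical
  have h1 := h.log_eq c 1
  rw [Finset.sum_eq_single c] at h1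
  · simpa [h.A_zero_one] using h1.symm
  · intro c' _ hc
    simp [h.A_one (c - c') (sub_ne_zero.2 hc.symm)]
  · simp

lemma smoothSum_twist (h : ClassCount A L g R κ C δ q) (χ : AddChar Γ ℂ) (X : ℝ) :
    smoothSum (twist A χ) g X =
      ∑ c, χ c * ((∑' n, A c n * g (Real.log n - X) : ℝ) : ℂ) := by
  obtain ⟨N, hN⟩ := exists_nat_ge (Real.exp (X + R))
  rw [smoothSum_eq_sum _ h.weight hN]
  have h1 : ∀ c, ∑' n, A c n * g (Real.log n - X) =
      ∑ n ∈ Finset.range (N + 1), A c n * g (Real.log n - X) := by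
    intro c
    refine tsum_eq_sum fun n hn => ?_
    rw [Finset.mem_range, not_lt] at hn
    rw [h.weight.eq_zero_of_lt hN (by omega), mul_zero]
  simp only [h1, twist_apply, Finset.sum_mul]
  rw [Finset.sum_comm]
  refine Finset.sum_congr rfl fun c _ => ?_
  push_cast
  rw [Finset.mul_sum]
  refine Finset.sum_congr rfl fun n _ => by ring

lemma exp_neg_le {R X : ℝ} (hX : -R ≤ X) (hR : 0 ≤ R) :
    Real.exp (-X) ≤ Real.exp (2 * R) * Real.exp (-|X|) := by
  rw [← Real.exp_add, Real.exp_le_exp]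
  rcases abs_cases X with ⟨h, _⟩ | ⟨h, _⟩ <;> rw [h] <;> linarith

lemma C_nonneg (h : ClassCount A L g R κ C δ q) : 0 ≤ C := by
  have := (abs_nonneg _).trans (h.count 0 0 (by simpa using h.weight.R_nonneg))
  simpa using this

/-- For a nontrivial character the main terms cancel. -/
lemma smoothSum_twist_le (h : ClassCount A L g R κ C δ q) {χ : AddChar Γ ℂ} (hχ : χ ≠ 0) (X : ℝ) :
    ‖smoothSum (twist A χ) g X‖ ≤
      Fintype.card Γ * C * Real.exp (2 * R) * Real.exp (-1 * |X|) := by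
  have hC := h.C_nonneg
  rcases lt_or_ge X (-R) with hX | hX
  · rw [smoothSum_eq_zero _ h.weight hX, norm_zero]; positivity
  · have h1 : smoothSum (twist A χ) g X =
        ∑ c, χ c * ((∑' n, A c n * g (Real.log n - X) - κ * Real.exp X : ℝ) : ℂ) := by
      rw [h.smoothSum_twist]
      simp only [Complex.ofReal_sub, mul_sub, Finset.sum_sub_distrib, ← Finset.sum_mul]
      rw [AddChar.sum_eq_zero_iff_ne_zero.2 hχ]
      simp
    rw [h1]
    refine (norm_sum_le _ _).trans ?_
    have h2 : ∀ c ∈ Finset.univ, ‖χ c * ((∑' n, A c n * g (Real.log n - X) - κ * Real.exp X : ℝ) : ℂ)‖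
        ≤ C * (Real.exp (2 * R) * Real.exp (-1 * |X|)) := by
      intro c _
      rw [norm_mul, AddChar.norm_apply, one_mul, Complex.norm_real, Real.norm_eq_abs]
      refine (h.count c X hX).trans (mul_le_mul_of_nonneg_left ?_ hC)
      simpa using exp_neg_le hX h.weight.R_nonneg
    refine (Finset.sum_le_sum h2).trans_eq ?_
    rw [Finset.sum_const, nsmul_eq_mul, Finset.card_univ]
    ring

/-- For the trivial character only the main term `|Γ| κ exp X` survives. -/
lemma smoothSum_trivial_le (h : ClassCount A L g R κ C δ q) :
    ∃ C', ∀ X, ‖smoothSum (twist A 0) g X - (Fintype.card Γ * κ * Real.exp X : ℝ)‖ ≤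
      C' * Real.exp (-1 * |X|) := by
  have hC := h.C_nonneg
  have hκ := h.κ_pos
  refine ⟨Fintype.card Γ * C * Real.exp (2 * R) + Fintype.card Γ * κ, fun X => ?_⟩
  rw [add_mul]
  rcases lt_or_ge X (-R) with hX | hX
  · rw [smoothSum_eq_zero _ h.weight hX, zero_sub, norm_neg, Complex.norm_real, Real.norm_eq_abs,
      abs_of_nonneg (by positivity), abs_of_neg (hX.trans_le (neg_nonpos.2 h.weight.R_nonneg))]
    have : (0 : ℝ) ≤ Fintype.card Γ * C * Real.exp (2 * R) * Real.exp (-1 * -X) := by positivity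
    simpa using this
  · have h1 : smoothSum (twist A 0) g X - (Fintype.card Γ * κ * Real.exp X : ℝ) =
        ∑ c, ((∑' n, A c n * g (Real.log n - X) - κ * Real.exp X : ℝ) : ℂ) := by
      rw [h.smoothSum_twist]
      simp [Complex.ofReal_sub, Finset.sum_sub_distrib, mul_assoc]
    rw [h1]
    have h2 : ∀ c ∈ Finset.univ, ‖((∑' n, A c n * g (Real.log n - X) - κ * Real.exp X : ℝ) : ℂ)‖
        ≤ C * (Real.exp (2 * R) * Real.exp (-1 * |X|)) := by
      intro c _
      rw [Complex.norm_real, Real.norm_eq_abs]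
      refine (h.count c X hX).trans (mul_le_mul_of_nonneg_left ?_ hC)
      simpa using exp_neg_le hX h.weight.R_nonneg
    refine ((norm_sum_le _ _).trans (Finset.sum_le_sum h2)).trans ?_
    rw [Finset.sum_const, nsmul_eq_mul, Finset.card_univ]
    have : 0 ≤ Fintype.card Γ * κ * Real.exp (-1 * |X|) := by positivity
    linarith

end ClassCount

end AbstractDirichlet

/-! ### Nonvanishing at `1` -/

section Nonvanishing

open MeasureTheory Module

open ArithmeticFunction Filter Topology

variable {Γ : Type*} [AddCommGroup Γ] [Fintype Γ]
variable {A L : Γ → ArithmeticFunction ℝ} {g : ℝ → ℝ} {R κ C δ : ℝ} {q : ℕ}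

/-- Multiplication by `log` is a derivation, so logarithmic derivatives add up in products. -/
lemma mul_log_of_mul_log {a b p r : ArithmeticFunction ℂ}
    (ha : ∀ n, a n * (Real.log n : ℂ) = (p * a) n) (hb : ∀ n, b n * (Real.log n : ℂ) = (r * b) n)
    (n : ℕ) : (a * b) n * (Real.log n : ℂ) = ((p + r) * (a * b)) n := by
  have h1 : (p + r) * (a * b) = (p * a) * b + a * (r * b) := by ring
  rw [h1, ArithmeticFunction.add_apply, mul_apply, mul_apply, mul_apply, ← Finset.sum_add_distrib, Finset.sum_mul]
  refine Finset.sum_congr rfl fun x hx => ?_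
  rw [← ha, ← hb]
  obtain ⟨hx1, hx2⟩ := Nat.mem_divisorsAntidiagonal.1 hx
  have h1 : (x.1 : ℝ) ≠ 0 := by
    intro h; apply hx2; rw [← hx1, Nat.cast_eq_zero.1 h, zero_mul]
  have h2 : (x.2 : ℝ) ≠ 0 := by
    intro h; apply hx2; rw [← hx1, Nat.cast_eq_zero.1 h, mul_zero]
  rw [← hx1, Nat.cast_mul, Real.log_mul h1 h2]
  push_cast
  ring

open ComplexOrder in
/-- A function whose logarithmic derivative has nonnegative coefficients is nonnegative. -/
lemma nonneg_of_mul_log {f P : ArithmeticFunction ℂ}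
    (hf : ∀ n, f n * (Real.log n : ℂ) = (P * f) n) (hP : ∀ n, 0 ≤ P n) (hP1 : P 1 = 0)
    (hf1 : f 1 = 1) : (∀ n, 0 ≤ f n) ∧ ∀ n, P n ≤ f n * (Real.log n : ℂ) := by
  have hnonneg : ∀ n, 0 ≤ f n := by
    intro n
    induction n using Nat.strong_induction_on with
    | _ n ih =>
      rcases Nat.lt_or_ge n 2 with hn | hn
      · interval_cases n
        · simp
        · simp [hf1]
      · have hlog : 0 < Real.log n := Real.log_pos (by exact_mod_cast hn)
        have h1 : 0 ≤ f n * (Real.log n : ℂ) := by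
          rw [hf, mul_apply]
          refine Finset.sum_nonneg fun x hx => ?_
          obtain ⟨hx1, hx2⟩ := Nat.mem_divisorsAntidiagonal.1 hx
          rcases eq_or_ne x.1 1 with hx3 | hx3
          · rw [hx3, hP1, zero_mul]
          · refine mul_nonneg (hP _) (ih _ ?_)
            have h0 : x.1 ≠ 0 := by
              intro h; apply hx2; rw [← hx1, h, zero_mul]
            have h0' : x.2 ≠ 0 := by
              intro h; apply hx2; rw [← hx1, h, mul_zero]
            rw [← hx1]
            nlinarith [Nat.pos_of_ne_zero h0', (by omega : 2 ≤ x.1)]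
        have h2 : f n = f n * (Real.log n : ℂ) * ((Real.log n)⁻¹ : ℝ) := by
          push_cast
          rw [mul_assoc, mul_inv_cancel₀ (by exact_mod_cast hlog.ne'), mul_one]
        rw [h2]
        exact mul_nonneg h1 (Complex.zero_le_real.2 (inv_nonneg.2 hlog.le))
  refine ⟨hnonneg, fun n => ?_⟩
  rcases eq_or_ne n 0 with rfl | hn
  · simp
  rw [hf, mul_apply]
  have h1 : P n * f 1 ≤ ∑ x ∈ n.divisorsAntidiagonal, P x.1 * f x.2 :=
    Finset.single_le_sum (f := fun x : ℕ × ℕ => P x.1 * f x.2)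
      (fun x _ => mul_nonneg (hP x.1) (hnonneg x.2))
      (show (n, 1) ∈ n.divisorsAntidiagonal from
        Nat.mem_divisorsAntidiagonal.2 ⟨mul_one n, hn⟩)
  rwa [hf1, mul_one] at h1

namespace ClassCount

lemma integrable_smoothSum_mul_exp (h : ClassCount A L g R κ C δ q) {χ : AddChar Γ ℂ} (hχ : χ ≠ 0) :
    Integrable fun X : ℝ => smoothSum (twist A χ) g X * (Real.exp (-X) : ℂ) := by
  refine Integrable.mono' ((exp_neg_abs_integrable one_pos).const_mul
    (Fintype.card Γ * C * Real.exp (2 * R) * Real.exp R)) ?_ (Eventually.of_forall fun X => ?_)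
  · have := continuous_smoothSum (twist A χ) h.weight
    exact Continuous.aestronglyMeasurable (by fun_prop)
  · have hC := h.C_nonneg
    rcases lt_or_ge X (-R) with hX | hX
    · rw [smoothSum_eq_zero _ h.weight hX, zero_mul, norm_zero]; positivity
    · rw [norm_mul, Complex.norm_real, Real.norm_eq_abs, Real.abs_exp]
      refine (mul_le_mul (h.smoothSum_twist_le hχ X) (Real.exp_le_exp.2 (neg_le.1 hX))
        (by positivity) (by positivity)).trans_eq ?_
      ring

/-- If the Mellin transform vanished at `1`, the smoothed sums of `A_χ * A_1` would decay; here
`A_1` is the twist by the trivial character. -/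
lemma smoothSum_mul_decay (h : ClassCount A L g R κ C δ q) {χ : AddChar Γ ℂ} (hχ : χ ≠ 0)
    (h0 : ∫ X : ℝ, smoothSum (twist A χ) g X * (Real.exp (-X) : ℂ) = 0) :
    ∃ D : ℝ, ∀ Y, ‖smoothSum (twist A χ * twist A 0) (weightConv g g) Y‖ ≤
      D * Real.exp (-(1 / 2) * |Y|) := by
  obtain ⟨C', hC'⟩ := h.smoothSum_trivial_le
  set E : ℝ → ℂ := fun X => smoothSum (twist A 0) g X - (Fintype.card Γ * κ * Real.exp X : ℝ)
  obtain ⟨D, hD⟩ := norm_integral_conv_le one_pos (h.smoothSum_twist_le hχ) hC'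
  refine ⟨D, fun Y => ?_⟩
  convert hD Y using 2
  rw [← integral_smoothSum_mul _ _ h.weight h.weight]
  have hinteg := (h.integrable_smoothSum_mul_exp hχ).mul_const
    ((Fintype.card Γ * κ * Real.exp Y : ℝ) : ℂ)
  have h1 : ∫ X, smoothSum (twist A χ) g X * (Real.exp (-X) : ℂ) *
      ((Fintype.card Γ * κ * Real.exp Y : ℝ) : ℂ) = 0 := by
    rw [integral_mul_const, h0, zero_mul]
  have hT := continuous_smoothSum (twist A χ) h.weight
  have h2 : ∀ X, smoothSum (twist A χ) g X * smoothSum (twist A 0) g (Y - X) =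
      smoothSum (twist A χ) g X * E (Y - X) + smoothSum (twist A χ) g X * (Real.exp (-X) : ℂ) *
      ((Fintype.card Γ * κ * Real.exp Y : ℝ) : ℂ) := by
    intro X
    simp only [E, sub_eq_add_neg Y X, Real.exp_add]
    push_cast
    ring
  simp_rw [h2]
  rw [integral_add ?_ hinteg, h1, add_zero]
  have hS := continuous_smoothSum (twist A 0) h.weight
  refine Integrable.mono' ((exp_neg_abs_integrable one_pos).const_mul
    (Fintype.card Γ * C * Real.exp (2 * R) * C')) ?_ (Eventually.of_forall fun X => ?_)
  · exact Continuous.aestronglyMeasurable (by fun_prop)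
  · rw [norm_mul]
    have hC := h.C_nonneg
    have hC'0 : 0 ≤ C' := by simpa using (norm_nonneg _).trans (hC' 0)
    have h3 : ‖E (Y - X)‖ ≤ C' := (hC' _).trans
      (mul_le_of_le_one_right hC'0 (Real.exp_le_one_iff.2 (by simp)))
    refine (mul_le_mul (h.smoothSum_twist_le hχ X) h3 (norm_nonneg _) (by positivity)).trans_eq ?_
    ring

open ComplexOrder in
/-- The function `n ↦ (A_χ * A_1 * A_{χ⁻¹} * A_1)(n)` is nonnegative because its logarithmic
derivative has the nonnegative coefficients `(2 + 2 Re χ(c)) Λ_c(n)`. -/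
lemma nonneg_of_square (h : ClassCount A L g R κ C δ q) (χ : AddChar Γ ℂ) :
    (∀ n, 0 ≤ ((twist A χ * twist A 0) * (twist A χ⁻¹ * twist A 0)) n) ∧
    ∀ i : ℕ, 1 ≤ i → ((4 * δ : ℝ) : ℂ) ≤
      ((twist A χ * twist A 0) * (twist A χ⁻¹ * twist A 0)) (q ^ i) * (Real.log (q ^ i : ℕ) : ℂ) := by
  have hf := mul_log_of_mul_log
    (mul_log_of_mul_log (h.twist_log χ) (h.twist_log 0))
    (mul_log_of_mul_log (h.twist_log χ⁻¹) (h.twist_log 0))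
  have hP' : ∀ n, ((twist L χ + twist L 0) + (twist L χ⁻¹ + twist L 0)) n =
      ((∑ c, (2 + 2 * (χ c).re) * L c n : ℝ) : ℂ) := by
    intro n
    simp only [ArithmeticFunction.add_apply, twist_apply, ← Finset.sum_add_distrib]
    push_cast
    refine Finset.sum_congr rfl fun c _ => ?_
    have : (χ c).re = (χ c + χ⁻¹ c) / 2 := by
      rw [AddChar.inv_apply, AddChar.map_neg_eq_conj]
      exact Complex.re_eq_add_conj _
    rw [this, Pi.one_apply]
    ring
  have hre : ∀ c, 0 ≤ 2 + 2 * (χ c).re := by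
    intro c
    have h1 := Complex.abs_re_le_norm (χ c)
    rw [AddChar.norm_apply] at h1
    linarith [(abs_le.1 h1).1]
  have hf1 : ((twist A χ * twist A 0) * (twist A χ⁻¹ * twist A 0)) 1 = 1 := by
    simp [h.twist_one]
  obtain ⟨h1, h2⟩ := nonneg_of_mul_log hf (fun n => by
    rw [hP']
    exact Complex.zero_le_real.2 (Finset.sum_nonneg fun c _ => mul_nonneg (hre c) (h.L_nonneg c n)))
    (by rw [hP']; simp [h.L_one]) hf1
  refine ⟨h1, fun i hi => le_trans ?_ (h2 _)⟩
  rw [hP']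
  refine Complex.real_le_real.2 ?_
  refine le_trans ?_ (Finset.single_le_sum (f := fun c => (2 + 2 * (χ c).re) * L c (q ^ i))
    (fun c _ => mul_nonneg (hre c) (h.L_nonneg c _)) (Finset.mem_univ 0))
  simp only [AddChar.map_zero_eq_one, Complex.one_re]
  linarith [h.δ_le i hi]

/-- The value of the Mellin transform of a nontrivial twist at `1`, a positive multiple of
`L(1, χ)`, is nonzero. -/
theorem mellin_ne_zero (h : ClassCount A L g R κ C δ q) {χ : AddChar Γ ℂ} (hχ : χ ≠ 0) :
    ∫ X : ℝ, smoothSum (twist A χ) g X * (Real.exp (-X) : ℂ) ≠ 0 := by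
  intro h0
  obtain ⟨D₁, hD₁⟩ := h.smoothSum_mul_decay hχ h0
  have hconj : ∀ n, (twist A χ⁻¹ * twist A 0) n = starRingEnd ℂ ((twist A χ * twist A 0) n) := by
    intro n
    simp only [mul_apply, map_sum, map_mul, twist_inv]
    refine Finset.sum_congr rfl fun x _ => ?_
    rw [← twist_inv A 0, show (0 : AddChar Γ ℂ)⁻¹ = 0 from inv_one]
  have hD₂ : ∀ Y, ‖smoothSum (twist A χ⁻¹ * twist A 0) (weightConv g g) Y‖ ≤
      D₁ * Real.exp (-(1 / 2) * |Y|) := by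
    intro Y
    rw [smoothSum_conj _ _ hconj, RCLike.norm_conj]
    exact hD₁ Y
  obtain ⟨D, hD⟩ := norm_integral_conv_le (half_pos one_pos) hD₁ hD₂
  set f := (twist A χ * twist A 0) * (twist A χ⁻¹ * twist A 0)
  have hw := (h.weight.conv h.weight).conv (h.weight.conv h.weight)
  set G := weightConv (weightConv g g) (weightConv g g)
  simp_rw [integral_smoothSum_mul _ _ (h.weight.conv h.weight) (h.weight.conv h.weight)] at hD
  obtain ⟨hf0, hf1⟩ := h.nonneg_of_square χ
  have hlogq : 0 < Real.log q := Real.log_pos (by exact_mod_cast h.two_le)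
  have key : ∀ i : ℕ, 1 ≤ i →
      4 * δ * G 0 ≤ D * ((i * Real.log q) * Real.exp (-(1 / 4) * (i * Real.log q))) := by
    intro i hi
    have hlog : Real.log ((q ^ i : ℕ) : ℝ) = i * Real.log q := by
      push_cast; rw [Real.log_pow]
    have hpos : 0 < i * Real.log q := mul_pos (by exact_mod_cast hi) hlogq
    have h1 := hD (i * Real.log q)
    obtain ⟨N, hN⟩ := exists_nat_ge
      (max (Real.exp (i * Real.log q + (R + R + (R + R)))) ((q ^ i : ℕ) : ℝ))
    rw [smoothSum_eq_sum _ hw (le_of_max_le_left hN)] at h1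
    have h2 := (Complex.re_le_norm _).trans h1
    rw [Complex.re_sum] at h2
    have h3 : (f (q ^ i)).re * G 0 ≤ ∑ n ∈ Finset.range (N + 1),
        (f n * (G (Real.log n - i * Real.log q) : ℂ)).re := by
      have := Finset.single_le_sum (s := Finset.range (N + 1))
        (f := fun n : ℕ => (f n * (G (Real.log n - i * Real.log q) : ℂ)).re)
        (fun n _ => by
          rw [Complex.re_mul_ofReal]
          exact mul_nonneg (Complex.nonneg_iff.1 (hf0 n)).1 (hw.nonneg _))
        (Finset.mem_range.2 (Nat.lt_succ_of_le (Nat.cast_le.1 (le_of_max_le_right hN))))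
      refine le_trans (le_of_eq ?_) this
      rw [hlog, sub_self, Complex.re_mul_ofReal]
    have h4 := (Complex.le_def.1 (hf1 i hi)).1
    rw [Complex.re_mul_ofReal, hlog, Complex.ofReal_re] at h4
    have h5 := h3.trans h2
    rw [abs_of_pos hpos] at h5
    have h6 : (1 / 2 / 2 : ℝ) = 1 / 4 := by norm_num
    rw [h6] at h5
    calc 4 * δ * G 0 ≤ (f (q ^ i)).re * (i * Real.log q) * G 0 :=
          mul_le_mul_of_nonneg_right h4 hw.pos.le
      _ = (i * Real.log q) * ((f (q ^ i)).re * G 0) := by ring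
      _ ≤ (i * Real.log q) * (D * Real.exp (-(1 / 4) * (i * Real.log q))) :=
          mul_le_mul_of_nonneg_left h5 hpos.le
      _ = _ := by ring
  have hlim : Tendsto (fun i : ℕ => D * ((i * Real.log q) *
      Real.exp (-(1 / 4) * (i * Real.log q)))) atTop (𝓝 (D * (4 * 0))) := by
    refine Tendsto.const_mul _ ?_
    have h1 : Tendsto (fun i : ℕ => (1 / 4 : ℝ) * (i * Real.log q)) atTop atTop :=
      (tendsto_natCast_atTop_atTop.atTop_mul_const hlogq).const_mul_atTop (by norm_num)
    have h2 := ((Real.tendsto_pow_mul_exp_neg_atTop_nhds_zero 1).comp h1).const_mul 4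
    refine h2.congr fun i => ?_
    simp only [Function.comp, pow_one, neg_mul]
    ring
  have := ge_of_tendsto hlim (eventually_atTop.2 ⟨1, key⟩)
  have h7 := mul_pos (mul_pos (by norm_num : (0 : ℝ) < 4) h.δ_pos) hw.pos
  linarith

end ClassCount

end Nonvanishing

/-! ### Mellin transforms and Dirichlet series -/

section LSeriesPart

open MeasureTheory Module

open ArithmeticFunction Filter Topology

variable {Γ : Type*} [AddCommGroup Γ] [Fintype Γ]
variable {A L : Γ → ArithmeticFunction ℝ} {g : ℝ → ℝ} {R κ C δ : ℝ} {q : ℕ}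

/-- The termwise Mellin transform of a smoothed sum. -/
lemma hasSum_mellin_term (a : ArithmeticFunction ℂ) {ψ : ℝ → ℝ} (hψ : Continuous ψ)
    (hψc : HasCompactSupport ψ) {s : ℝ} (ha : LSeriesSummable (fun n => a n) (s : ℂ)) :
    (∀ n : ℕ, Integrable fun X : ℝ => a n * ((ψ (Real.log n - X) * Real.exp (-s * X) : ℝ) : ℂ)) ∧
    (Summable fun n : ℕ => ∫ X : ℝ,
      ‖a n * ((ψ (Real.log n - X) * Real.exp (-s * X) : ℝ) : ℂ)‖) ∧
    HasSum (fun n : ℕ => ∫ X : ℝ, a n * ((ψ (Real.log n - X) * Real.exp (-s * X) : ℝ) : ℂ))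
      (((∫ u, ψ u * Real.exp (s * u) : ℝ) : ℂ) * LSeries (fun n => a n) s) := by
  have hinteg : ∀ n : ℕ, Integrable fun X : ℝ => ψ (Real.log n - X) * Real.exp (-s * X) := by
    intro n
    refine Continuous.integrable_of_hasCompactSupport (by fun_prop) (HasCompactSupport.mul_right ?_)
    exact hψc.comp_homeomorph (Homeomorph.subLeft (Real.log n))
  have hval : ∀ φ : ℝ → ℝ, ∀ n : ℕ, n ≠ 0 →
      ∫ X : ℝ, φ (Real.log n - X) * Real.exp (-s * X) =
        (∫ u, φ u * Real.exp (s * u)) * ((n : ℝ) ^ s)⁻¹ := by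
    intro φ n hn
    rw [← integral_sub_left_eq_self _ volume (Real.log n), ← integral_mul_const]
    refine integral_congr_ae (Eventually.of_forall fun X => ?_)
    have hn' : (0 : ℝ) < n := by exact_mod_cast Nat.pos_of_ne_zero hn
    simp only [sub_sub_cancel]
    rw [Real.rpow_def_of_pos hn', ← Real.exp_neg, mul_assoc, ← Real.exp_add]
    congr 2; ring
  have hterm : ∀ n : ℕ, LSeries.term (fun n => a n) s n = a n * (((n : ℝ) ^ s)⁻¹ : ℝ) := by
    intro n
    rcases eq_or_ne n 0 with rfl | hn
    · simp
    · rw [LSeries.term_of_ne_zero hn, div_eq_mul_inv, Complex.ofReal_inv,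
        Complex.ofReal_cpow (Nat.cast_nonneg n)]
      simp
  have hF : ∀ n : ℕ, Integrable fun X : ℝ =>
      a n * ((ψ (Real.log n - X) * Real.exp (-s * X) : ℝ) : ℂ) :=
    fun n => (hinteg n).ofReal.const_mul _
  have hsum : Summable fun n : ℕ => ∫ X : ℝ,
      ‖a n * ((ψ (Real.log n - X) * Real.exp (-s * X) : ℝ) : ℂ)‖ := by
    refine (ha.norm.mul_left (∫ u, |ψ u| * Real.exp (s * u))).congr fun n => ?_
    rw [hterm]
    rcases eq_or_ne n 0 with rfl | hn
    · simp
    · simp only [norm_mul, Complex.norm_real, Real.norm_eq_abs, Real.abs_exp]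
      rw [integral_const_mul, hval (fun u => |ψ u|) n hn, abs_of_nonneg (by positivity)]
      ring
  refine ⟨hF, hsum, (ha.LSeriesHasSum.mul_left _).congr_fun fun n => ?_⟩
  rw [hterm]
  rcases eq_or_ne n 0 with rfl | hn
  · simp
  · rw [integral_const_mul, integral_complex_ofReal, hval ψ n hn]
    push_cast; ring

/-- The Mellin transform of a smoothed sum is a multiple of the Dirichlet series. -/
lemma integral_smoothSum_mul_exp (a : ArithmeticFunction ℂ) {ψ : ℝ → ℝ} (hψ : Continuous ψ)
    (hψc : HasCompactSupport ψ) {s : ℝ} (ha : LSeriesSummable (fun n => a n) (s : ℂ)) :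
    ∫ X : ℝ, smoothSum a ψ X * (Real.exp (-s * X) : ℂ) =
      ((∫ u, ψ u * Real.exp (s * u) : ℝ) : ℂ) * LSeries (fun n => a n) s := by
  obtain ⟨hF, hsum, h3⟩ := hasSum_mellin_term a hψ hψc ha
  have h1 := hasSum_integral_of_summable_integral_norm hF hsum
  rw [← h1.unique h3]
  refine integral_congr_ae (Eventually.of_forall fun X => ?_)
  simp only [smoothSum, ← tsum_mul_right]
  refine tsum_congr fun n => ?_
  push_cast; ring

/-- The arithmetic function `n ↦ a(n) log n`. -/
noncomputable def logTwist (a : ArithmeticFunction ℂ) : ArithmeticFunction ℂ :=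
  ⟨fun n => a n * (Real.log n : ℂ), by simp⟩

lemma logTwist_apply (a : ArithmeticFunction ℂ) (n : ℕ) :
    logTwist a n = a n * (Real.log n : ℂ) := rfl

/-- The Mellin transform of `X` times a smoothed sum involves the derivative of the Dirichlet
series. -/
lemma integral_id_mul_smoothSum_mul_exp (a : ArithmeticFunction ℂ) {ψ : ℝ → ℝ} (hψ : Continuous ψ)
    (hψc : HasCompactSupport ψ) {s : ℝ} (ha : LSeriesSummable (fun n => a n) (s : ℂ))
    (ha' : LSeriesSummable (fun n => logTwist a n) (s : ℂ)) :
    ∫ X : ℝ, (X : ℂ) * (smoothSum a ψ X * (Real.exp (-s * X) : ℂ)) =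
      ((∫ u, ψ u * Real.exp (s * u) : ℝ) : ℂ) * LSeries (fun n => logTwist a n) s -
      ((∫ u, u * ψ u * Real.exp (s * u) : ℝ) : ℂ) * LSeries (fun n => a n) s := by
  obtain ⟨hF, hsum, h3⟩ := hasSum_mellin_term (logTwist a) hψ hψc ha'
  obtain ⟨hF', hsum', h3'⟩ := hasSum_mellin_term a (ψ := fun u => u * ψ u) (by fun_prop)
    (hψc.mul_left) ha
  have h1 := hasSum_integral_of_summable_integral_norm (fun n => (hF n).sub (hF' n))
    (Summable.of_nonneg_of_le (fun n => integral_nonneg fun X => norm_nonneg _) (fun n => by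
      rw [← integral_add (hF n).norm (hF' n).norm]
      exact integral_mono ((hF n).sub (hF' n)).norm ((hF n).norm.add (hF' n).norm)
        fun X => norm_sub_le _ _) (hsum.add hsum'))
  have h4 := (h3.sub h3').congr_fun fun n => (integral_sub (hF n) (hF' n))
  rw [← h1.unique h4]
  refine integral_congr_ae (Eventually.of_forall fun X => ?_)
  simp only [smoothSum, ← tsum_mul_right, ← tsum_mul_left]
  refine tsum_congr fun n => ?_
  simp only [Pi.sub_apply, logTwist_apply]
  push_cast; ring

namespace ClassCount

lemma LSeriesSummable_A (h : ClassCount A L g R κ C δ q) (c : Γ) {s : ℝ} (hs : 1 < s) :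
    LSeriesSummable (fun n => (A c n : ℂ)) (s : ℂ) := by
  refine (Complex.summable_ofReal.2 (h.summable c s hs)).congr fun n => ?_
  rcases eq_or_ne n 0 with rfl | hn
  · simp
  · rw [LSeries.term_of_ne_zero hn, Complex.ofReal_div, Complex.ofReal_cpow (Nat.cast_nonneg n)]
    simp

lemma LSeriesSummable_log (h : ClassCount A L g R κ C δ q) (c : Γ) {s : ℝ} (hs : 1 < s) :
    LSeriesSummable (fun n => (A c n : ℂ) * (Real.log n : ℂ)) (s : ℂ) := by
  have h1 := LSeries.abscissaOfAbsConv_le_of_forall_lt_LSeriesSummable (x := 1)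
    fun y hy => h.LSeriesSummable_A c hy
  have h2 : LSeriesSummable (LSeries.logMul fun n => (A c n : ℂ)) (s : ℂ) :=
    LSeriesSummable_logMul_of_lt_re (h1.trans_lt (by exact_mod_cast hs))
  refine h2.congr fun n => ?_
  rw [LSeries.term_def, LSeries.term_def]
  split_ifs with hn
  · rfl
  · rw [LSeries.logMul, Complex.natCast_log, mul_comm]

lemma L_le (h : ClassCount A L g R κ C δ q) (c : Γ) (n : ℕ) : L c n ≤ A c n * Real.log n := by
  rcases eq_or_ne n 0 with rfl | hn
  · simp
  rw [h.log_eq]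
  have h0 : ∀ c', 0 ≤ (L c' * A (c - c')) n := fun c' => by
    rw [mul_apply]
    exact Finset.sum_nonneg fun x _ => mul_nonneg (h.L_nonneg _ _) (h.A_nonneg _ _)
  refine le_trans ?_ (Finset.single_le_sum (f := fun c' => (L c' * A (c - c')) n)
    (fun c' _ => h0 c') (Finset.mem_univ c))
  simp only [sub_self, mul_apply]
  have := Finset.single_le_sum (f := fun x : ℕ × ℕ => L c x.1 * A 0 x.2)
      (fun x _ => mul_nonneg (h.L_nonneg c x.1) (h.A_nonneg 0 x.2))
      (show (n, 1) ∈ n.divisorsAntidiagonal from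
        Nat.mem_divisorsAntidiagonal.2 ⟨mul_one n, hn⟩)
  simpa [h.A_zero_one] using this

lemma LSeriesSummable_L (h : ClassCount A L g R κ C δ q) (c : Γ) {s : ℝ} (hs : 1 < s) :
    LSeriesSummable (fun n => (L c n : ℂ)) (s : ℂ) := by
  refine Summable.of_norm_bounded (h.LSeriesSummable_log c hs).norm fun n => ?_
  refine LSeries.norm_term_le _ ?_
  rw [← Complex.ofReal_mul, Complex.norm_real, Complex.norm_real, Real.norm_eq_abs,
    Real.norm_eq_abs, abs_of_nonneg (h.L_nonneg c n)]
  exact (h.L_le c n).trans (le_abs_self _)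

lemma LSeriesHasSum_twist {a : Γ → ArithmeticFunction ℝ} {s : ℂ}
    (ha : ∀ c, LSeriesSummable (fun n => (a c n : ℂ)) s) (χ : AddChar Γ ℂ) :
    LSeriesHasSum (fun n => twist a χ n) s (∑ c, χ c * LSeries (fun n => (a c n : ℂ)) s) := by
  have := hasSum_sum (s := Finset.univ)
    fun (c : Γ) _ => (ha c).LSeriesHasSum.mul_left (χ c)
  refine this.congr_fun fun n => ?_
  simp only [LSeries.term_def, twist_apply]
  split_ifs with hn
  · simp
  · rw [Finset.sum_div]
    exact Finset.sum_congr rfl fun c _ => by ring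

lemma LSeriesSummable_twist_A (h : ClassCount A L g R κ C δ q) (χ : AddChar Γ ℂ) {s : ℝ}
    (hs : 1 < s) : LSeriesSummable (fun n => twist A χ n) (s : ℂ) :=
  (LSeriesHasSum_twist (fun c => h.LSeriesSummable_A c hs) χ).LSeriesSummable

lemma LSeriesSummable_twist_L (h : ClassCount A L g R κ C δ q) (χ : AddChar Γ ℂ) {s : ℝ}
    (hs : 1 < s) : LSeriesSummable (fun n => twist L χ n) (s : ℂ) :=
  (LSeriesHasSum_twist (fun c => h.LSeriesSummable_L c hs) χ).LSeriesSummable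

lemma logTwist_twist (h : ClassCount A L g R κ C δ q) (χ : AddChar Γ ℂ) :
    logTwist (twist A χ) = twist L χ * twist A χ := by
  ext n
  rw [logTwist_apply, h.twist_log]

lemma LSeriesSummable_logTwist (h : ClassCount A L g R κ C δ q) (χ : AddChar Γ ℂ) {s : ℝ}
    (hs : 1 < s) : LSeriesSummable (fun n => logTwist (twist A χ) n) (s : ℂ) := by
  rw [h.logTwist_twist]
  exact LSeriesSummable_mul (h.LSeriesSummable_twist_L χ hs) (h.LSeriesSummable_twist_A χ hs)

lemma LSeries_logTwist (h : ClassCount A L g R κ C δ q) (χ : AddChar Γ ℂ) {s : ℝ}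
    (hs : 1 < s) : LSeries (fun n => logTwist (twist A χ) n) (s : ℂ) =
      LSeries (fun n => twist L χ n) s * LSeries (fun n => twist A χ n) s := by
  rw [h.logTwist_twist]
  exact LSeries_mul' (h.LSeriesSummable_twist_L χ hs) (h.LSeriesSummable_twist_A χ hs)

lemma weight_integrable (h : ClassCount A L g R κ C δ q) (s : ℝ) :
    Integrable fun u => g u * Real.exp (s * u) := by
  have := h.weight.cont
  exact Continuous.integrable_of_hasCompactSupport (by fun_prop) h.weight.hasCompactSupport.mul_right

lemma weight_pos (h : ClassCount A L g R κ C δ q) (s : ℝ) :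
    0 < ∫ u, g u * Real.exp (s * u) := by
  have := h.weight.cont
  have hc : Continuous fun u => g u * Real.exp (s * u) := by fun_prop
  refine hc.integral_pos_of_hasCompactSupport_nonneg_nonzero
    h.weight.hasCompactSupport.mul_right
    (fun u => mul_nonneg (h.weight.nonneg u) (Real.exp_pos _).le) (x := 0) ?_
  simpa using h.weight.pos.ne'

lemma weight_moment_le (h : ClassCount A L g R κ C δ q) (s : ℝ) :
    |∫ u, u * g u * Real.exp (s * u)| ≤ R * ∫ u, g u * Real.exp (s * u) := by
  rw [← Real.norm_eq_abs, ← integral_const_mul]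
  refine norm_integral_le_of_norm_le ((h.weight_integrable s).const_mul R)
    (Eventually.of_forall fun u => ?_)
  rw [Real.norm_eq_abs, abs_mul, abs_mul, Real.abs_exp, abs_of_nonneg (h.weight.nonneg u), mul_assoc]
  rcases lt_or_ge R |u| with hu | hu
  · simp [h.weight.supp u hu]
  · exact mul_le_mul_of_nonneg_right hu (mul_nonneg (h.weight.nonneg u) (Real.exp_pos _).le)

/-- For a nontrivial character the logarithmic derivative stays bounded near `s = 1`. -/
lemma LSeries_bounded (h : ClassCount A L g R κ C δ q) {χ : AddChar Γ ℂ} (hχ : χ ≠ 0) :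
    ∃ K : ℝ, ∀ᶠ s : ℝ in 𝓝[>] 1, ‖LSeries (fun n => twist L χ n) s‖ ≤ K := by
  set T := smoothSum (twist A χ) g with hT
  have hTc : Continuous T := continuous_smoothSum _ h.weight
  have hC := h.C_nonneg
  have hR := h.weight.R_nonneg
  set B := Fintype.card Γ * C * Real.exp (2 * R) * Real.exp (2 * R)
  have hB : 0 ≤ B := by positivity
  -- a bound that is uniform in `s ∈ [0, 2]`
  have hTle : ∀ s ∈ Set.Icc (0 : ℝ) 2, ∀ X, ‖T X * (Real.exp (-s * X) : ℂ)‖ ≤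
      B * Real.exp (-1 * |X|) := by
    intro s hs X
    rcases lt_or_ge X (-R) with hX | hX
    · rw [hT, smoothSum_eq_zero _ h.weight hX, zero_mul, norm_zero]; positivity
    · rw [norm_mul, Complex.norm_real, Real.norm_eq_abs, Real.abs_exp]
      refine (mul_le_mul (h.smoothSum_twist_le hχ X)
        (Real.exp_le_exp.2 (?_ : -s * X ≤ 2 * R)) (by positivity) (by positivity)).trans_eq ?_
      · nlinarith [hs.1, hs.2]
      · simp only [B]; ring
  have hXle : ∀ X : ℝ, |X| * Real.exp (-1 * |X|) ≤ 2 * Real.exp (-(1 / 2) * |X|) := by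
    intro X
    have h1 := Real.add_one_le_exp (1 / 2 * |X|)
    have h2 : Real.exp (-1 * |X|) = Real.exp (-(1 / 2) * |X|) * Real.exp (-(1 / 2) * |X|) := by
      rw [← Real.exp_add]; congr 1; ring
    have h3 : Real.exp (1 / 2 * |X|) * Real.exp (-(1 / 2) * |X|) = 1 := by
      rw [← Real.exp_add]; simp
    rw [h2, ← mul_assoc]
    refine mul_le_mul_of_nonneg_right ?_ (Real.exp_pos _).le
    nlinarith [Real.exp_pos (-(1 / 2) * |X|)]
  set N := B * 2 * ∫ X : ℝ, Real.exp (-(1 / 2) * |X|)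
  have hN : ∀ s ∈ Set.Icc (0 : ℝ) 2,
      ‖∫ X : ℝ, (X : ℂ) * (T X * (Real.exp (-s * X) : ℂ))‖ ≤ N := by
    intro s hs
    simp only [N]
    rw [← integral_const_mul]
    refine norm_integral_le_of_norm_le ((exp_neg_abs_integrable (half_pos one_pos)).const_mul _)
      (Eventually.of_forall fun X => ?_)
    rw [norm_mul, Complex.norm_real, Real.norm_eq_abs]
    calc |X| * ‖T X * (Real.exp (-s * X) : ℂ)‖ ≤ |X| * (B * Real.exp (-1 * |X|)) :=
          mul_le_mul_of_nonneg_left (hTle s hs X) (abs_nonneg _)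
      _ = B * (|X| * Real.exp (-1 * |X|)) := by ring
      _ ≤ B * (2 * Real.exp (-(1 / 2) * |X|)) := mul_le_mul_of_nonneg_left (hXle X) hB
      _ = _ := by ring
  have hM0 := h.mellin_ne_zero hχ
  set M : ℝ → ℂ := fun s => ∫ X : ℝ, T X * (Real.exp (-s * X) : ℂ)
  have hM : Tendsto M (𝓝 1) (𝓝 (M 1)) := by
    refine tendsto_integral_filter_of_dominated_convergence (fun X => B * Real.exp (-1 * |X|))
      (Eventually.of_forall fun s => ?_) ?_ ((exp_neg_abs_integrable one_pos).const_mul _)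
      (Eventually.of_forall fun X => ?_)
    · exact Continuous.aestronglyMeasurable (by fun_prop)
    · filter_upwards [Icc_mem_nhds (zero_lt_one' ℝ) one_lt_two] with s hs
      exact Eventually.of_forall (hTle s hs)
    · exact Continuous.tendsto (f := fun s : ℝ => T X * (Real.exp (-s * X) : ℂ)) (by fun_prop) 1
  have hM1 : 0 < ‖M 1‖ := by
    rw [norm_pos_iff]
    simpa [M] using hM0
  have hev : ∀ᶠ s in 𝓝 (1 : ℝ), ‖M 1‖ / 2 < ‖M s‖ :=
    hM.norm.eventually (lt_mem_nhds (half_lt_self hM1))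
  refine ⟨N / (‖M 1‖ / 2) + R, ?_⟩
  filter_upwards [nhdsWithin_le_nhds hev, self_mem_nhdsWithin,
    nhdsWithin_le_nhds (Icc_mem_nhds (zero_lt_one' ℝ) one_lt_two)] with s hs1 hs2 hs3
  have hs2 : 1 < s := hs2
  have e1 := integral_smoothSum_mul_exp (twist A χ) h.weight.cont h.weight.hasCompactSupport
    (h.LSeriesSummable_twist_A χ hs2)
  have e2 := integral_id_mul_smoothSum_mul_exp (twist A χ) h.weight.cont h.weight.hasCompactSupport
    (h.LSeriesSummable_twist_A χ hs2) (h.LSeriesSummable_logTwist χ hs2)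
  rw [h.LSeries_logTwist χ hs2] at e2
  set Gs := ∫ u, g u * Real.exp (s * u)
  set G1 := ∫ u, u * g u * Real.exp (s * u)
  set l := LSeries (fun n => twist A χ n) s
  set D := LSeries (fun n => twist L χ n) s
  have hG : 0 < Gs := h.weight_pos s
  have hG1 : |G1| ≤ R * Gs := h.weight_moment_le s
  have e1' : M s = Gs * l := e1
  have e3 : D = (∫ X : ℝ, (X : ℂ) * (T X * (Real.exp (-s * X) : ℂ))) / M s + G1 / Gs := by
    have hMs : M s ≠ 0 := norm_pos_iff.1 ((half_pos hM1).trans hs1)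
    have hGc : (Gs : ℂ) ≠ 0 := by exact_mod_cast hG.ne'
    rw [e2]
    have hl : l ≠ 0 := by
      intro h0; rw [e1', h0, mul_zero] at hMs; exact hMs rfl
    rw [e1']
    field_simp
    ring
  rw [e3]
  refine (norm_add_le _ _).trans (add_le_add ?_ ?_)
  · rw [norm_div]
    exact div_le_div₀ ((norm_nonneg _).trans (hN s hs3)) (hN s hs3) (half_pos hM1) hs1.le
  · rw [norm_div, Complex.norm_real, Complex.norm_real, Real.norm_eq_abs, Real.norm_eq_abs,
      abs_of_pos hG, div_le_iff₀ hG]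
    exact hG1

end ClassCount

end LSeriesPart

/-! ### Dirichlet's theorem in abstract form -/

section DirichletConclusion

open MeasureTheory Module

open ArithmeticFunction Filter Topology

variable {Γ : Type*} [AddCommGroup Γ] [Fintype Γ]
variable {A L : Γ → ArithmeticFunction ℝ} {g : ℝ → ℝ} {R κ C δ : ℝ} {q : ℕ}

namespace ClassCount

lemma twist_zero (a : Γ → ArithmeticFunction ℝ) (n : ℕ) :
    twist a 0 n = ((∑ c, a c n : ℝ) : ℂ) := by
  simp [twist_apply]

lemma LSeries_ofReal (a : ℕ → ℝ) (ha : a 0 = 0) (s : ℝ) :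
    LSeries (fun n => (a n : ℂ)) s = ((∑' n : ℕ, a n / (n : ℝ) ^ s : ℝ) : ℂ) := by
  rw [LSeries, Complex.ofReal_tsum]
  refine tsum_congr fun n => ?_
  rcases eq_or_ne n 0 with rfl | hn
  · simp [ha]
  · rw [LSeries.term_of_ne_zero hn, Complex.ofReal_div, Complex.ofReal_cpow (Nat.cast_nonneg n)]
    simp

lemma summable_of_LSeriesSummable (a : ℕ → ℝ) (ha : a 0 = 0) {s : ℝ}
    (h : LSeriesSummable (fun n => (a n : ℂ)) s) : Summable fun n : ℕ => a n / (n : ℝ) ^ s := by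
  refine Complex.summable_ofReal.1 (h.congr fun n => ?_)
  rcases eq_or_ne n 0 with rfl | hn
  · simp [ha]
  · rw [LSeries.term_of_ne_zero hn, Complex.ofReal_div, Complex.ofReal_cpow (Nat.cast_nonneg n)]
    simp

/-- The Dirichlet series counting all ideals is unbounded near its pole. -/
lemma LSeries_trivial_unbounded (h : ClassCount A L g R κ C δ q) :
    ¬ ∃ K : ℝ, ∀ᶠ s : ℝ in 𝓝[>] 1, ‖LSeries (fun n => twist A 0 n) s‖ ≤ K := by
  rintro ⟨K, hK⟩
  obtain ⟨C', hC'⟩ := h.smoothSum_trivial_le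
  have hC'0 : 0 ≤ C' := by simpa using (norm_nonneg _).trans (hC' 0)
  set m : ℝ := Fintype.card Γ * κ
  have hm : 0 < m := mul_pos (by exact_mod_cast Fintype.card_pos) h.κ_pos
  set S : ℝ → ℝ := fun X => ∑ c, ∑' n, A c n * g (Real.log n - X)
  have hS : ∀ X, smoothSum (twist A 0) g X = (S X : ℂ) := by
    intro X
    rw [h.smoothSum_twist]
    simp [S]
  have hS0 : ∀ X, 0 ≤ S X := fun X => Finset.sum_nonneg fun c _ =>
    tsum_nonneg fun n => mul_nonneg (h.A_nonneg c n) (h.weight.nonneg _)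
  have hS1 : ∀ X, m * Real.exp X - C' ≤ S X := by
    intro X
    have h1 := hC' X
    rw [hS, ← Complex.ofReal_sub, Complex.norm_real, Real.norm_eq_abs] at h1
    have h2 : C' * Real.exp (-1 * |X|) ≤ C' :=
      mul_le_of_le_one_right hC'0 (Real.exp_le_one_iff.2 (by simp))
    linarith [(abs_le.1 h1).1]
  set B := ∫ u, g u * Real.exp (2 * R)
  have key : ∀ᶠ s : ℝ in 𝓝[>] 1, m * (s - 1)⁻¹ ≤ B * K + C' := by
    filter_upwards [hK, self_mem_nhdsWithin,
      nhdsWithin_le_nhds (Icc_mem_nhds (zero_lt_one' ℝ) one_lt_two)] with s hs1 hs2 hs3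
    have hs2 : 1 < s := hs2
    have e1 := integral_smoothSum_mul_exp (twist A 0) h.weight.cont h.weight.hasCompactSupport
      (h.LSeriesSummable_twist_A 0 hs2)
    have hz : (∑ c, A c 0 : ℝ) = 0 := by simp
    have hsum := h.LSeriesSummable_twist_A 0 hs2
    simp_rw [twist_zero A] at hs1 e1 hsum
    rw [LSeries_ofReal (fun n => ∑ c, A c n) hz] at hs1 e1
    have hsum := summable_of_LSeriesSummable (fun n => ∑ c, A c n) hz hsum
    set r := ∑' n : ℕ, (∑ c, A c n) / (n : ℝ) ^ s
    have hr1 : 1 ≤ r := by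
      have h1 := hsum.le_tsum 1 fun n _ => div_nonneg
        (Finset.sum_nonneg fun c _ => h.A_nonneg c n) (by positivity)
      refine le_trans ?_ h1
      simp only [Nat.cast_one, Real.one_rpow, div_one]
      rw [← h.A_zero_one]
      exact Finset.single_le_sum (f := fun c => A c 1) (fun c _ => h.A_nonneg c 1)
        (Finset.mem_univ 0)
    have e2 : ∫ X : ℝ, S X * Real.exp (-s * X) = (∫ u, g u * Real.exp (s * u)) * r := by
      have : ∀ X : ℝ, smoothSum (twist A 0) g X * (Real.exp (-s * X) : ℂ) =
          ((S X * Real.exp (-s * X) : ℝ) : ℂ) := fun X => by rw [hS]; push_cast; rfl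
      simp_rw [this] at e1
      rw [integral_complex_ofReal] at e1
      exact_mod_cast e1
    have hinteg : Integrable fun X : ℝ => S X * Real.exp (-s * X) := by
      refine Integrable.of_integral_ne_zero ?_
      rw [e2]
      exact (mul_pos (h.weight_pos s) (by linarith)).ne'
    have i1 : IntegrableOn (fun X : ℝ => m * Real.exp ((1 - s) * X)) (Set.Ioi 0) :=
      (integrableOn_exp_mul_Ioi (by linarith) 0).const_mul m
    have i2 : IntegrableOn (fun X : ℝ => C' * Real.exp (-s * X)) (Set.Ioi 0) :=
      (integrableOn_exp_mul_Ioi (by linarith) 0).const_mul C'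
    have e3 : ∫ X in Set.Ioi (0 : ℝ), (m * Real.exp ((1 - s) * X) - C' * Real.exp (-s * X)) ≤
        ∫ X : ℝ, S X * Real.exp (-s * X) := by
      refine le_trans ?_ (setIntegral_le_integral (s := Set.Ioi (0 : ℝ)) hinteg
        (Eventually.of_forall fun X => mul_nonneg (hS0 X) (Real.exp_pos _).le))
      refine integral_mono (i1.sub i2) hinteg.integrableOn fun X => ?_
      have : m * Real.exp ((1 - s) * X) - C' * Real.exp (-s * X) =
          (m * Real.exp X - C') * Real.exp (-s * X) := by
        have h1 : Real.exp ((1 - s) * X) = Real.exp X * Real.exp (-s * X) := by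
          rw [← Real.exp_add]; congr 1; ring
        rw [h1]; ring
      simp only [this]
      exact mul_le_mul_of_nonneg_right (hS1 X) (Real.exp_pos _).le
    rw [integral_sub i1 i2, integral_const_mul, integral_const_mul,
      integral_exp_mul_Ioi (by linarith), integral_exp_mul_Ioi (by linarith), e2] at e3
    have e4 : ∫ u, g u * Real.exp (s * u) ≤ B := by
      refine integral_mono (h.weight_integrable s) ?_ fun u => ?_
      · exact (h.weight.cont.integrable_of_hasCompactSupport h.weight.hasCompactSupport).mul_const _
      · rcases lt_or_ge R |u| with hu | hu
        · simp [h.weight.supp u hu]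
        · refine mul_le_mul_of_nonneg_left (Real.exp_le_exp.2 ?_) (h.weight.nonneg u)
          have := le_abs_self u
          nlinarith [hs3.2, abs_nonneg u, h.weight.R_nonneg]
    rw [Complex.norm_real, Real.norm_eq_abs, abs_of_nonneg (by linarith)] at hs1
    have e5 : (∫ u, g u * Real.exp (s * u)) * r ≤ B * K :=
      mul_le_mul e4 hs1 (by linarith) ((h.weight_pos s).le.trans e4)
    have e6 : m * (-Real.exp ((1 - s) * 0) / (1 - s)) = m * (s - 1)⁻¹ := by
      rw [mul_zero, Real.exp_zero, ← neg_sub s 1, neg_div_neg_eq, one_div]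
    have e7 : C' * (-Real.exp (-s * 0) / -s) ≤ C' := by
      rw [mul_zero, Real.exp_zero, neg_div_neg_eq, one_div]
      exact mul_le_of_le_one_right hC'0 (inv_le_one_of_one_le₀ hs2.le)
    linarith
  have hlim : Tendsto (fun s : ℝ => m * (s - 1)⁻¹) (𝓝[>] 1) atTop := by
    refine Tendsto.const_mul_atTop hm (tendsto_inv_nhdsGT_zero.comp ?_)
    refine tendsto_nhdsWithin_iff.2 ⟨?_, ?_⟩
    · have : Tendsto (fun s : ℝ => s - 1) (𝓝 1) (𝓝 (1 - 1)) := Continuous.tendsto (by fun_prop) 1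
      rw [sub_self] at this
      exact this.mono_left nhdsWithin_le_nhds
    · filter_upwards [self_mem_nhdsWithin] with s hs
      exact Set.mem_Ioi.2 (sub_pos.2 (Set.mem_Ioi.1 hs))
  obtain ⟨s, hs1, hs2⟩ := (key.and (hlim.eventually_gt_atTop (B * K + C'))).exists
  linarith

/-- If the logarithmic derivative were bounded by `K`, the terms with `log n > K + 1` would be
controlled by the remaining ones, and the Dirichlet series itself would be bounded. -/
lemma LSeries_L_unbounded (h : ClassCount A L g R κ C δ q) :
    ¬ ∃ K : ℝ, ∀ᶠ s : ℝ in 𝓝[>] 1, ‖LSeries (fun n => twist L 0 n) s‖ ≤ K := by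
  rintro ⟨K, hK⟩
  refine h.LSeries_trivial_unbounded ?_
  obtain ⟨s₀, hs₀⟩ := hK.exists
  have hK0 : 0 ≤ K := (norm_nonneg _).trans hs₀
  obtain ⟨N, hN⟩ := exists_nat_ge (Real.exp (K + 1))
  set a : ℕ → ℝ := fun n => ∑ c, A c n
  have ha : ∀ n, 0 ≤ a n := fun n => Finset.sum_nonneg fun c _ => h.A_nonneg c n
  have ha0 : a 0 = 0 := by simp [a]
  refine ⟨(K + 1) * ∑ n ∈ Finset.range N, a n, ?_⟩
  filter_upwards [hK, self_mem_nhdsWithin] with s hs1 hs2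
  have hs2 : 1 < s := hs2
  have e1 := h.LSeries_logTwist 0 hs2
  have hsum := h.LSeriesSummable_twist_A 0 hs2
  have hsum' := h.LSeriesSummable_logTwist 0 hs2
  have hlog : ∀ n, logTwist (twist A 0) n = ((a n * Real.log n : ℝ) : ℂ) := by
    intro n; rw [logTwist_apply, twist_zero, Complex.ofReal_mul]
  simp_rw [hlog] at e1 hsum'
  simp_rw [twist_zero A] at e1 hsum ⊢
  rw [LSeries_ofReal a ha0, LSeries_ofReal (fun n => a n * Real.log n) (by simp [ha0])] at e1
  rw [LSeries_ofReal a ha0]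
  have hsum := summable_of_LSeriesSummable a ha0 hsum
  have hsum' := summable_of_LSeriesSummable (fun n => a n * Real.log n) (by simp [ha0]) hsum'
  set r := ∑' n : ℕ, a n / (n : ℝ) ^ s
  have hr : 0 ≤ r := tsum_nonneg fun n => div_nonneg (ha n) (by positivity)
  rw [Complex.norm_real, Real.norm_eq_abs, abs_of_nonneg hr]
  have e2 : ∑' n : ℕ, a n * Real.log n / (n : ℝ) ^ s ≤ K * r := by
    have := congrArg norm e1
    rw [norm_mul, Complex.norm_real, Complex.norm_real, Real.norm_eq_abs, Real.norm_eq_abs,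
      abs_of_nonneg hr] at this
    exact (le_abs_self _).trans (this.trans_le (mul_le_mul_of_nonneg_right hs1 hr))
  -- beyond `N` the logarithm exceeds `K + 1`
  have e3 : (K + 1) * r - (K + 1) * ∑ n ∈ Finset.range N, a n ≤
      ∑' n : ℕ, a n * Real.log n / (n : ℝ) ^ s := by
    have hfin : ∑ n ∈ Finset.range N, a n = ∑' n : ℕ, if n < N then a n else 0 := by
      rw [tsum_eq_sum (s := Finset.range N)]
      · exact Finset.sum_congr rfl fun n hn => by rw [if_pos (Finset.mem_range.1 hn)]
      · intro n hn; rw [if_neg (by simpa using hn)]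
    have hfs : Summable fun n : ℕ => if n < N then a n else 0 :=
      summable_of_ne_finset_zero (s := Finset.range N)
        fun n hn => by rw [if_neg (by simpa using hn)]
    rw [hfin, ← tsum_mul_left, ← tsum_mul_left, ← (hsum.mul_left _).tsum_sub (hfs.mul_left _)]
    refine Summable.tsum_le_tsum (fun n => ?_) ((hsum.mul_left _).sub (hfs.mul_left _)) hsum'
    rcases Nat.eq_zero_or_pos n with rfl | hn
    · simp [ha0]
    have hn1 : (1 : ℝ) ≤ n := by exact_mod_cast hn
    have hns : 1 ≤ (n : ℝ) ^ s := Real.one_le_rpow hn1 (by linarith)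
    split_ifs with hnN
    · have h1 : a n / (n : ℝ) ^ s ≤ a n := div_le_self (ha n) hns
      have h2 : 0 ≤ a n * Real.log n / (n : ℝ) ^ s :=
        div_nonneg (mul_nonneg (ha n) (Real.log_nonneg hn1)) (by positivity)
      nlinarith
    · have h1 : K + 1 ≤ Real.log n := by
        rw [Real.le_log_iff_exp_le (by linarith)]
        exact hN.trans (by exact_mod_cast not_lt.1 hnN)
      have h2 : 0 ≤ a n / (n : ℝ) ^ s := div_nonneg (ha n) (by positivity)
      rw [mul_zero, sub_zero, mul_div_right_comm, mul_comm (a n / _)]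
      exact mul_le_mul_of_nonneg_right h1 h2
  linarith

/-- Dirichlet's theorem in abstract form: the von Mangoldt mass of every class diverges. -/
theorem not_summable (h : ClassCount A L g R κ C δ q) (c : Γ) :
    ¬ Summable fun n : ℕ => L c n / n := by
  classical
  intro hc
  refine h.LSeries_L_unbounded ?_
  have hb : ∀ χ : AddChar Γ ℂ, ∃ K : ℝ, χ ≠ 0 →
      ∀ᶠ s : ℝ in 𝓝[>] 1, ‖LSeries (fun n => twist L χ n) s‖ ≤ K := by
    intro χ
    by_cases hχ : χ = 0
    · exact ⟨0, fun h => absurd hχ h⟩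
    · obtain ⟨K, hK⟩ := h.LSeries_bounded hχ
      exact ⟨K, fun _ => hK⟩
  choose K hK using hb
  refine ⟨Fintype.card Γ * (∑' n : ℕ, L c n / n) +
    ∑ χ ∈ (Finset.univ : Finset (AddChar Γ ℂ)).erase 0, K χ, ?_⟩
  have hK' : ∀ᶠ s : ℝ in 𝓝[>] 1, ∀ χ ∈ (Finset.univ : Finset (AddChar Γ ℂ)).erase 0,
      ‖LSeries (fun n => twist L χ n) s‖ ≤ K χ := by
    rw [Filter.eventually_all_finset]
    intro χ hχ
    exact hK χ (Finset.ne_of_mem_erase hχ)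
  filter_upwards [hK', self_mem_nhdsWithin] with s hs1 hs2
  have hs2 : 1 < s := hs2
  set D : Γ → ℂ := fun c => LSeries (fun n => (L c n : ℂ)) s
  have htw : ∀ χ : AddChar Γ ℂ, LSeries (fun n => twist L χ n) s = ∑ c', χ c' * D c' :=
    fun χ => (LSeriesHasSum_twist (fun c => h.LSeriesSummable_L c hs2) χ).LSeries_eq
  have horth : ∑ χ : AddChar Γ ℂ, χ (-c) * LSeries (fun n => twist L χ n) s =
      Fintype.card Γ * D c := by
    simp_rw [htw, Finset.mul_sum]
    rw [Finset.sum_comm]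
    have : ∀ c', ∑ χ : AddChar Γ ℂ, χ (-c) * (χ c' * D c') =
        if c' = c then (Fintype.card Γ : ℂ) * D c' else 0 := by
      intro c'
      simp_rw [← mul_assoc, ← AddChar.map_add_eq_mul, ← Finset.sum_mul]
      rw [AddChar.sum_apply_eq_ite]
      simp only [neg_add_eq_zero, eq_comm (a := c)]
      split_ifs <;> simp
    simp_rw [this]
    simp
  rw [← Finset.add_sum_erase _ _ (Finset.mem_univ 0), AddChar.zero_apply, one_mul] at horth
  have hD : ‖D c‖ ≤ ∑' n : ℕ, L c n / n := by
    simp only [D]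
    rw [LSeries_ofReal (fun n => L c n) (by simp), Complex.norm_real, Real.norm_eq_abs,
      abs_of_nonneg (tsum_nonneg fun n => div_nonneg (h.L_nonneg c n) (by positivity))]
    refine Summable.tsum_le_tsum (fun n => ?_)
      (summable_of_LSeriesSummable _ (by simp) (h.LSeriesSummable_L c hs2)) hc
    rcases Nat.eq_zero_or_pos n with rfl | hn
    · simp
    have hn1 : (1 : ℝ) ≤ n := by exact_mod_cast hn
    refine div_le_div_of_nonneg_left (h.L_nonneg c n) (by linarith) ?_
    exact Real.self_le_rpow_of_one_le hn1 hs2.le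
  rw [eq_sub_of_add_eq horth]
  refine (norm_sub_le _ _).trans (add_le_add ?_ ?_)
  · rw [norm_mul, Complex.norm_natCast]
    exact mul_le_mul_of_nonneg_left hD (Nat.cast_nonneg _)
  · refine norm_sum_le_of_le _ fun χ hχ => ?_
    rw [norm_mul, AddChar.norm_apply, one_mul]
    exact hs1 χ hχ

end ClassCount

end DirichletConclusion

/-! ### Weights on the mixed space -/

section MixedWeight

open MeasureTheory Module

set_option linter.unusedSectionVars false

open scoped Classical

open NumberField NumberField.mixedEmbedding NumberField.InfinitePlace
open NumberField.mixedEmbedding.fundamentalCone NumberField.Units.dirichletUnitTheorem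

variable {K : Type*} [Field K] [NumberField K]

/-- The points of the mixed space all of whose real coordinates are positive and whose complex
coordinates do not vanish. -/
def posCone (K : Type*) [Field K] : Set (mixedSpace K) :=
  {y | (∀ w, 0 < y.1 w) ∧ ∀ w, y.2 w ≠ 0}

lemma isOpen_posCone : IsOpen (posCone K) := by
  have h1 : IsOpen {y : mixedSpace K | ∀ w, 0 < y.1 w} := by
    simp only [Set.ofPred_forall]
    exact isOpen_iInter_of_finite fun w => isOpen_lt continuous_const (by fun_prop)
  have h2 : IsOpen {y : mixedSpace K | ∀ w, y.2 w ≠ 0} := by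
    simp only [Set.ofPred_forall]
    exact isOpen_iInter_of_finite fun w => isOpen_ne_fun (by fun_prop) continuous_const
  exact h1.inter h2

lemma normAtPlace_ne_zero_of_mem_posCone {y : mixedSpace K} (hy : y ∈ posCone K)
    (w : InfinitePlace K) : normAtPlace w y ≠ 0 := by
  rcases w.isReal_or_isComplex with hw | hw
  · rw [normAtPlace_apply_of_isReal hw]
    exact norm_ne_zero_iff.2 (hy.1 ⟨w, hw⟩).ne'
  · rw [normAtPlace_apply_of_isComplex hw]
    exact norm_ne_zero_iff.2 (hy.2 ⟨w, hw⟩)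

lemma norm_ne_zero_of_mem_posCone {y : mixedSpace K} (hy : y ∈ posCone K) :
    mixedEmbedding.norm y ≠ 0 :=
  mixedEmbedding.norm_ne_zero_iff.2 (normAtPlace_ne_zero_of_mem_posCone hy)

lemma contDiffAt_normAtPlace {y : mixedSpace K} (hy : y ∈ posCone K) (w : InfinitePlace K) :
    ContDiffAt ℝ (⊤ : ℕ∞) (fun z : mixedSpace K => normAtPlace w z) y := by
  rcases w.isReal_or_isComplex with hw | hw
  · simp only [normAtPlace_apply_of_isReal hw]
    refine ContDiffAt.norm ℝ ?_ (hy.1 ⟨w, hw⟩).ne'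
    exact (contDiff_apply ℝ ℝ (⟨w, hw⟩ : {w : InfinitePlace K // IsReal w})).contDiffAt.comp y
      contDiffAt_fst
  · simp only [normAtPlace_apply_of_isComplex hw]
    refine ContDiffAt.norm ℝ ?_ (hy.2 ⟨w, hw⟩)
    exact (contDiff_apply ℝ ℂ (⟨w, hw⟩ : {w : InfinitePlace K // IsComplex w})).contDiffAt.comp y
      contDiffAt_snd

lemma log_norm_eq_sum {y : mixedSpace K} (hy : mixedEmbedding.norm y ≠ 0) :
    Real.log (mixedEmbedding.norm y)
      = ∑ w : InfinitePlace K, mult w * Real.log (normAtPlace w y) := by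
  have h := mixedEmbedding.norm_ne_zero_iff.1 hy
  rw [mixedEmbedding.norm_apply, Real.log_prod fun w _ => pow_ne_zero _ (h w)]
  simp [Real.log_pow]

lemma contDiffAt_log_norm {y : mixedSpace K} (hy : y ∈ posCone K) :
    ContDiffAt ℝ (⊤ : ℕ∞) (fun z : mixedSpace K => Real.log (mixedEmbedding.norm z)) y := by
  refine ContDiffAt.log ?_ (norm_ne_zero_of_mem_posCone hy)
  change ContDiffAt ℝ _ (fun z : mixedSpace K => ∏ w, (normAtPlace w z) ^ (mult w)) y
  exact contDiffAt_prod fun w _ => (contDiffAt_normAtPlace hy w).pow _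

lemma contDiffAt_logMap {y : mixedSpace K} (hy : y ∈ posCone K) :
    ContDiffAt ℝ (⊤ : ℕ∞) (fun z : mixedSpace K => logMap z) y := by
  refine contDiffAt_pi.2 fun w => ?_
  simp only [logMap_apply]
  refine contDiffAt_const.mul (ContDiffAt.sub ?_ ((contDiffAt_log_norm hy).mul contDiffAt_const))
  exact (contDiffAt_normAtPlace hy w.1).log (normAtPlace_ne_zero_of_mem_posCone hy w.1)

/-- The weight `G(log N y) η(logMap y)` on the positive cone, extended by `0`. -/
noncomputable def mixedWeight (G : ℝ → ℝ) (η : logSpace K → ℝ) : mixedSpace K → ℝ :=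
  (posCone K).indicator fun y => G (Real.log (mixedEmbedding.norm y)) * η (logMap y)

/-- On the support of a `mixedWeight`, all the `normAtPlace w` are bounded above and below. -/
lemma exists_abs_log_normAtPlace_le (R ρ : ℝ) : ∃ M : ℝ, ∀ y : mixedSpace K,
    mixedEmbedding.norm y ≠ 0 → |Real.log (mixedEmbedding.norm y)| ≤ R → ‖logMap y‖ ≤ ρ →
      ∀ w : InfinitePlace K, |Real.log (normAtPlace w y)| ≤ M := by
  classical
  -- the common value of the sum and of the linear forms `logMap` control each coordinate
  let f : (InfinitePlace K → ℝ) →ₗ[ℝ] ℝ × logSpace K :=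
    LinearMap.prod (∑ w, (mult w : ℝ) • LinearMap.proj w)
      (LinearMap.pi fun w => (mult w.1 : ℝ) • (LinearMap.proj w.1 -
        (finrank ℚ K : ℝ)⁻¹ • ∑ w, (mult w : ℝ) • LinearMap.proj w))
  have hf : Function.Injective f := by
    rw [← LinearMap.ker_eq_bot, LinearMap.ker_eq_bot']
    intro x hx
    have h1 : ∑ w, (mult w : ℝ) * x w = 0 := by
      simpa [f] using congrArg Prod.fst hx
    have h2 : ∀ w, w ≠ w₀ → x w = 0 := fun w hw => by
      have := congrFun (congrArg Prod.snd hx) ⟨w, hw⟩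
      simpa [f, h1, mult_ne_zero] using this
    funext w
    by_cases hw : w = w₀
    · rw [← Finset.add_sum_erase _ _ (Finset.mem_univ w),
        Finset.sum_eq_zero (s := Finset.univ.erase w), add_zero] at h1
      · simpa [mult_ne_zero] using h1
      · intro v hv
        rw [h2 v (by rw [← hw]; exact (Finset.mem_erase.1 hv).1), mul_zero]
    · exact h2 w hw
  obtain ⟨k, hk, hkf⟩ := LinearMap.exists_antilipschitzWith f (LinearMap.ker_eq_bot.2 hf)
  refine ⟨k * max R ρ, fun y hy h1 h2 w => ?_⟩
  let x : InfinitePlace K → ℝ := fun w => Real.log (normAtPlace w y)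
  have hfx : f x = (Real.log (mixedEmbedding.norm y), logMap y) := by
    refine Prod.ext ?_ ?_
    · simp [f, x, log_norm_eq_sum hy]
    · funext w
      simp [f, x, log_norm_eq_sum hy]
      ring
  have h3 : ‖x‖ ≤ k * ‖f x‖ := by
    have := hkf.le_mul_dist x 0
    simpa using this
  have h4 : ‖f x‖ ≤ max R ρ := by
    rw [hfx, Prod.norm_mk]
    exact max_le_max h1 h2
  exact (norm_le_pi_norm x w).trans (h3.trans (by gcongr))

variable {G : ℝ → ℝ} {η : logSpace K → ℝ}

lemma mixedWeight_support (hG : HasCompactSupport G) (hη : HasCompactSupport η) :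
    ∃ Q : Set (mixedSpace K), IsCompact Q ∧ Q ⊆ posCone K ∧
      ∀ y, mixedWeight G η y ≠ 0 → y ∈ Q := by
  obtain ⟨R, hR⟩ := hG.isCompact.isBounded.exists_norm_le
  obtain ⟨ρ, hρ⟩ := hη.isCompact.isBounded.exists_norm_le
  obtain ⟨M, hM⟩ := exists_abs_log_normAtPlace_le (K := K) R ρ
  let Q : Set (mixedSpace K) := {y | (∀ w, Real.exp (-M) ≤ y.1 w) ∧
    (∀ w, Real.exp (-M) ≤ ‖y.2 w‖) ∧ ‖y‖ ≤ Real.exp M}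
  refine ⟨Q, ?_, ?_, ?_⟩
  · refine Metric.isCompact_of_isClosed_isBounded ?_ ?_
    · have h1 : IsClosed {y : mixedSpace K | ∀ w, Real.exp (-M) ≤ y.1 w} := by
        simp only [Set.ofPred_forall]
        exact isClosed_iInter fun w => isClosed_le continuous_const (by fun_prop)
      have h2 : IsClosed {y : mixedSpace K | ∀ w, Real.exp (-M) ≤ ‖y.2 w‖} := by
        simp only [Set.ofPred_forall]
        exact isClosed_iInter fun w => isClosed_le continuous_const (by fun_prop)
      exact h1.inter (h2.inter (isClosed_le continuous_norm continuous_const))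
    · exact isBounded_iff_forall_norm_le.2 ⟨_, fun y hy => hy.2.2⟩
  · intro y hy
    exact ⟨fun w => (Real.exp_pos _).trans_le (hy.1 w),
      fun w => norm_pos_iff.1 ((Real.exp_pos _).trans_le (hy.2.1 w))⟩
  · intro y hy
    have hyP : y ∈ posCone K := by
      by_contra h
      exact hy (Set.indicator_of_notMem h _)
    have hy0 := norm_ne_zero_of_mem_posCone hyP
    rw [mixedWeight, Set.indicator_of_mem hyP] at hy
    have h1 := hR _ (subset_tsupport _ (left_ne_zero_of_mul hy))
    have h2 := hρ _ (subset_tsupport _ (right_ne_zero_of_mul hy))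
    have h3 := hM y hy0 h1 h2
    have hpos : ∀ w, 0 < normAtPlace w y := fun w =>
      (normAtPlace_nonneg w y).lt_of_ne' (normAtPlace_ne_zero_of_mem_posCone hyP w)
    have hlow : ∀ w, Real.exp (-M) ≤ normAtPlace w y := fun w => by
      rw [← Real.le_log_iff_exp_le (hpos w)]
      exact (abs_le.1 (h3 w)).1
    refine ⟨fun w => ?_, fun w => ?_, ?_⟩
    · have := hlow w.1
      rwa [normAtPlace_apply_of_isReal w.2, Real.norm_of_nonneg (hyP.1 w).le] at this
    · have := hlow w.1
      rwa [normAtPlace_apply_of_isComplex w.2] at this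
    · rw [norm_eq_sup'_normAtPlace]
      refine Finset.sup'_le _ _ fun w _ => ?_
      rw [← Real.log_le_iff_le_exp (hpos w)]
      exact (abs_le.1 (h3 w)).2

lemma hasCompactSupport_mixedWeight (hG : HasCompactSupport G) (hη : HasCompactSupport η) :
    HasCompactSupport (mixedWeight G η) := by
  obtain ⟨Q, hQ, -, h⟩ := mixedWeight_support hG hη
  exact HasCompactSupport.intro hQ fun y hy => by
    by_contra h'
    exact hy (h y h')

lemma contDiff_mixedWeight (hG : HasCompactSupport G) (hη : HasCompactSupport η)
    (hGc : ContDiff ℝ (⊤ : ℕ∞) G) (hηc : ContDiff ℝ (⊤ : ℕ∞) η) :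
    ContDiff ℝ (⊤ : ℕ∞) (mixedWeight G η) := by
  obtain ⟨Q, hQ, hQP, h⟩ := mixedWeight_support hG hη
  refine contDiff_iff_contDiffAt.2 fun y => ?_
  by_cases hy : y ∈ posCone K
  · have : ContDiffAt ℝ (⊤ : ℕ∞)
        (fun y => G (Real.log (mixedEmbedding.norm y)) * η (logMap y)) y :=
      (hGc.contDiffAt.comp y (contDiffAt_log_norm hy)).mul
        (hηc.contDiffAt.comp y (contDiffAt_logMap hy))
    refine this.congr_of_eventuallyEq ?_
    filter_upwards [isOpen_posCone.mem_nhds hy] with z hz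
    exact Set.indicator_of_mem hz _
  · have : ContDiffAt ℝ (⊤ : ℕ∞) (fun _ : mixedSpace K => (0 : ℝ)) y := contDiffAt_const
    refine this.congr_of_eventuallyEq ?_
    filter_upwards [hQ.isClosed.isOpen_compl.mem_nhds fun hyQ => hy (hQP hyQ)] with z hz
    by_contra h'
    exact hz (h z h')

lemma one_mem_posCone : (1 : mixedSpace K) ∈ posCone K :=
  ⟨fun _ => by simp, fun _ => by simp⟩

lemma integral_mixedWeight_pos (hG : HasCompactSupport G) (hη : HasCompactSupport η)
    (hGc : ContDiff ℝ (⊤ : ℕ∞) G) (hηc : ContDiff ℝ (⊤ : ℕ∞) η)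
    (hG0 : ∀ u, 0 ≤ G u) (hη0 : ∀ u, 0 ≤ η u) (hG1 : 0 < G 0) (hη1 : 0 < η 0) :
    0 < ∫ y, mixedWeight G η y := by
  have hc := (contDiff_mixedWeight hG hη hGc hηc).continuous
  refine hc.integral_pos_of_hasCompactSupport_nonneg_nonzero
    (hasCompactSupport_mixedWeight hG hη) (fun y => ?_) (x := 1) ?_
  · exact Set.indicator_nonneg (fun y _ => mul_nonneg (hG0 _) (hη0 _)) y
  · rw [mixedWeight, Set.indicator_of_mem one_mem_posCone]
    simpa using ⟨hG1.ne', hη1.ne'⟩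

end MixedWeight

/-! ### Partitions of unity and the units congruent to one -/

section Partition

open MeasureTheory Module

set_option linter.unusedSectionVars false

/-- A smooth bump supported in `[-1, 1]` whose integer translates sum to `1`. -/
noncomputable def stepBump (t : ℝ) : ℝ := Real.smoothTransition (t + 1) - Real.smoothTransition t

lemma contDiff_stepBump : ContDiff ℝ (⊤ : ℕ∞) stepBump :=
  (Real.smoothTransition.contDiff.comp (contDiff_id.add contDiff_const)).sub
    Real.smoothTransition.contDiff

lemma stepBump_nonneg (t : ℝ) : 0 ≤ stepBump t :=
  sub_nonneg.2 (Real.smoothTransition.monotone (by linarith))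

lemma stepBump_zero : stepBump 0 = 1 := by simp [stepBump]

lemma stepBump_eq_zero {t : ℝ} (ht : 1 ≤ |t|) : stepBump t = 0 := by
  rcases le_abs.1 ht with h | h
  · rw [stepBump, Real.smoothTransition.one_of_one_le h,
      Real.smoothTransition.one_of_one_le (by linarith), sub_self]
  · rw [stepBump, Real.smoothTransition.zero_of_nonpos (by linarith),
      Real.smoothTransition.zero_of_nonpos (by linarith), sub_self]

lemma hasCompactSupport_stepBump : HasCompactSupport stepBump :=
  HasCompactSupport.intro (isCompact_Icc (a := -1) (b := 1)) fun t ht => by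
    refine stepBump_eq_zero ?_
    by_contra h
    rw [not_le, abs_lt] at h
    exact ht ⟨h.1.le, h.2.le⟩

lemma isWeight_stepBump : IsWeight stepBump 1 where
  cont := contDiff_stepBump.continuous
  nonneg := stepBump_nonneg
  supp _ hu := stepBump_eq_zero hu.le
  pos := by rw [stepBump_zero]; exact one_pos
  R_nonneg := zero_le_one

/-- At most two integer translates of `stepBump` are nonzero at a given point. -/
lemma stepBump_add_eq_zero {t : ℝ} {m : ℤ}
    (hm : m ∉ ({-⌊t⌋, -⌊t⌋ - 1} : Finset ℤ)) : stepBump (t + m) = 0 := by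
  apply stepBump_eq_zero
  simp only [Finset.mem_insert, Finset.mem_singleton, not_or] at hm
  have h1 := Int.floor_le t
  have h2 := Int.lt_floor_add_one t
  have h3 : 1 ≤ m + ⌊t⌋ ∨ m + ⌊t⌋ ≤ -2 := by omega
  rw [le_abs]
  rcases h3 with h | h
  · have : (1 : ℝ) ≤ m + ⌊t⌋ := by exact_mod_cast h
    left; linarith
  · have : (m : ℝ) + ⌊t⌋ ≤ -2 := by exact_mod_cast h
    right; linarith

lemma sum_stepBump (t : ℝ) : ∑ m ∈ ({-⌊t⌋, -⌊t⌋ - 1} : Finset ℤ), stepBump (t + m) = 1 := by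
  rw [Finset.sum_pair (by omega)]
  have h1 := Int.floor_le t
  have h2 := Int.lt_floor_add_one t
  push_cast
  rw [stepBump, stepBump, Real.smoothTransition.one_of_one_le (by linarith),
    Real.smoothTransition.zero_of_nonpos (x := t + (-⌊t⌋ - 1)) (by linarith),
    show t + (-(⌊t⌋ : ℝ) - 1) + 1 = t + -⌊t⌋ by ring]
  ring

variable {E : Type*} [NormedAddCommGroup E] [NormedSpace ℝ E] [FiniteDimensional ℝ E]

/-- A smooth, compactly supported function whose translates under a lattice sum to `1`. -/
lemma exists_lattice_partition (L : Submodule ℤ E) [DiscreteTopology L] [IsZLattice ℝ L] :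
    ∃ η : E → ℝ, ContDiff ℝ (⊤ : ℕ∞) η ∧ HasCompactSupport η ∧ (∀ x, 0 ≤ η x) ∧ 0 < η 0 ∧
      ∀ x, ∑' v : L, η (v + x) = 1 := by
  classical
  have : Module.Finite ℤ L := ZLattice.module_finite ℝ L
  have : Module.Free ℤ L := ZLattice.module_free ℝ L
  let B := Module.Free.chooseBasis ℤ L
  let b := B.ofZLatticeBasis ℝ L
  let f : E →L[ℝ] (Module.Free.ChooseBasisIndex ℤ L → ℝ) := b.equivFunL
  have hfb : ∀ x i, f x i = b.repr x i := fun x i => rfl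
  refine ⟨fun x => ∏ i, stepBump (f x i), ?_, ?_, fun x => Finset.prod_nonneg fun i _ =>
    stepBump_nonneg _, by simp [stepBump_zero], fun x => ?_⟩
  · refine contDiff_prod fun i _ => contDiff_stepBump.comp ?_
    exact (contDiff_apply ℝ ℝ i).comp f.contDiff
  · have hK : IsCompact (Metric.closedBall (0 : Module.Free.ChooseBasisIndex ℤ L → ℝ) 1) :=
      isCompact_closedBall _ _
    have hK' : IsCompact (b.equivFunL.symm '' Metric.closedBall 0 1) :=
      hK.image b.equivFunL.symm.continuous
    refine HasCompactSupport.intro hK' fun x hx => ?_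
    have : ¬ ‖f x‖ ≤ 1 := fun h => hx ⟨f x, by simpa using h, by simp [f]⟩
    rw [pi_norm_le_iff_of_nonneg zero_le_one] at this
    push Not at this
    obtain ⟨i, hi⟩ := this
    exact Finset.prod_eq_zero (Finset.mem_univ i) (stepBump_eq_zero hi.le)
  · have h1 : ∀ v : L, ∀ i, f (v + x) i = f x i + (B.equivFun v i : ℤ) := fun v i => by
      rw [map_add, Pi.add_apply, hfb, add_comm]
      congr 1
      rw [B.ofZLatticeBasis_repr_apply ℝ L v i]
      simp
    simp only [h1]
    rw [← B.equivFun.symm.toEquiv.tsum_eq]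
    simp only [LinearEquiv.coe_toEquiv, LinearEquiv.apply_symm_apply]
    rw [tsum_eq_sum (s := Fintype.piFinset fun i => ({-⌊f x i⌋, -⌊f x i⌋ - 1} : Finset ℤ)),
      ← Finset.prod_univ_sum (fun i => ({-⌊f x i⌋, -⌊f x i⌋ - 1} : Finset ℤ))
        fun i m => stepBump (f x i + m)]
    · exact Finset.prod_eq_one fun i _ => sum_stepBump _
    · intro m hm
      rw [Fintype.mem_piFinset, not_forall] at hm
      obtain ⟨i, hi⟩ := hm
      exact Finset.prod_eq_zero (Finset.mem_univ i) (stepBump_add_eq_zero hi)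

end Partition

section GoodUnits

open MeasureTheory Module

set_option linter.unusedSectionVars false

open scoped Classical
open NumberField NumberField.mixedEmbedding NumberField.InfinitePlace
open NumberField.Units NumberField.Units.dirichletUnitTheorem

variable {K : Type*} [Field K] [NumberField K]

/-- Total positivity: positivity at every real place. -/
def TotPos (α : 𝓞 K) : Prop :=
  ∀ w : {w : InfinitePlace K // IsReal w}, 0 < (mixedEmbedding K (α : K)).1 w

lemma TotPos.mul {α β : 𝓞 K} (hα : TotPos α) (hβ : TotPos β) : TotPos (α * β) := fun w => by
  simpa [TotPos] using mul_pos (hα w) (hβ w)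

lemma TotPos.one : TotPos (1 : 𝓞 K) := fun w => by simp

lemma TotPos.of_mul {α β : 𝓞 K} (hα : TotPos α) (h : TotPos (α * β)) : TotPos β := fun w => by
  have := h w
  simp only [map_mul, Prod.fst_mul, Pi.mul_apply] at this
  exact (pos_iff_pos_of_mul_pos this).1 (hα w)

/-- The elements congruent to `1` modulo `𝔪` and totally positive; they generate the ideals
which are trivial in the narrow ray class group modulo `𝔪`. -/
structure Good (𝔪 : Ideal (𝓞 K)) (α : 𝓞 K) : Prop where
  ne_zero : α ≠ 0
  sub_mem : α - 1 ∈ 𝔪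
  pos : TotPos α

variable {𝔪 : Ideal (𝓞 K)}

lemma Good.one : Good 𝔪 1 := ⟨one_ne_zero, by simp, TotPos.one⟩

lemma Good.mul {α β : 𝓞 K} (hα : Good 𝔪 α) (hβ : Good 𝔪 β) : Good 𝔪 (α * β) where
  ne_zero := mul_ne_zero hα.ne_zero hβ.ne_zero
  sub_mem := by
    have := 𝔪.add_mem (𝔪.mul_mem_left α hβ.sub_mem) hα.sub_mem
    convert this using 1; ring
  pos := hα.pos.mul hβ.pos

lemma Good.of_mul {α β : 𝓞 K} (hα : Good 𝔪 α) (h : Good 𝔪 (α * β)) : Good 𝔪 β where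
  ne_zero := right_ne_zero_of_mul h.ne_zero
  sub_mem := by
    have := 𝔪.sub_mem h.sub_mem (𝔪.mul_mem_right β hα.sub_mem)
    convert this using 1; ring
  pos := hα.pos.of_mul h.pos

lemma Good.mem_posCone {α : 𝓞 K} (hα : Good 𝔪 α) : mixedEmbedding K (α : K) ∈ posCone K := by
  refine ⟨hα.pos, fun w => ?_⟩
  rw [mixedEmbedding_apply_isComplex]
  simpa using hα.ne_zero

/-- The units which are `Good` modulo `𝔪`. -/
def goodUnits (𝔪 : Ideal (𝓞 K)) : Subgroup (𝓞 K)ˣ where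
  carrier := {u | Good 𝔪 (u : 𝓞 K)}
  mul_mem' hu hv := by simpa using Good.mul hu hv
  one_mem' := by simpa using Good.one
  inv_mem' {u} hu := by
    have h : Good 𝔪 (u : 𝓞 K) := hu
    exact h.of_mul (by simpa using Good.one)

/-- A fixed power of every nonzero element prime to `𝔪` is `Good`. -/
lemma exists_pow_good (h𝔪 : 𝔪 ≠ ⊥) : ∃ N : ℕ, 0 < N ∧ ∀ α : 𝓞 K, α ≠ 0 →
    IsUnit (Ideal.Quotient.mk 𝔪 α) → Good 𝔪 (α ^ N) := by
  have : Finite (𝓞 K ⧸ 𝔪) := Ideal.finiteQuotientOfFreeOfNeBot 𝔪 h𝔪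
  have := Fintype.ofFinite (𝓞 K ⧸ 𝔪)ˣ
  refine ⟨Fintype.card (𝓞 K ⧸ 𝔪)ˣ * 2, by have := Fintype.card_pos (α := (𝓞 K ⧸ 𝔪)ˣ); omega,
    fun α hα hu => ⟨pow_ne_zero _ hα, ?_, fun w => ?_⟩⟩
  · obtain ⟨u, hu⟩ := hu
    rw [← Ideal.Quotient.mk_eq_mk_iff_sub_mem, map_pow, ← hu, ← Units.val_pow_eq_pow_val, pow_mul,
      pow_card_eq_one]
    simp
  · have h : (mixedEmbedding K (α : K)).1 w ≠ 0 := by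
      rw [mixedEmbedding_apply_isReal]
      simpa using hα
    have h2 : (mixedEmbedding K ((α ^ (Fintype.card (𝓞 K ⧸ 𝔪)ˣ * 2) : 𝓞 K) : K)).1 w
        = ((mixedEmbedding K (α : K)).1 w ^ (Fintype.card (𝓞 K ⧸ 𝔪)ˣ)) ^ 2 := by
      simp [pow_mul]
    rw [h2]
    positivity

/-- The image of the good units under the logarithmic embedding. -/
noncomputable def goodLattice (𝔪 : Ideal (𝓞 K)) : Submodule ℤ (logSpace K) :=
  ((goodUnits 𝔪).toAddSubgroup.map (logEmbedding K)).toIntSubmodule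

lemma mem_goodLattice {x : logSpace K} :
    x ∈ goodLattice 𝔪 ↔ ∃ u : goodUnits 𝔪, logEmbedding K (Additive.ofMul (u : (𝓞 K)ˣ)) = x := by
  constructor
  · rintro ⟨u, hu, rfl⟩
    exact ⟨⟨u.toMul, hu⟩, rfl⟩
  · rintro ⟨u, rfl⟩
    exact ⟨Additive.ofMul (u : (𝓞 K)ˣ), u.2, rfl⟩

instance discreteTopology_goodLattice : DiscreteTopology (goodLattice 𝔪) := by
  have h : (goodLattice 𝔪 : Set (logSpace K)) ⊆ (unitLattice K : Set (logSpace K)) := by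
    intro x hx
    obtain ⟨u, rfl⟩ := mem_goodLattice.1 hx
    exact ⟨Additive.ofMul (u : (𝓞 K)ˣ), trivial, rfl⟩
  exact DiscreteTopology.of_subset (instDiscrete_unitLattice K) h

lemma isZLattice_goodLattice (h𝔪 : 𝔪 ≠ ⊥) : IsZLattice ℝ (goodLattice 𝔪) where
  span_top := by
    obtain ⟨N, hN, hgood⟩ := exists_pow_good h𝔪
    rw [eq_top_iff, ← unitLattice_span_eq_top K, Submodule.span_le]
    rintro _ ⟨u, -, rfl⟩
    have h1 : (N : ℝ) • (logEmbedding K) u ∈ Submodule.span ℝ (goodLattice 𝔪 : Set (logSpace K)) := by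
      refine Submodule.subset_span (mem_goodLattice.2 ⟨⟨u.toMul ^ N, ?_⟩, ?_⟩)
      · change Good 𝔪 _
        rw [Units.val_pow_eq_pow_val]
        exact hgood _ (Units.ne_zero _) ((Units.isUnit _).map _)
      · rw [Nat.cast_smul_eq_nsmul, ← map_nsmul]
        rfl
    have h2 := Submodule.smul_mem _ ((N : ℝ)⁻¹) h1
    rwa [smul_smul, inv_mul_cancel₀ (by positivity), one_smul] at h2

lemma finite_ker_goodUnits :
    Finite {u : goodUnits 𝔪 // logEmbedding K (Additive.ofMul (u : (𝓞 K)ˣ)) = 0} := by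
  refine Finite.of_injective (β := torsion K)
    (fun u => ⟨u.1.1, logEmbedding_eq_zero_iff.1 u.2⟩) fun u v h => ?_
  have huv : (u.1.1 : (𝓞 K)ˣ) = v.1.1 := congrArg (Subtype.val : torsion K → (𝓞 K)ˣ) h
  exact Subtype.ext (Subtype.ext huv)

/-- Good units are parametrised by a point of the good lattice and a root of unity. -/
lemma exists_goodUnits_equiv (𝔪 : Ideal (𝓞 K)) :
    ∃ e : goodUnits 𝔪 ≃ goodLattice 𝔪 ×
        {u : goodUnits 𝔪 // logEmbedding K (Additive.ofMul (u : (𝓞 K)ˣ)) = 0},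
      ∀ u, ((e u).1 : logSpace K) = logEmbedding K (Additive.ofMul (u : (𝓞 K)ˣ)) := by
  choose s hs using fun x : goodLattice 𝔪 => mem_goodLattice.1 x.2
  let f : goodUnits 𝔪 → goodLattice 𝔪 := fun u =>
    ⟨logEmbedding K (Additive.ofMul (u : (𝓞 K)ˣ)), mem_goodLattice.2 ⟨u, rfl⟩⟩
  refine ⟨⟨fun u => (f u, ⟨u * (s (f u))⁻¹, ?_⟩), fun p => s p.1 * p.2.1, ?_, ?_⟩, fun u => rfl⟩
  · have := hs (f u)
    simp [this, f]
  · intro u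
    simp
  · rintro ⟨x, v⟩
    have hf : f (s x * v.1) = x := by
      apply Subtype.ext
      simp [f, hs, v.2]
    refine Prod.ext hf ?_
    apply Subtype.ext
    change s x * v.1 * (s (f (s x * v.1)))⁻¹ = v.1
    rw [hf, mul_comm (s x), mul_inv_cancel_right]

/-- A smooth weight on the logarithmic space whose sum over the translates by the good units is
a positive constant. -/
lemma exists_unit_partition (h𝔪 : 𝔪 ≠ ⊥) :
    ∃ η : logSpace K → ℝ, ∃ ω : ℝ, ContDiff ℝ (⊤ : ℕ∞) η ∧ HasCompactSupport η ∧
      (∀ x, 0 ≤ η x) ∧ 0 < η 0 ∧ 0 < ω ∧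
      ∀ x, ∑' u : goodUnits 𝔪, η (logEmbedding K (Additive.ofMul (u : (𝓞 K)ˣ)) + x) = ω := by
  have := isZLattice_goodLattice h𝔪
  obtain ⟨η, h1, h2, h3, h4, h5⟩ := exists_lattice_partition (goodLattice 𝔪)
  obtain ⟨e, he⟩ := exists_goodUnits_equiv 𝔪
  let T := {u : goodUnits 𝔪 // logEmbedding K (Additive.ofMul (u : (𝓞 K)ˣ)) = 0}
  have : Finite T := finite_ker_goodUnits
  have := Fintype.ofFinite T
  have hne : Nonempty T := ⟨⟨1, by simp⟩⟩
  refine ⟨η, Fintype.card T, h1, h2, h3, h4, by exact_mod_cast Fintype.card_pos, fun x => ?_⟩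
  have h6 : Summable fun v : goodLattice 𝔪 => η (v + x) := by
    by_contra h
    have := h5 x
    rw [tsum_eq_zero_of_not_summable h] at this
    exact zero_ne_one this
  have h7 : ∀ u : goodUnits 𝔪, η (logEmbedding K (Additive.ofMul (u : (𝓞 K)ˣ)) + x)
      = (fun p : goodLattice 𝔪 × T => η (p.1 + x)) (e u) := fun u => by
    change _ = η (((e u).1 : logSpace K) + x)
    rw [he]
  simp only [h7]
  rw [e.tsum_eq (fun p : goodLattice 𝔪 × T => η (p.1 + x))]
  have h8 : Summable fun p : goodLattice 𝔪 × T => η (p.1 + x) := by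
    have := h6.mul_of_nonneg (g := fun _ : T => (1 : ℝ)) (.of_finite) (fun _ => h3 _)
      (fun _ => zero_le_one)
    simpa using this
  rw [h8.tsum_prod]
  simp [tsum_fintype, tsum_mul_left, h5]

end GoodUnits

/-! ### The narrow ray class group -/

section RayClass

open MeasureTheory Module

set_option linter.unusedSectionVars false

open scoped Classical nonZeroDivisors
open NumberField NumberField.mixedEmbedding NumberField.InfinitePlace

variable {K : Type*} [Field K] [NumberField K]

/-- The nonzero ideals prime to `𝔪`. -/
def coprimeIdeals (𝔪 : Ideal (𝓞 K)) : Submonoid (Ideal (𝓞 K)) where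
  carrier := {𝔞 | 𝔞 ≠ ⊥ ∧ IsCoprime 𝔞 𝔪}
  mul_mem' ha hb := ⟨mul_ne_zero ha.1 hb.1, ha.2.mul_left hb.2⟩
  one_mem' := ⟨one_ne_zero, isCoprime_one_left⟩

variable {𝔪 : Ideal (𝓞 K)}

lemma coprimeIdeals_ne_bot (𝔞 : coprimeIdeals 𝔪) : (𝔞 : Ideal (𝓞 K)) ≠ ⊥ := 𝔞.2.1

lemma isCoprime_span_of_sub_mem {α : 𝓞 K} (h : α - 1 ∈ 𝔪) : IsCoprime (Ideal.span {α}) 𝔪 :=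
  Ideal.isCoprime_iff_exists.2 ⟨α, Ideal.mem_span_singleton_self α, 1 - α,
    by simpa using 𝔪.neg_mem h, by ring⟩

lemma Good.span_mem {α : 𝓞 K} (h : Good 𝔪 α) : Ideal.span {α} ∈ coprimeIdeals 𝔪 :=
  ⟨by simpa using h.ne_zero, isCoprime_span_of_sub_mem h.sub_mem⟩

lemma mem_coprimeIdeals_of_mul_left {𝔞 𝔟 : Ideal (𝓞 K)} (h : 𝔞 * 𝔟 ∈ coprimeIdeals 𝔪) :
    𝔟 ∈ coprimeIdeals 𝔪 :=
  ⟨right_ne_zero_of_mul h.1, h.2.of_mul_left_right⟩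

/-- Two ideals are equivalent when their quotient is generated by a quotient of `Good` elements. -/
def rayCon (𝔪 : Ideal (𝓞 K)) : Con (coprimeIdeals 𝔪) where
  r 𝔞 𝔟 := ∃ α β : 𝓞 K, Good 𝔪 α ∧ Good 𝔪 β ∧
    Ideal.span {α} * (𝔞 : Ideal (𝓞 K)) = Ideal.span {β} * (𝔟 : Ideal (𝓞 K))
  iseqv :=
    { refl := fun 𝔞 => ⟨1, 1, Good.one, Good.one, rfl⟩
      symm := fun ⟨α, β, hα, hβ, h⟩ => ⟨β, α, hβ, hα, h.symm⟩
      trans := by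
        rintro 𝔞 𝔟 𝔠 ⟨α, β, hα, hβ, h⟩ ⟨α', β', hα', hβ', h'⟩
        refine ⟨α * α', β * β', hα.mul hα', hβ.mul hβ', ?_⟩
        rw [← Ideal.span_singleton_mul_span_singleton, ← Ideal.span_singleton_mul_span_singleton,
          mul_right_comm, h, mul_right_comm, mul_assoc, h', mul_assoc] }
  mul' := by
    rintro 𝔞 𝔟 𝔠 𝔡 ⟨α, β, hα, hβ, h⟩ ⟨α', β', hα', hβ', h'⟩
    refine ⟨α * α', β * β', hα.mul hα', hβ.mul hβ', ?_⟩
    rw [← Ideal.span_singleton_mul_span_singleton, ← Ideal.span_singleton_mul_span_singleton,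
      Submonoid.coe_mul, Submonoid.coe_mul, mul_mul_mul_comm, h, h', mul_mul_mul_comm]

/-- The narrow ray class group modulo `𝔪`. -/
def RayClassGroup (𝔪 : Ideal (𝓞 K)) : Type _ := (rayCon 𝔪).Quotient

/-- The ray class of an ideal. -/
def rayClass (𝔪 : Ideal (𝓞 K)) : coprimeIdeals 𝔪 → RayClassGroup 𝔪 := fun 𝔞 => (rayCon 𝔪).mk' 𝔞

noncomputable instance : CommMonoid (RayClassGroup 𝔪) :=
  inferInstanceAs (CommMonoid (rayCon 𝔪).Quotient)

lemma rayClass_surjective : Function.Surjective (rayClass 𝔪) := Con.mk'_surjective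

lemma rayClass_mul (𝔞 𝔟 : coprimeIdeals 𝔪) :
    rayClass 𝔪 (𝔞 * 𝔟) = rayClass 𝔪 𝔞 * rayClass 𝔪 𝔟 := map_mul (rayCon 𝔪).mk' 𝔞 𝔟

lemma rayClass_one : rayClass 𝔪 1 = 1 := map_one (rayCon 𝔪).mk'

lemma rayClass_eq_iff {𝔞 𝔟 : coprimeIdeals 𝔪} : rayClass 𝔪 𝔞 = rayClass 𝔪 𝔟 ↔
    ∃ α β : 𝓞 K, Good 𝔪 α ∧ Good 𝔪 β ∧
      Ideal.span {α} * (𝔞 : Ideal (𝓞 K)) = Ideal.span {β} * (𝔟 : Ideal (𝓞 K)) :=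
  Con.eq (rayCon 𝔪)

lemma rayClass_eq_one_iff {𝔞 : coprimeIdeals 𝔪} : rayClass 𝔪 𝔞 = 1 ↔
    ∃ α : 𝓞 K, Good 𝔪 α ∧ (𝔞 : Ideal (𝓞 K)) = Ideal.span {α} := by
  rw [← rayClass_one, rayClass_eq_iff]
  constructor
  · rintro ⟨α, β, hα, hβ, h⟩
    rw [Submonoid.coe_one, mul_one] at h
    have h1 : β ∈ Ideal.span {α} := by
      have : β ∈ Ideal.span {β} := Ideal.mem_span_singleton_self β
      rw [← h] at this
      have hle : Ideal.span {α} * (𝔞 : Ideal (𝓞 K)) ≤ Ideal.span {α} := Ideal.mul_le_left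
      exact hle this
    obtain ⟨γ, rfl⟩ := Ideal.mem_span_singleton.1 h1
    refine ⟨γ, hα.of_mul hβ, ?_⟩
    rw [← Ideal.span_singleton_mul_span_singleton] at h
    exact mul_left_cancel₀ (by simpa using hα.ne_zero) h
  · rintro ⟨α, hα, h⟩
    exact ⟨1, α, Good.one, hα, by simp [h]⟩

lemma abs_mixedEmbedding_fst (x : K) (w : {w : InfinitePlace K // IsReal w}) :
    |(mixedEmbedding K x).1 w| = w.1 x := by
  rw [← normAtPlace_apply, normAtPlace_apply_of_isReal w.2, Real.norm_eq_abs]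

/-- An ideal prime to `𝔪` contains an element which is `1` modulo `𝔪` and has the same signs as
a given `θ`. -/
lemma exists_mem_sign [NeZero 𝔪] {𝔞 : Ideal (𝓞 K)} (h𝔞 : 𝔞 ∈ coprimeIdeals 𝔪) {θ : 𝓞 K}
    (hθ : θ ≠ 0) : ∃ β ∈ 𝔞, β ≠ 0 ∧ β - 1 ∈ 𝔪 ∧ ∀ w : {w : InfinitePlace K // IsReal w},
      0 < (mixedEmbedding K (β : K)).1 w * (mixedEmbedding K (θ : K)).1 w := by
  obtain ⟨a, ha, m, hm, ham⟩ := Ideal.isCoprime_iff_exists.1 h𝔞.2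
  let N := Ideal.absNorm (𝔞 * 𝔪)
  have hN : N ≠ 0 := Ideal.absNorm_ne_zero_iff_mem_nonZeroDivisors.2
    (mem_nonZeroDivisors_of_ne_zero (mul_ne_zero h𝔞.1 (NeZero.ne 𝔪)))
  have hNmem : (N : 𝓞 K) ∈ 𝔞 * 𝔪 := Ideal.absNorm_mem _
  have hle𝔞 : 𝔞 * 𝔪 ≤ 𝔞 := Ideal.mul_le_left
  have hle𝔪 : 𝔞 * 𝔪 ≤ 𝔪 := Ideal.mul_le_right
  have hw : ∀ w : InfinitePlace K, 0 < w (θ : K) := fun w => by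
    rw [InfinitePlace.pos_iff]; simpa using hθ
  obtain ⟨k, hk⟩ : ∃ k : ℕ, ∀ w : InfinitePlace K, w (a : K) < k * N * w (θ : K) := by
    choose f hf using fun w : InfinitePlace K => exists_nat_gt (w (a : K) / (N * w (θ : K)))
    refine ⟨∑ w, f w, fun w => ?_⟩
    have hpos : 0 < N * w (θ : K) := mul_pos (by positivity) (hw w)
    have h1 := (div_lt_iff₀ hpos).1 (hf w)
    have h2 : (f w : ℝ) ≤ ((∑ w, f w : ℕ) : ℝ) := by
      exact_mod_cast Finset.single_le_sum (fun _ _ => Nat.zero_le _) (Finset.mem_univ w)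
    rw [mul_assoc]
    exact h1.trans_le (by gcongr)
  have hval : ∀ w : InfinitePlace K, w ((k : K) * N * θ) = k * N * w (θ : K) := fun w => by
    rw [map_mul, map_mul, InfinitePlace.map_natCast, InfinitePlace.map_natCast]
  refine ⟨a + k * N * θ, ?_, ?_, ?_, fun w => ?_⟩
  · exact 𝔞.add_mem ha (𝔞.mul_mem_right _ (𝔞.mul_mem_left _ (hle𝔞 hNmem)))
  · intro h
    obtain ⟨w⟩ : Nonempty (InfinitePlace K) := inferInstance
    have h1 : (a : K) = -((k : K) * N * θ) := by
      have := congrArg (algebraMap (𝓞 K) K) h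
      simp only [map_add, map_mul, map_natCast, map_zero] at this
      exact eq_neg_of_add_eq_zero_left this
    have h2 := hk w
    have h3 : w (-((k : K) * N * θ)) = w ((k : K) * N * θ) := AbsoluteValue.map_neg w.1 _
    rw [h1, h3, hval] at h2
    exact lt_irrefl _ h2
  · have h1 : a - 1 ∈ 𝔪 := by
      rw [← ham, sub_add_cancel_left]
      exact 𝔪.neg_mem hm
    have h2 : (k : 𝓞 K) * N * θ ∈ 𝔪 :=
      𝔪.mul_mem_right _ (𝔪.mul_mem_left _ (hle𝔪 hNmem))
    have := 𝔪.add_mem h1 h2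
    convert this using 1; ring
  · have h1 : (mixedEmbedding K ((a + k * N * θ : 𝓞 K) : K)).1 w
        = (mixedEmbedding K (a : K)).1 w + k * N * (mixedEmbedding K (θ : K)).1 w := by
      simp
    have h2 := hk w.1
    rw [← abs_mixedEmbedding_fst, ← abs_mixedEmbedding_fst] at h2
    rw [h1, add_mul]
    set x := (mixedEmbedding K (a : K)).1 w
    set y := (mixedEmbedding K (θ : K)).1 w
    have hy : 0 < |y| := by rw [abs_mixedEmbedding_fst]; exact hw w.1
    have h3 : |x * y| < k * N * y * y := by
      rw [abs_mul]
      calc |x| * |y| < k * N * |y| * |y| := by gcongr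
        _ = k * N * y * y := by rw [mul_assoc _ |y|, abs_mul_abs_self, mul_assoc _ y]
    linarith [(abs_lt.1 h3).1]

lemma exists_good_mem [NeZero 𝔪] {𝔞 : Ideal (𝓞 K)} (h𝔞 : 𝔞 ∈ coprimeIdeals 𝔪) :
    ∃ α ∈ 𝔞, Good 𝔪 α := by
  obtain ⟨β, h1, h2, h3, h4⟩ := exists_mem_sign h𝔞 (one_ne_zero (α := 𝓞 K))
  exact ⟨β, h1, h2, h3, fun w => by simpa using h4 w⟩

lemma exists_mul_eq_good [NeZero 𝔪] (𝔞 : coprimeIdeals 𝔪) : ∃ 𝔟 : coprimeIdeals 𝔪, ∃ α : 𝓞 K,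
    Good 𝔪 α ∧ ((𝔞 * 𝔟 : coprimeIdeals 𝔪) : Ideal (𝓞 K)) = Ideal.span {α} := by
  obtain ⟨α, hα, hg⟩ := exists_good_mem 𝔞.2
  obtain ⟨𝔟, h𝔟⟩ := Ideal.dvd_iff_le.2 ((Ideal.span_singleton_le_iff_mem _).2 hα)
  refine ⟨⟨𝔟, mem_coprimeIdeals_of_mul_left (h𝔟 ▸ hg.span_mem)⟩, α, hg, h𝔟.symm⟩

noncomputable instance [NeZero 𝔪] : CommGroup (RayClassGroup 𝔪) :=
  commGroupOfIsUnit fun c => by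
    obtain ⟨𝔞, rfl⟩ := rayClass_surjective c
    obtain ⟨𝔟, α, hα, h⟩ := exists_mul_eq_good 𝔞
    refine IsUnit.of_mul_eq_one (rayClass 𝔪 𝔟) ?_
    rw [← rayClass_mul]
    exact rayClass_eq_one_iff.2 ⟨α, hα, h⟩

/-- Two elements prime to `𝔪` which agree modulo `𝔪` and have the same signs generate equivalent
ideals. -/
lemma exists_good_mul_eq [NeZero 𝔪] {δ δ' : 𝓞 K} (hδ : δ ≠ 0) (hδ' : δ' ≠ 0)
    (hu : IsUnit (Ideal.Quotient.mk 𝔪 δ))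
    (hm : Ideal.Quotient.mk 𝔪 δ = Ideal.Quotient.mk 𝔪 δ')
    (hs : ∀ w : {w : InfinitePlace K // IsReal w},
      0 < (mixedEmbedding K (δ : K)).1 w ↔ 0 < (mixedEmbedding K (δ' : K)).1 w) :
    ∃ α β : 𝓞 K, Good 𝔪 α ∧ Good 𝔪 β ∧ α * δ = β * δ' := by
  obtain ⟨N, hN, hgood⟩ := exists_pow_good (NeZero.ne 𝔪)
  obtain ⟨n, rfl⟩ : ∃ n, N = n + 1 := ⟨N - 1, by omega⟩
  have hg := hgood δ hδ hu
  refine ⟨δ ^ n * δ', δ ^ (n + 1), ⟨mul_ne_zero (pow_ne_zero _ hδ) hδ', ?_, fun w => ?_⟩, hg,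
    by ring⟩
  · rw [← Ideal.Quotient.mk_eq_mk_iff_sub_mem, map_mul, ← hm, ← map_mul, ← pow_succ,
      Ideal.Quotient.mk_eq_mk_iff_sub_mem]
    exact hg.sub_mem
  · have h0 : (mixedEmbedding K (δ : K)).1 w ≠ 0 := by
      rw [mixedEmbedding_apply_isReal]; simpa using hδ
    have h0' : (mixedEmbedding K (δ' : K)).1 w ≠ 0 := by
      rw [mixedEmbedding_apply_isReal]; simpa using hδ'
    have h1 := hg.pos w
    have h2 := hs w
    simp only [map_pow, map_mul, Prod.pow_fst, Prod.fst_mul, Pi.mul_apply, Pi.pow_apply,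
      pow_succ] at h1 ⊢
    rcases lt_or_gt_of_ne h0 with h | h
    · have h3 : (mixedEmbedding K (δ' : K)).1 w < 0 :=
        h0'.lt_of_le (not_lt.1 fun h' => h.not_gt (h2.2 h'))
      exact mul_pos_of_neg_of_neg ((neg_iff_neg_of_mul_pos h1).2 h) h3
    · exact mul_pos ((pos_iff_pos_of_mul_pos h1).2 h) (h2.1 h)

instance [NeZero 𝔪] : Finite (RayClassGroup 𝔪) := by
  have : Finite (𝓞 K ⧸ 𝔪) := Ideal.finiteQuotientOfFreeOfNeBot 𝔪 (NeZero.ne 𝔪)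
  let cl : coprimeIdeals 𝔪 → ClassGroup (𝓞 K) := fun 𝔞 =>
    ClassGroup.mk0 ⟨𝔞, mem_nonZeroDivisors_of_ne_zero 𝔞.2.1⟩
  -- an ideal `𝔠 C` in the inverse class of `C`, for every class `C` which has coprime members
  have hex : ∀ C : ClassGroup (𝓞 K), ∃ 𝔠 : coprimeIdeals 𝔪, ∀ 𝔞 : coprimeIdeals 𝔪, cl 𝔞 = C →
      ∃ δ : 𝓞 K, ((𝔞 * 𝔠 : coprimeIdeals 𝔪) : Ideal (𝓞 K)) = Ideal.span {δ} := by
    intro C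
    by_cases hC : ∃ 𝔞, cl 𝔞 = C
    · obtain ⟨𝔞₀, rfl⟩ := hC
      obtain ⟨𝔠, α, hα, h⟩ := exists_mul_eq_good 𝔞₀
      have hmul : ∀ 𝔞 : coprimeIdeals 𝔪, cl (𝔞 * 𝔠) = cl 𝔞 * cl 𝔠 := fun 𝔞 => by
        simp only [cl]
        rw [← map_mul]
        rfl
      refine ⟨𝔠, fun 𝔞 h𝔞 => ?_⟩
      have h1 : cl (𝔞₀ * 𝔠) = 1 := (ClassGroup.mk0_eq_one_iff _).2 ⟨α, h⟩
      have h2 : cl (𝔞 * 𝔠) = 1 := by rw [hmul, h𝔞, ← hmul, h1]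
      obtain ⟨δ, hδ⟩ := (ClassGroup.mk0_eq_one_iff _).1 h2
      exact ⟨δ, hδ⟩
    · exact ⟨1, fun 𝔞 h => absurd ⟨𝔞, h⟩ hC⟩
  choose 𝔠 h𝔠 using hex
  choose r hr using rayClass_surjective (𝔪 := 𝔪)
  choose δ hδ using fun c => h𝔠 (cl (r c)) (r c) rfl
  have hne : ∀ c, δ c ≠ 0 := fun c h => by
    have := hδ c
    rw [h, Ideal.span_singleton_zero] at this
    exact (r c * 𝔠 (cl (r c))).2.1 this
  have hunit : ∀ c, IsUnit (Ideal.Quotient.mk 𝔪 (δ c)) := fun c => by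
    have h := (r c * 𝔠 (cl (r c))).2.2
    rw [hδ c] at h
    obtain ⟨x, hx, y, hy, hxy⟩ := Ideal.isCoprime_iff_exists.1 h
    obtain ⟨z, rfl⟩ := Ideal.mem_span_singleton.1 hx
    refine IsUnit.of_mul_eq_one (Ideal.Quotient.mk 𝔪 z) ?_
    rw [← map_mul, ← map_one (Ideal.Quotient.mk 𝔪), Ideal.Quotient.mk_eq_mk_iff_sub_mem, ← hxy,
      sub_add_cancel_left]
    exact 𝔪.neg_mem hy
  let f : RayClassGroup 𝔪 → ClassGroup (𝓞 K) × (𝓞 K ⧸ 𝔪) ×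
      ({w : InfinitePlace K // IsReal w} → Prop) := fun c =>
    (cl (r c), Ideal.Quotient.mk 𝔪 (δ c), fun w => 0 < (mixedEmbedding K (δ c : K)).1 w)
  refine Finite.of_injective f fun c c' hcc => ?_
  simp only [f, Prod.mk.injEq] at hcc
  obtain ⟨h1, h2, h3⟩ := hcc
  obtain ⟨α, β, hα, hβ, hαβ⟩ := exists_good_mul_eq (hne c) (hne c') (hunit c) h2
    fun w => iff_of_eq (congrFun h3 w)
  rw [← hr c, ← hr c', rayClass_eq_iff]
  refine ⟨α, β, hα, hβ, ?_⟩
  have h4 := hδ c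
  have h5 := hδ c'
  rw [Submonoid.coe_mul] at h4 h5
  rw [← h1] at h5
  refine mul_right_cancel₀ (𝔠 (cl (r c))).2.1 ?_
  rw [mul_assoc, mul_assoc, h4, h5, Ideal.span_singleton_mul_span_singleton,
    Ideal.span_singleton_mul_span_singleton, hαβ]

noncomputable instance [NeZero 𝔪] : Fintype (RayClassGroup 𝔪) := Fintype.ofFinite _

/-- A positive integer congruent to `1` modulo the norm of `𝔪` is `Good`. -/
lemma good_natCast (k : ℕ) : Good 𝔪 ((1 + k * Ideal.absNorm 𝔪 : ℕ) : 𝓞 K) where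
  ne_zero := by
    rw [Nat.cast_ne_zero]; omega
  sub_mem := by
    push_cast
    rw [add_sub_cancel_left]
    exact 𝔪.mul_mem_left _ (Ideal.absNorm_mem 𝔪)
  pos w := by
    have h : ((1 + k * Ideal.absNorm 𝔪 : ℕ) : K) = (((1 + k * Ideal.absNorm 𝔪 : ℕ) : 𝓞 K) : K) := by
      simp
    rw [mixedEmbedding_apply_isReal, ← h, map_natCast]
    positivity

lemma exists_rayClass_eq_norm_ge [NeZero 𝔪] (c : RayClassGroup 𝔪) :
    ∃ 𝔟 : coprimeIdeals 𝔪, rayClass 𝔪 𝔟 = c ∧ 3 ≤ Ideal.absNorm (𝔟 : Ideal (𝓞 K)) := by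
  obtain ⟨𝔞, rfl⟩ := rayClass_surjective c
  let ν : 𝓞 K := ((1 + 2 * Ideal.absNorm 𝔪 : ℕ) : 𝓞 K)
  have hν : Good 𝔪 ν := good_natCast 2
  refine ⟨𝔞 * ⟨Ideal.span {ν}, hν.span_mem⟩, ?_, ?_⟩
  · rw [rayClass_mul, rayClass_eq_one_iff (𝔞 := ⟨Ideal.span {ν}, hν.span_mem⟩).2 ⟨ν, hν, rfl⟩,
      mul_one]
  · have h1 : Ideal.absNorm (𝔞 : Ideal (𝓞 K)) ≠ 0 :=
      Ideal.absNorm_ne_zero_iff_mem_nonZeroDivisors.2 (mem_nonZeroDivisors_of_ne_zero 𝔞.2.1)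
    have h2 : Ideal.absNorm 𝔪 ≠ 0 :=
      Ideal.absNorm_ne_zero_iff_mem_nonZeroDivisors.2 (mem_nonZeroDivisors_of_ne_zero (NeZero.ne 𝔪))
    rw [Submonoid.coe_mul, map_mul]
    change 3 ≤ _ * Ideal.absNorm (Ideal.span {((1 + 2 * Ideal.absNorm 𝔪 : ℕ) : 𝓞 K)})
    rw [Ideal.absNorm_span_natCast]
    have h3 : 1 + 2 * Ideal.absNorm 𝔪 ≤ (1 + 2 * Ideal.absNorm 𝔪) ^ finrank ℤ (𝓞 K) :=
      Nat.le_self_pow (by rw [RingOfIntegers.rank]; exact finrank_pos.ne') _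
    calc 3 ≤ 1 + 2 * Ideal.absNorm 𝔪 := by omega
      _ ≤ _ := h3
      _ ≤ _ := Nat.le_mul_of_pos_left _ (Nat.pos_of_ne_zero h1)

end RayClass

/-! ### Counting ideals in a narrow ray class -/

section RayCount

open MeasureTheory Module

set_option linter.unusedSectionVars false

open scoped Classical nonZeroDivisors
open NumberField NumberField.mixedEmbedding NumberField.InfinitePlace
open NumberField.mixedEmbedding.fundamentalCone
open NumberField.Units NumberField.Units.dirichletUnitTheorem

variable {K : Type*} [Field K] [NumberField K] {𝔪 : Ideal (𝓞 K)}

lemma norm_mixedEmbedding_int (α : 𝓞 K) :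
    mixedEmbedding.norm (mixedEmbedding K (α : K)) = Ideal.absNorm (Ideal.span {α}) := by
  rw [norm_eq_norm, Ideal.absNorm_span_singleton, ← Algebra.coe_norm_int]
  push_cast
  rw [Nat.cast_natAbs]
  simp

lemma smul_mem_posCone_iff {T : ℝ} (hT : 0 < T) (y : mixedSpace K) :
    T • y ∈ posCone K ↔ y ∈ posCone K := by
  simp [posCone, mul_pos_iff_of_pos_left hT, hT.ne']

lemma mixedWeight_smul_good (G : ℝ → ℝ) (η : logSpace K → ℝ) {α : 𝓞 K} (hα : Good 𝔪 α) {T : ℝ}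
    (hT : 0 < T) : mixedWeight G η (T⁻¹ • mixedEmbedding K (α : K)) =
      G (Real.log (Ideal.absNorm (Ideal.span {α})) - finrank ℚ K * Real.log T) *
        η (logMap (mixedEmbedding K (α : K))) := by
  have h1 := hα.mem_posCone
  have h0 := norm_ne_zero_of_mem_posCone h1
  rw [mixedWeight, Set.indicator_of_mem ((smul_mem_posCone_iff (inv_pos.2 hT) _).2 h1),
    logMap_real_smul h0 (inv_ne_zero hT.ne'), mixedEmbedding.norm_smul, abs_of_pos (inv_pos.2 hT),
    Real.log_mul (pow_ne_zero _ (inv_ne_zero hT.ne')) h0, Real.log_pow, Real.log_inv,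
    norm_mixedEmbedding_int]
  congr 2
  ring

/-- The lattice sum over the coset `{α ∈ 𝔟 : α ≡ 1 mod 𝔪}`, weighted by a function whose sum over
the good units is constant, counts the ideals in the class inverse to that of `𝔟`. -/
lemma latticeSum_eq_rayCount [NeZero 𝔪] {η : logSpace K → ℝ} {ω : ℝ} {G : ℝ → ℝ}
    (hG : HasCompactSupport G) (hη : HasCompactSupport η)
    (hω : ∀ x, ∑' u : goodUnits 𝔪, η (logEmbedding K (Additive.ofMul (u : (𝓞 K)ˣ)) + x) = ω)
    {𝔟 : coprimeIdeals 𝔪} {c : RayClassGroup 𝔪} (hc : c * rayClass 𝔪 𝔟 = 1)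
    (J : (FractionalIdeal (𝓞 K)⁰ K)ˣ)
    (hJ : (J : FractionalIdeal (𝓞 K)⁰ K) = ((𝔟 * 𝔪 : Ideal (𝓞 K)) : FractionalIdeal (𝓞 K)⁰ K))
    {α₀ : 𝓞 K} (hα₀ : α₀ ∈ (𝔟 : Ideal (𝓞 K))) (hα₀' : α₀ - 1 ∈ 𝔪) {T : ℝ} (hT : 0 < T) :
    latticeSum (fractionalIdealLatticeBasis K J) (mixedWeight G η) T (mixedEmbedding K (α₀ : K)) =
      ω * ∑' 𝔞 : {𝔞 : coprimeIdeals 𝔪 // rayClass 𝔪 𝔞 = c},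
        G (Real.log (Ideal.absNorm (𝔞.1 : Ideal (𝓞 K))) -
          (finrank ℚ K * Real.log T - Real.log (Ideal.absNorm (𝔟 : Ideal (𝓞 K))))) := by
  set L := Submodule.span ℤ (Set.range (fractionalIdealLatticeBasis K J)) with hL
  have hmemL : ∀ x : mixedSpace K, x ∈ L ↔ ∃ β : 𝓞 K, β ∈ (𝔟 * 𝔪 : Ideal (𝓞 K)) ∧
      mixedEmbedding K (β : K) = x := fun x => by
    rw [hL, mem_span_fractionalIdealLatticeBasis, hJ]
    constructor
    · rintro ⟨z, hz, rfl⟩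
      obtain ⟨β, hβ, rfl⟩ := (FractionalIdeal.mem_coeIdeal _).1 hz
      exact ⟨β, hβ, rfl⟩
    · rintro ⟨β, hβ, rfl⟩
      exact ⟨_, (FractionalIdeal.mem_coeIdeal _).2 ⟨β, hβ, rfl⟩, rfl⟩
  have hcop : ∀ β : 𝓞 K, β ∈ (𝔟 * 𝔪 : Ideal (𝓞 K)) ↔ β ∈ (𝔟 : Ideal (𝓞 K)) ∧ β ∈ 𝔪 := fun β => by
    rw [Ideal.mul_eq_inf_of_isCoprime 𝔟.2.2]
    exact Ideal.mem_inf
  have hgen : ∀ 𝔞 : {𝔞 : coprimeIdeals 𝔪 // rayClass 𝔪 𝔞 = c}, ∃ α : 𝓞 K, Good 𝔪 α ∧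
      ((𝔞.1 * 𝔟 : coprimeIdeals 𝔪) : Ideal (𝓞 K)) = Ideal.span {α} := fun 𝔞 =>
    rayClass_eq_one_iff.1 (by rw [rayClass_mul, 𝔞.2, hc])
  choose a ha ha' using hgen
  have hua : ∀ (𝔞 : {𝔞 : coprimeIdeals 𝔪 // rayClass 𝔪 𝔞 = c}) (u : goodUnits 𝔪),
      Good 𝔪 (((u : (𝓞 K)ˣ) : 𝓞 K) * a 𝔞) := fun 𝔞 u => Good.mul u.2 (ha 𝔞)
  have hmem : ∀ 𝔞, a 𝔞 ∈ (𝔟 : Ideal (𝓞 K)) := fun 𝔞 => by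
    have h1 : a 𝔞 ∈ Ideal.span {a 𝔞} := Ideal.mem_span_singleton_self _
    rw [← ha', Submonoid.coe_mul] at h1
    have hle : (𝔞.1 : Ideal (𝓞 K)) * 𝔟 ≤ 𝔟 := Ideal.mul_le_right
    exact hle h1
  -- the parametrisation of the relevant lattice points by pairs (ideal, unit)
  let g : {𝔞 : coprimeIdeals 𝔪 // rayClass 𝔪 𝔞 = c} × goodUnits 𝔪 → L := fun p =>
    ⟨mixedEmbedding K ((((p.2 : (𝓞 K)ˣ) : 𝓞 K) * a p.1 - α₀ : 𝓞 K) : K), (hmemL _).2 ⟨_,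
      (hcop _).2 ⟨Ideal.sub_mem _ (Ideal.mul_mem_left _ _ (hmem _)) hα₀, by
        have := 𝔪.sub_mem (hua p.1 p.2).sub_mem hα₀'
        rwa [sub_sub_sub_cancel_right] at this⟩, rfl⟩⟩
  have hgval : ∀ p, (g p : mixedSpace K) + mixedEmbedding K (α₀ : K)
      = mixedEmbedding K ((((p.2 : (𝓞 K)ˣ) : 𝓞 K) * a p.1 : 𝓞 K) : K) := fun p => by
    simp only [g]
    rw [← map_add]
    congr 1
    simp
  have hinj : Function.Injective g := by
    rintro ⟨𝔞, u⟩ ⟨𝔞', u'⟩ h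
    have h1 := hgval (𝔞, u)
    rw [h, hgval] at h1
    have h2 : ((u' : (𝓞 K)ˣ) : 𝓞 K) * a 𝔞' = ((u : (𝓞 K)ˣ) : 𝓞 K) * a 𝔞 :=
      RingOfIntegers.coe_injective (mixedEmbedding_injective K h1)
    have h3 : Ideal.span {a 𝔞'} = Ideal.span {a 𝔞} := by
      have := congrArg (fun x => Ideal.span {x}) h2
      simpa only [Ideal.span_singleton_mul_left_unit (Units.isUnit _)] using this
    have h4 : 𝔞' = 𝔞 := by
      rw [← ha', ← ha', Submonoid.coe_mul, Submonoid.coe_mul] at h3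
      exact Subtype.ext (Subtype.ext (mul_right_cancel₀ 𝔟.2.1 h3))
    subst h4
    have h5 := mul_right_cancel₀ (ha 𝔞').ne_zero h2
    rw [Prod.mk.injEq]
    exact ⟨rfl, Subtype.ext (Units.ext h5.symm)⟩
  let f : L → ℝ := fun v => mixedWeight G η (T⁻¹ • ((v : mixedSpace K) + mixedEmbedding K (α₀ : K)))
  have hsupp : Function.support f ⊆ Set.range g := by
    intro v hv
    have hv1 : (v : mixedSpace K) + mixedEmbedding K (α₀ : K) ∈ posCone K := by
      rw [← smul_mem_posCone_iff (inv_pos.2 hT)]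
      by_contra h
      exact hv (Set.indicator_of_notMem h _)
    obtain ⟨β, hβ, hβv⟩ := (hmemL _).1 v.2
    obtain ⟨hβ1, hβ2⟩ := (hcop β).1 hβ
    have hα : mixedEmbedding K ((β + α₀ : 𝓞 K) : K)
        = (v : mixedSpace K) + mixedEmbedding K (α₀ : K) := by
      rw [← hβv]; simp
    have hgood : Good 𝔪 (β + α₀) := by
      refine ⟨fun h => ?_, ?_, ?_⟩
      · rw [← hα, h] at hv1
        have := norm_ne_zero_of_mem_posCone hv1
        simp at this
      · rw [add_sub_assoc]
        exact 𝔪.add_mem hβ2 hα₀'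
      · intro w
        rw [hα]
        exact hv1.1 w
    have hb : β + α₀ ∈ (𝔟 : Ideal (𝓞 K)) := Ideal.add_mem _ hβ1 hα₀
    obtain ⟨𝔞, h𝔞⟩ := Ideal.dvd_iff_le.2 ((Ideal.span_singleton_le_iff_mem _).2 hb)
    let 𝔞' : coprimeIdeals 𝔪 := ⟨𝔞, mem_coprimeIdeals_of_mul_left (h𝔞 ▸ hgood.span_mem)⟩
    have hcls : rayClass 𝔪 𝔞' = c := by
      have h1 : rayClass 𝔪 (𝔞' * 𝔟) = 1 :=
        rayClass_eq_one_iff.2 ⟨β + α₀, hgood, by rw [h𝔞, mul_comm]; rfl⟩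
      rw [rayClass_mul] at h1
      exact mul_right_cancel (h1.trans hc.symm)
    have h2 := ha' ⟨𝔞', hcls⟩
    have h3 : Ideal.span {a ⟨𝔞', hcls⟩} = Ideal.span {β + α₀} := by
      rw [← h2, h𝔞, mul_comm]; rfl
    obtain ⟨u, hu⟩ := Ideal.span_singleton_eq_span_singleton.1 h3
    have hu' : u ∈ goodUnits 𝔪 := (ha ⟨𝔞', hcls⟩).of_mul (by rw [hu]; exact hgood)
    refine ⟨(⟨𝔞', hcls⟩, ⟨u, hu'⟩), Subtype.ext (add_right_cancel (b := mixedEmbedding K (α₀ : K)) ?_)⟩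
    rw [hgval, ← hα, ← hu, mul_comm]
  have hfin : Summable f := by
    obtain ⟨s, hs⟩ := latticeSum_finite (fractionalIdealLatticeBasis K J)
      (hasCompactSupport_mixedWeight hG hη) hT (mixedEmbedding K (α₀ : K)) 0
    exact summable_of_ne_finset_zero (s := s) fun v hv => hs _ (by simp) v hv
  have hval : ∀ p, f (g p) = G (Real.log (Ideal.absNorm (p.1.1 : Ideal (𝓞 K))) -
          (finrank ℚ K * Real.log T - Real.log (Ideal.absNorm (𝔟 : Ideal (𝓞 K))))) *
        η (logEmbedding K (Additive.ofMul (p.2 : (𝓞 K)ˣ)) +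
          logMap (mixedEmbedding K (a p.1 : K))) := fun p => by
    simp only [f]
    rw [hgval, mixedWeight_smul_good G η (hua p.1 p.2) hT]
    have h1 : Ideal.span {((p.2 : (𝓞 K)ˣ) : 𝓞 K) * a p.1} = (p.1.1 : Ideal (𝓞 K)) * 𝔟 := by
      rw [← Submonoid.coe_mul, ha', Ideal.span_singleton_mul_left_unit (Units.isUnit _)]
    have hN : ∀ 𝔡 : coprimeIdeals 𝔪, (Ideal.absNorm (𝔡 : Ideal (𝓞 K)) : ℝ) ≠ 0 := fun 𝔡 => by
      exact_mod_cast Ideal.absNorm_ne_zero_iff_mem_nonZeroDivisors.2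
        (mem_nonZeroDivisors_of_ne_zero 𝔡.2.1)
    have h2 : logMap (mixedEmbedding K ((((p.2 : (𝓞 K)ˣ) : 𝓞 K) * a p.1 : 𝓞 K) : K)) =
        logEmbedding K (Additive.ofMul (p.2 : (𝓞 K)ˣ)) + logMap (mixedEmbedding K (a p.1 : K)) := by
      have h3 : ((((p.2 : (𝓞 K)ˣ) : 𝓞 K) * a p.1 : 𝓞 K) : K)
          = (((p.2 : (𝓞 K)ˣ) : 𝓞 K) : K) * (a p.1 : K) := by simp
      rw [h3, map_mul, logMap_mul (by rw [norm_unit]; exact one_ne_zero)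
        (norm_ne_zero_of_mem_posCone (ha p.1).mem_posCone), logMap_eq_logEmbedding]
    rw [h1, h2, map_mul, Nat.cast_mul, Real.log_mul (hN _) (hN _)]
    congr 2
    ring
  have hfg : Summable fun p => f (g p) := hfin.comp_injective hinj
  change ∑' v : L, f v = _
  rw [← hinj.tsum_eq hsupp, hfg.tsum_prod, ← tsum_mul_left]
  refine tsum_congr fun 𝔞 => ?_
  simp only [hval]
  rw [tsum_mul_left, hω, mul_comm]

/-- The smoothed number of ideals of norm about `exp X` in a narrow ray class, with a main term
independent of the class and a power saving error term. -/
theorem exists_rayCount (𝔪 : Ideal (𝓞 K)) [NeZero 𝔪] : ∃ κ C : ℝ, 0 < κ ∧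
    ∀ (c : RayClassGroup 𝔪) (X : ℝ), -1 ≤ X →
      |∑' 𝔞 : {𝔞 : coprimeIdeals 𝔪 // rayClass 𝔪 𝔞 = c},
        stepBump (Real.log (Ideal.absNorm (𝔞.1 : Ideal (𝓞 K))) - X) - κ * Real.exp X|
          ≤ C * Real.exp (-X) := by
  obtain ⟨η, ω, hηc, hη, hη0, hη1, hω0, hω⟩ := exists_unit_partition (NeZero.ne 𝔪)
  have hφc := contDiff_mixedWeight hasCompactSupport_stepBump hη contDiff_stepBump hηc
  have hφ := hasCompactSupport_mixedWeight hasCompactSupport_stepBump hη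
  have hpos := integral_mixedWeight_pos hasCompactSupport_stepBump hη contDiff_stepBump hηc
    stepBump_nonneg hη0 (by rw [stepBump_zero]; exact one_pos) hη1
  set V : ℝ := volume.real (ZSpan.fundamentalDomain (latticeBasis K)) with hV
  have hVpos : 0 < V := by
    rw [hV, measureReal_def]
    exact ENNReal.toReal_pos (ZSpan.measure_fundamentalDomain_ne_zero _)
      (ZSpan.fundamentalDomain_isBounded _).measure_lt_top.ne
  have hN𝔪 : (0 : ℝ) < Ideal.absNorm 𝔪 := by
    exact_mod_cast Nat.pos_of_ne_zero (Ideal.absNorm_ne_zero_iff_mem_nonZeroDivisors.2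
        (mem_nonZeroDivisors_of_ne_zero (NeZero.ne 𝔪)))
  set I := ∫ y, mixedWeight stepBump η y with hI
  let κ : ℝ := I / (ω * Ideal.absNorm 𝔪 * V)
  have key : ∀ c : RayClassGroup 𝔪, ∃ C : ℝ, ∀ X : ℝ, -1 ≤ X →
      |∑' 𝔞 : {𝔞 : coprimeIdeals 𝔪 // rayClass 𝔪 𝔞 = c},
        stepBump (Real.log (Ideal.absNorm (𝔞.1 : Ideal (𝓞 K))) - X) - κ * Real.exp X|
          ≤ C * Real.exp (-X) := by
    intro c
    obtain ⟨𝔟, h𝔟, hN𝔟⟩ := exists_rayClass_eq_norm_ge c⁻¹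
    have hc : c * rayClass 𝔪 𝔟 = 1 := by rw [h𝔟, mul_inv_cancel]
    obtain ⟨α₀, hα₀, hg⟩ := exists_good_mem 𝔟.2
    have hne : (𝔟 * 𝔪 : Ideal (𝓞 K)) ∈ (Ideal (𝓞 K))⁰ :=
      mem_nonZeroDivisors_of_ne_zero (mul_ne_zero 𝔟.2.1 (NeZero.ne 𝔪))
    let J : (FractionalIdeal (𝓞 K)⁰ K)ˣ := FractionalIdeal.mk0 K ⟨_, hne⟩
    have hJ : (J : FractionalIdeal (𝓞 K)⁰ K)
        = ((𝔟 * 𝔪 : Ideal (𝓞 K)) : FractionalIdeal (𝓞 K)⁰ K) := FractionalIdeal.coe_mk0 K _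
    obtain ⟨C, hC⟩ := exists_latticeSum_sub_integral_le (fractionalIdealLatticeBasis K J) volume
      (finrank ℚ K) hφc hφ
    have hcard : Fintype.card (Module.Free.ChooseBasisIndex ℤ J) = finrank ℚ K := by
      rw [← finrank_eq_card_chooseBasisIndex, fractionalIdeal_rank, RingOfIntegers.rank]
    have hvol : volume.real (ZSpan.fundamentalDomain (fractionalIdealLatticeBasis K J))
        = Ideal.absNorm (𝔟 : Ideal (𝓞 K)) * Ideal.absNorm 𝔪 * V := by
      rw [measureReal_def, volume_fundamentalDomain_fractionalIdealLatticeBasis, hJ,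
        FractionalIdeal.coeIdeal_absNorm, ENNReal.toReal_mul, ← measureReal_def,
        ENNReal.toReal_ofReal (by positivity), map_mul]
      push_cast
      rfl
    rw [hcard, hvol] at hC
    set B : ℝ := (Ideal.absNorm (𝔟 : Ideal (𝓞 K)) : ℝ) with hB
    have hB3 : (3 : ℝ) ≤ B := by rw [hB]; exact_mod_cast hN𝔟
    have hB0 : 0 < B := by linarith
    refine ⟨|C| / (ω * B), fun X hX => ?_⟩
    have hn : (finrank ℚ K : ℝ) ≠ 0 := by exact_mod_cast finrank_pos.ne'
    have hn0 : (0 : ℝ) < finrank ℚ K := by exact_mod_cast finrank_pos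
    have hlog3 : 1 ≤ Real.log B := by
      rw [Real.le_log_iff_exp_le hB0]
      have := Real.exp_one_lt_d9
      linarith
    let T : ℝ := Real.exp ((X + Real.log B) / finrank ℚ K)
    have hT0 : 0 < T := Real.exp_pos _
    have hT1 : 1 ≤ T := Real.one_le_exp (div_nonneg (by linarith) hn0.le)
    have hlogT : finrank ℚ K * Real.log T - Real.log B = X := by
      simp only [T]
      rw [Real.log_exp]
      field_simp
      ring
    have hTn : T ^ finrank ℚ K = B * Real.exp X := by
      simp only [T]
      rw [← Real.exp_nat_mul, mul_div_cancel₀ _ hn, Real.exp_add, Real.exp_log hB0, mul_comm]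
    have h1 := hC T hT1 (mixedEmbedding K (α₀ : K))
    rw [latticeSum_eq_rayCount hasCompactSupport_stepBump hη hω hc J hJ hα₀ hg.sub_mem hT0, ← hB,
      hlogT, inv_pow, hTn] at h1
    set S := ∑' 𝔞 : {𝔞 : coprimeIdeals 𝔪 // rayClass 𝔪 𝔞 = c},
        stepBump (Real.log (Ideal.absNorm (𝔞.1 : Ideal (𝓞 K))) - X)
    have h2 : S - κ * Real.exp X
        = ω⁻¹ * (ω * S - B * Real.exp X * I / (B * Ideal.absNorm 𝔪 * V)) := by
      simp only [κ]
      field_simp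
    rw [h2, abs_mul, abs_of_pos (inv_pos.2 hω0)]
    calc _ ≤ ω⁻¹ * (C * (B * Real.exp X)⁻¹) := by gcongr
      _ ≤ ω⁻¹ * (|C| * (B * Real.exp X)⁻¹) := by gcongr; exact le_abs_self C
      _ = _ := by rw [Real.exp_neg]; field_simp
  choose C hC using key
  refine ⟨κ, ∑ c, |C c|, by positivity, fun c X hX => (hC c X hX).trans ?_⟩
  gcongr
  exact (le_abs_self _).trans
    (Finset.single_le_sum (f := fun c => |C c|) (fun _ _ => abs_nonneg _) (Finset.mem_univ c))

end RayCount

/-! ### Sums over ideals of given norm -/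

section ClassSums

open MeasureTheory Module

set_option linter.unusedSectionVars false

open scoped Classical nonZeroDivisors
open NumberField Filter Topology UniqueFactorizationMonoid

variable {K : Type*} [Field K] [NumberField K] {𝔪 : Ideal (𝓞 K)}

lemma absNorm_pos_of_mem (𝔞 : coprimeIdeals 𝔪) : 0 < Ideal.absNorm (𝔞 : Ideal (𝓞 K)) :=
  Nat.pos_of_ne_zero (Ideal.absNorm_ne_zero_iff_mem_nonZeroDivisors.2
    (mem_nonZeroDivisors_of_ne_zero 𝔞.2.1))

lemma finite_normFiber (𝔪 : Ideal (𝓞 K)) (n : ℕ) :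
    {𝔞 : coprimeIdeals 𝔪 | Ideal.absNorm (𝔞 : Ideal (𝓞 K)) = n}.Finite :=
  (Ideal.finite_setOfPred_absNorm_eq n).preimage Subtype.val_injective.injOn

/-- The ideals of norm `n` prime to `𝔪`. -/
noncomputable def normFiber (𝔪 : Ideal (𝓞 K)) (n : ℕ) : Finset (coprimeIdeals 𝔪) :=
  (finite_normFiber 𝔪 n).toFinset

lemma mem_normFiber {n : ℕ} {𝔞 : coprimeIdeals 𝔪} :
    𝔞 ∈ normFiber 𝔪 n ↔ Ideal.absNorm (𝔞 : Ideal (𝓞 K)) = n := by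
  simp [normFiber]

lemma tsum_fiber (f : coprimeIdeals 𝔪 → ℝ) (n : ℕ) :
    ∑' 𝔞 : {𝔞 : coprimeIdeals 𝔪 // Ideal.absNorm (𝔞 : Ideal (𝓞 K)) = n}, f 𝔞.1
      = ∑ 𝔞 ∈ normFiber 𝔪 n, f 𝔞 := by
  rw [← Finset.tsum_subtype]
  exact (Equiv.subtypeEquivRight fun 𝔞 => mem_normFiber.symm).tsum_eq
    (fun 𝔞 : {𝔞 // 𝔞 ∈ normFiber 𝔪 n} => f 𝔞.1)

lemma finite_fiber (n : ℕ) :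
    Finite {𝔞 : coprimeIdeals 𝔪 // Ideal.absNorm (𝔞 : Ideal (𝓞 K)) = n} :=
  finite_normFiber 𝔪 n

lemma summable_iff_fiber {f : coprimeIdeals 𝔪 → ℝ} (hf : ∀ 𝔞, 0 ≤ f 𝔞) :
    Summable f ↔ Summable fun n => ∑ 𝔞 ∈ normFiber 𝔪 n, f 𝔞 := by
  rw [← (Equiv.sigmaFiberEquiv
    fun 𝔞 : coprimeIdeals 𝔪 => Ideal.absNorm (𝔞 : Ideal (𝓞 K))).summable_iff,
    summable_sigma_of_nonneg (f := f ∘ _) fun _ => hf _]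
  have h : ∀ n, Summable fun y : {𝔞 : coprimeIdeals 𝔪 // Ideal.absNorm (𝔞 : Ideal (𝓞 K)) = n} =>
      f y.1 := fun n => by
    have := finite_fiber (𝔪 := 𝔪) n
    exact Summable.of_finite
  simp only [← tsum_fiber]
  exact ⟨fun h => h.2, fun h' => ⟨h, h'⟩⟩

lemma tsum_eq_tsum_fiber {f : coprimeIdeals 𝔪 → ℝ} (hf : Summable f) :
    ∑' 𝔞, f 𝔞 = ∑' n, ∑ 𝔞 ∈ normFiber 𝔪 n, f 𝔞 := by
  simp only [← tsum_fiber]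
  rw [← (Equiv.sigmaFiberEquiv
    fun 𝔞 : coprimeIdeals 𝔪 => Ideal.absNorm (𝔞 : Ideal (𝓞 K))).tsum_eq]
  exact ((Equiv.sigmaFiberEquiv
    fun 𝔞 : coprimeIdeals 𝔪 => Ideal.absNorm (𝔞 : Ideal (𝓞 K))).summable_iff.2 hf).tsum_sigma

lemma summable_card_norm_div (K : Type*) [Field K] [NumberField K] {s : ℝ} (hs : 1 < s) :
    Summable fun n : ℕ => (Nat.card {I : Ideal (𝓞 K) // Ideal.absNorm I = n} : ℝ) / (n : ℝ) ^ s := by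
  have hlim : Tendsto (fun n : ℕ => (∑ k ∈ Finset.Icc 1 n,
      (Nat.card {I : Ideal (𝓞 K) // Ideal.absNorm I = k} : ℝ)) / n) atTop
      (𝓝 (dedekindZeta_residue K)) := by
    refine ((Ideal.tendsto_norm_le_div_atTop₀ K).comp tendsto_natCast_atTop_atTop).congr fun n ↦ ?_
    simp only [Function.comp_apply, Nat.cast_le, ← Nat.cast_sum]
    congr
    rw [← add_left_inj 1, ← Ideal.card_norm_le_eq_card_norm_le_add_one,
      show Finset.Icc 1 n = Finset.Ioc 0 n from Finset.Icc_succ_left_eq_Ioc _ _,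
      show 1 = Nat.card {I : Ideal (𝓞 K) // Ideal.absNorm I = 0} by
        simp [Ideal.absNorm_eq_zero_iff],
      Finset.sum_Ioc_add_eq_sum_Icc (n.zero_le),
      ← Finset.card_preimage_eq_sum_card_image_eq
        (fun k _ ↦ Ideal.finite_setOfPred_absNorm_eq k)]
    simp [Set.coe_eq_subtype]
  have hO : (fun n : ℕ => ∑ k ∈ Finset.Icc 1 n,
      (Nat.card {I : Ideal (𝓞 K) // Ideal.absNorm I = k} : ℝ)) =O[atTop]
      fun n : ℕ => (n : ℝ) ^ (1 : ℝ) := by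
    simp only [Real.rpow_one]
    refine Asymptotics.isBigO_of_div_tendsto_nhds ?_ _ hlim
    filter_upwards [eventually_ne_atTop 0] with n hn h
    exact absurd (by exact_mod_cast h) hn
  have h := (LSeriesSummable_of_sum_norm_bigO_and_nonneg (s := (s : ℂ)) hO
    (fun _ => Nat.cast_nonneg _) zero_le_one (by simpa using hs)).norm
  refine h.congr fun n => ?_
  rw [LSeries.norm_term_eq]
  split_ifs with hn
  · subst hn
    simp [Real.zero_rpow (by linarith : s ≠ 0)]
  · simp

lemma summable_norm_rpow (𝔪 : Ideal (𝓞 K)) {s : ℝ} (hs : 1 < s) :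
    Summable fun 𝔞 : coprimeIdeals 𝔪 => ((Ideal.absNorm (𝔞 : Ideal (𝓞 K)) : ℝ) ^ s)⁻¹ := by
  rw [summable_iff_fiber fun 𝔞 => by positivity]
  refine (summable_card_norm_div K hs).of_nonneg_of_le
    (fun n => Finset.sum_nonneg fun _ _ => by positivity) fun n => ?_
  rw [Finset.sum_congr rfl fun 𝔞 h𝔞 => by rw [mem_normFiber.1 h𝔞], Finset.sum_const, nsmul_eq_mul,
    div_eq_mul_inv]
  gcongr
  have hfin : Finite {I : Ideal (𝓞 K) // Ideal.absNorm I = n} :=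
    Ideal.finite_setOfPred_absNorm_eq n
  rw [← Nat.card_eq_finsetCard]
  exact Nat.card_le_card_of_injective
    (fun 𝔞 : {𝔞 // 𝔞 ∈ normFiber 𝔪 n} => (⟨𝔞.1.1, mem_normFiber.1 𝔞.2⟩ :
      {I : Ideal (𝓞 K) // Ideal.absNorm I = n}))
    fun 𝔞 𝔟 h => Subtype.ext (Subtype.ext (Subtype.mk.inj h))

/-- The sum of `f` over the ideals of norm `n` in the class `c`, as an arithmetic function. -/
noncomputable def classSum (f : coprimeIdeals 𝔪 → ℝ) (c : Additive (RayClassGroup 𝔪)) :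
    ArithmeticFunction ℝ :=
  ⟨fun n => ∑ 𝔞 ∈ normFiber 𝔪 n, if Additive.ofMul (rayClass 𝔪 𝔞) = c then f 𝔞 else 0, by
    refine Finset.sum_eq_zero fun 𝔞 h => ?_
    exact absurd (mem_normFiber.1 h) (absNorm_pos_of_mem 𝔞).ne'⟩

lemma classSum_apply (f : coprimeIdeals 𝔪 → ℝ) (c : Additive (RayClassGroup 𝔪)) (n : ℕ) :
    classSum f c n = ∑ 𝔞 ∈ normFiber 𝔪 n,
      if Additive.ofMul (rayClass 𝔪 𝔞) = c then f 𝔞 else 0 := rfl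

lemma classSum_nonneg {f : coprimeIdeals 𝔪 → ℝ} (hf : ∀ 𝔞, 0 ≤ f 𝔞)
    (c : Additive (RayClassGroup 𝔪)) (n : ℕ) : 0 ≤ classSum f c n :=
  Finset.sum_nonneg fun 𝔞 _ => by split_ifs; exacts [hf 𝔞, le_rfl]

lemma classSum_mul_apply (f : coprimeIdeals 𝔪 → ℝ) (h : ℕ → ℝ) (c : Additive (RayClassGroup 𝔪))
    (n : ℕ) : classSum f c n * h n = classSum (fun 𝔞 =>
      f 𝔞 * h (Ideal.absNorm (𝔞 : Ideal (𝓞 K)))) c n := by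
  rw [classSum_apply, classSum_apply, Finset.sum_mul]
  refine Finset.sum_congr rfl fun 𝔞 h𝔞 => ?_
  rw [mem_normFiber.1 h𝔞]
  split_ifs <;> simp

/-- The von Mangoldt function on ideals. -/
noncomputable def idealVonMangoldt (𝔡 : Ideal (𝓞 K)) : ℝ :=
  if IsPrimePow 𝔡 then ∑ 𝔭 ∈ (normalizedFactors 𝔡).toFinset, Real.log (Ideal.absNorm 𝔭) else 0

lemma idealVonMangoldt_nonneg (𝔡 : Ideal (𝓞 K)) : 0 ≤ idealVonMangoldt 𝔡 := by
  rw [idealVonMangoldt]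
  split_ifs
  · exact Finset.sum_nonneg fun _ _ => Real.log_natCast_nonneg _
  · exact le_rfl

lemma normalizedFactors_prime_pow {𝔭 : Ideal (𝓞 K)} (h𝔭 : Prime 𝔭) (k : ℕ) :
    normalizedFactors (𝔭 ^ k) = Multiset.replicate k 𝔭 := by
  rw [normalizedFactors_pow, normalizedFactors_irreducible h𝔭.irreducible, normalize_eq,
    Multiset.nsmul_singleton]

lemma idealVonMangoldt_prime_pow {𝔭 : Ideal (𝓞 K)} (h𝔭 : Prime 𝔭) {k : ℕ} (hk : k ≠ 0) :
    idealVonMangoldt (𝔭 ^ k) = Real.log (Ideal.absNorm 𝔭) := by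
  rw [idealVonMangoldt, if_pos (h𝔭.isPrimePow.pow hk), normalizedFactors_prime_pow h𝔭,
    Multiset.toFinset_replicate, if_neg hk, Finset.sum_singleton]

lemma sum_idealVonMangoldt {𝔞 : Ideal (𝓞 K)} (h𝔞 : 𝔞 ≠ 0) (D : Finset (Ideal (𝓞 K)))
    (hD : ∀ 𝔡, 𝔡 ∈ D ↔ 𝔡 ∣ 𝔞) : ∑ 𝔡 ∈ D, idealVonMangoldt 𝔡 = Real.log (Ideal.absNorm 𝔞) := by
  have hlog : Real.log (Ideal.absNorm 𝔞) = ∑ 𝔭 ∈ (normalizedFactors 𝔞).toFinset,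
      ∑ k ∈ Finset.Icc 1 ((normalizedFactors 𝔞).count 𝔭), Real.log (Ideal.absNorm 𝔭) := by
    conv_lhs => rw [← Ideal.prod_normalizedFactors_eq_self h𝔞, Finset.prod_multiset_count, map_prod]
    push_cast
    rw [Real.log_prod]
    · refine Finset.sum_congr rfl fun 𝔭 _ => ?_
      rw [map_pow]
      push_cast
      rw [Real.log_pow, Finset.sum_const, Nat.card_Icc, nsmul_eq_mul, Nat.add_sub_cancel]
    · intro 𝔭 h𝔭
      have hp := prime_of_normalized_factor 𝔭 (Multiset.mem_toFinset.1 h𝔭)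
      exact_mod_cast Ideal.absNorm_ne_zero_iff_mem_nonZeroDivisors.2
        (mem_nonZeroDivisors_of_ne_zero (pow_ne_zero _ hp.ne_zero))
  rw [hlog, Finset.sum_sigma']
  symm
  have hdvd : ∀ {𝔭 : Ideal (𝓞 K)} (_ : Prime 𝔭) (k : ℕ),
      𝔭 ^ k ∣ 𝔞 ↔ k ≤ (normalizedFactors 𝔞).count 𝔭 := fun h𝔭 k => by
    rw [dvd_iff_normalizedFactors_le_normalizedFactors (pow_ne_zero _ h𝔭.ne_zero) h𝔞,
      normalizedFactors_prime_pow h𝔭, Multiset.le_count_iff_replicate_le]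
  refine Finset.sum_of_injOn (fun p => p.1 ^ p.2) ?_ ?_ ?_ ?_
  · rintro ⟨𝔭, k⟩ h ⟨𝔮, l⟩ h' heq
    simp only [Finset.coe_sigma, Set.mem_sigma_iff, Finset.mem_coe, Multiset.mem_toFinset,
      Finset.mem_Icc] at h h'
    have h1 := congrArg normalizedFactors heq
    simp only at h1
    rw [normalizedFactors_prime_pow (prime_of_normalized_factor _ h.1),
      normalizedFactors_prime_pow (prime_of_normalized_factor _ h'.1)] at h1
    have h2 : k = l := by simpa using congrArg Multiset.card h1
    subst h2
    have h3 : 𝔭 = 𝔮 := Multiset.eq_of_mem_replicate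
      (h1 ▸ Multiset.mem_replicate.2 ⟨by omega, rfl⟩ : 𝔭 ∈ Multiset.replicate k 𝔮)
    subst h3
    rfl
  · rintro ⟨𝔭, k⟩ h
    simp only [Finset.coe_sigma, Set.mem_sigma_iff, Finset.mem_coe, Multiset.mem_toFinset,
      Finset.mem_Icc] at h
    exact (hD _).2 ((hdvd (prime_of_normalized_factor _ h.1) k).2 h.2.2)
  · intro 𝔡 h𝔡 hn
    rw [idealVonMangoldt, if_neg]
    rintro ⟨𝔭, k, h𝔭, hk, rfl⟩
    have hc := (hdvd h𝔭 k).1 ((hD _).1 h𝔡)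
    refine hn ⟨⟨𝔭, k⟩, ?_, rfl⟩
    simp only [Finset.coe_sigma, Set.mem_sigma_iff, Finset.mem_coe, Multiset.mem_toFinset,
      Finset.mem_Icc]
    exact ⟨Multiset.count_pos.1 (lt_of_lt_of_le hk hc), hk, hc⟩
  · rintro ⟨𝔭, k⟩ h
    simp only [Finset.mem_sigma, Multiset.mem_toFinset, Finset.mem_Icc] at h
    exact (idealVonMangoldt_prime_pow (prime_of_normalized_factor _ h.1)
      (Nat.one_le_iff_ne_zero.1 h.2.1)).symm

/-- The factorisations of the ideals of norm `n` into two factors. -/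
noncomputable def normPairs (𝔪 : Ideal (𝓞 K)) (n : ℕ) : Finset (coprimeIdeals 𝔪 × coprimeIdeals 𝔪) :=
  (((Finset.range (n + 1)).biUnion (normFiber 𝔪)) ×ˢ
    ((Finset.range (n + 1)).biUnion (normFiber 𝔪))).filter fun p =>
      Ideal.absNorm (p.1 : Ideal (𝓞 K)) * Ideal.absNorm (p.2 : Ideal (𝓞 K)) = n

lemma mem_normPairs {n : ℕ} {p : coprimeIdeals 𝔪 × coprimeIdeals 𝔪} : p ∈ normPairs 𝔪 n ↔
    Ideal.absNorm (p.1 : Ideal (𝓞 K)) * Ideal.absNorm (p.2 : Ideal (𝓞 K)) = n := by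
  simp only [normPairs, Finset.mem_filter, Finset.mem_product, Finset.mem_biUnion, Finset.mem_range,
    mem_normFiber, exists_eq_right', and_iff_right_iff_imp]
  rintro rfl
  exact ⟨Nat.lt_succ_of_le (Nat.le_mul_of_pos_right _ (absNorm_pos_of_mem _)),
    Nat.lt_succ_of_le (Nat.le_mul_of_pos_left _ (absNorm_pos_of_mem _))⟩

lemma sum_classSum_mul [NeZero 𝔪] (f : coprimeIdeals 𝔪 → ℝ) (c : Additive (RayClassGroup 𝔪))
    (n : ℕ) : ∑ c', (classSum f c' * classSum (fun _ => 1) (c - c')) n =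
      ∑ 𝔞 ∈ normFiber 𝔪 n, if Additive.ofMul (rayClass 𝔪 𝔞) = c then
        ∑ p ∈ normPairs 𝔪 n with p.1 * p.2 = 𝔞, f p.1 else 0 := by
  let F : coprimeIdeals 𝔪 × coprimeIdeals 𝔪 → ℝ := fun p =>
    if Additive.ofMul (rayClass 𝔪 (p.1 * p.2)) = c then f p.1 else 0
  trans ∑ p ∈ normPairs 𝔪 n, F p
  · simp only [ArithmeticFunction.mul_apply]
    rw [Finset.sum_comm, ← Finset.sum_fiberwise_of_maps_to (s := normPairs 𝔪 n)
      (t := n.divisorsAntidiagonal) (g := fun p => (Ideal.absNorm (p.1 : Ideal (𝓞 K)),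
        Ideal.absNorm (p.2 : Ideal (𝓞 K))))]
    · refine Finset.sum_congr rfl fun x hx => ?_
      have hx' := (Nat.mem_divisorsAntidiagonal.1 hx).1
      have hfib : (normPairs 𝔪 n).filter (fun p => (Ideal.absNorm (p.1 : Ideal (𝓞 K)),
          Ideal.absNorm (p.2 : Ideal (𝓞 K))) = x) = normFiber 𝔪 x.1 ×ˢ normFiber 𝔪 x.2 := by
        ext p
        simp only [Finset.mem_filter, mem_normPairs, Finset.mem_product, mem_normFiber,
          Prod.ext_iff]
        exact ⟨fun h => h.2, fun h => ⟨by rw [h.1, h.2, hx'], h⟩⟩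
      rw [hfib]
      simp only [classSum_apply, Finset.sum_mul_sum, Finset.sum_product]
      rw [Finset.sum_comm]
      refine Finset.sum_congr rfl fun 𝔡 _ => ?_
      rw [Finset.sum_comm]
      refine Finset.sum_congr rfl fun 𝔢 _ => ?_
      rw [Finset.sum_eq_single (Additive.ofMul (rayClass 𝔪 𝔡))]
      · simp only [if_true, F, rayClass_mul, ofMul_mul, eq_sub_iff_add_eq, mul_ite, mul_one,
          mul_zero]
        rw [add_comm]
      · intro c' _ hc'
        rw [if_neg (Ne.symm hc'), zero_mul]
      · intro h
        exact absurd (Finset.mem_univ _) h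
    · intro p hp
      rw [Nat.mem_divisorsAntidiagonal]
      have h := mem_normPairs.1 hp
      exact ⟨h, by rw [← h]; exact (mul_pos (absNorm_pos_of_mem _) (absNorm_pos_of_mem _)).ne'⟩
  · rw [← Finset.sum_fiberwise_of_maps_to (s := normPairs 𝔪 n) (t := normFiber 𝔪 n)
      (g := fun p => p.1 * p.2)]
    · refine Finset.sum_congr rfl fun 𝔞 _ => ?_
      have h1 : ∀ p ∈ (normPairs 𝔪 n).filter (fun p => p.1 * p.2 = 𝔞),
          F p = if Additive.ofMul (rayClass 𝔪 𝔞) = c then f p.1 else 0 := fun p hp => by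
        simp only [F, (Finset.mem_filter.1 hp).2]
      rw [Finset.sum_congr rfl h1]
      split_ifs
      · rfl
      · exact Finset.sum_const_zero
    · intro p hp
      rw [mem_normFiber, Submonoid.coe_mul, map_mul]
      exact mem_normPairs.1 hp

lemma sum_normPairs_idealVonMangoldt {n : ℕ} {𝔞 : coprimeIdeals 𝔪} (h𝔞 : 𝔞 ∈ normFiber 𝔪 n) :
    ∑ p ∈ normPairs 𝔪 n with p.1 * p.2 = 𝔞, idealVonMangoldt (p.1 : Ideal (𝓞 K))
      = Real.log (Ideal.absNorm (𝔞 : Ideal (𝓞 K))) := by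
  rw [← sum_idealVonMangoldt (coprimeIdeals_ne_bot 𝔞)
    (((normPairs 𝔪 n).filter fun p => p.1 * p.2 = 𝔞).image fun p => (p.1 : Ideal (𝓞 K))),
    Finset.sum_image]
  · rintro ⟨p, q⟩ hp ⟨p', q'⟩ hp' h
    have h1 : p = p' := Subtype.ext h
    subst h1
    have h2 := (Finset.mem_filter.1 hp).2
    have h3 := (Finset.mem_filter.1 hp').2
    have h4 := congrArg Subtype.val (h2.trans h3.symm)
    have h5 : q = q' := Subtype.ext (mul_left_cancel₀ p.2.1 h4)
    rw [h5]
  · intro 𝔡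
    simp only [Finset.mem_image, Finset.mem_filter]
    constructor
    · rintro ⟨p, ⟨_, rfl⟩, rfl⟩
      exact ⟨p.2, rfl⟩
    · rintro ⟨𝔢, h𝔢⟩
      have h1 : 𝔡 * 𝔢 ∈ coprimeIdeals 𝔪 := h𝔢 ▸ 𝔞.2
      have h2 : 𝔢 * 𝔡 ∈ coprimeIdeals 𝔪 := mul_comm 𝔡 𝔢 ▸ h1
      refine ⟨(⟨𝔡, mem_coprimeIdeals_of_mul_left h2⟩, ⟨𝔢, mem_coprimeIdeals_of_mul_left h1⟩),
        ⟨?_, Subtype.ext h𝔢.symm⟩, rfl⟩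
      rw [mem_normPairs, ← mem_normFiber.1 h𝔞, h𝔢, map_mul]

end ClassSums

/-! ### Primes in narrow ray classes -/

section PrimesInClasses

open MeasureTheory Module

set_option linter.unusedSectionVars false

open scoped Classical nonZeroDivisors
open NumberField Filter Topology UniqueFactorizationMonoid

variable {K : Type*} [Field K] [NumberField K] {𝔪 : Ideal (𝓞 K)}

lemma exists_prime_mem (𝔪 : Ideal (𝓞 K)) [NeZero 𝔪] :
    ∃ 𝔭 : coprimeIdeals 𝔪, Prime (𝔭 : Ideal (𝓞 K)) := by
  obtain ⟨𝔟, -, h𝔟⟩ := exists_rayClass_eq_norm_ge (1 : RayClassGroup 𝔪)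
  have hne : (𝔟 : Ideal (𝓞 K)) ≠ ⊤ := fun h => by
    rw [h, Ideal.absNorm_top] at h𝔟
    omega
  obtain ⟨𝔭, h𝔭, hle⟩ := Ideal.exists_le_maximal _ hne
  obtain ⟨𝔠, h𝔠⟩ := Ideal.dvd_iff_le.2 hle
  have hmem : 𝔭 ∈ coprimeIdeals 𝔪 := by
    refine mem_coprimeIdeals_of_mul_left (𝔞 := 𝔠) ?_
    rw [mul_comm, ← h𝔠]
    exact 𝔟.2
  exact ⟨⟨𝔭, hmem⟩, Ideal.prime_of_isPrime hmem.1 h𝔭.isPrime⟩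

lemma two_le_absNorm {𝔭 : coprimeIdeals 𝔪} (h𝔭 : Prime (𝔭 : Ideal (𝓞 K))) :
    2 ≤ Ideal.absNorm (𝔭 : Ideal (𝓞 K)) := by
  have h1 := absNorm_pos_of_mem 𝔭
  have h2 : Ideal.absNorm (𝔭 : Ideal (𝓞 K)) ≠ 1 := fun h => by
    rw [Ideal.absNorm_eq_one_iff] at h
    exact h𝔭.not_isUnit (Ideal.isUnit_iff.2 h)
  omega

lemma normFiber_one : normFiber 𝔪 1 = {1} := by
  ext 𝔞
  rw [mem_normFiber, Ideal.absNorm_eq_one_iff, Finset.mem_singleton, ← Ideal.one_eq_top]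
  exact ⟨fun h => Subtype.ext h, fun h => by rw [h]; rfl⟩

lemma summable_classSum_one [NeZero 𝔪] (c : Additive (RayClassGroup 𝔪)) {s : ℝ} (hs : 1 < s) :
    Summable fun n : ℕ => classSum (𝔪 := 𝔪) (fun _ => 1) c n / (n : ℝ) ^ s := by
  refine ((summable_iff_fiber fun 𝔞 => by positivity).1 (summable_norm_rpow 𝔪 hs)).of_nonneg_of_le
    (fun n => div_nonneg (classSum_nonneg (fun _ => zero_le_one) c n) (by positivity)) fun n => ?_
  rw [classSum_apply, div_eq_mul_inv, Finset.sum_mul]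
  refine Finset.sum_le_sum fun 𝔞 h𝔞 => ?_
  rw [mem_normFiber.1 h𝔞]
  split_ifs
  · rw [one_mul]
  · rw [zero_mul]; positivity

lemma tsum_classSum_mul_stepBump (c : Additive (RayClassGroup 𝔪)) (X : ℝ) :
    ∑' n : ℕ, classSum (𝔪 := 𝔪) (fun _ => 1) c n * stepBump (Real.log n - X) =
      ∑' 𝔞 : {𝔞 : coprimeIdeals 𝔪 // rayClass 𝔪 𝔞 = c.toMul},
        stepBump (Real.log (Ideal.absNorm (𝔞.1 : Ideal (𝓞 K))) - X) := by
  let φ : coprimeIdeals 𝔪 → ℝ := fun 𝔞 => if Additive.ofMul (rayClass 𝔪 𝔞) = c then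
    stepBump (Real.log (Ideal.absNorm (𝔞 : Ideal (𝓞 K))) - X) else 0
  have hφ : Summable φ := by
    let s := (Finset.range (⌊Real.exp (X + 1)⌋₊ + 1)).biUnion (normFiber 𝔪)
    refine summable_of_ne_finset_zero (s := s) fun 𝔞 h𝔞 => ?_
    simp only [φ]
    split_ifs
    · refine isWeight_stepBump.supp _ ?_
      have h0 : (0 : ℝ) < Ideal.absNorm (𝔞 : Ideal (𝓞 K)) := by
        exact_mod_cast absNorm_pos_of_mem 𝔞
      have h1 : ⌊Real.exp (X + 1)⌋₊ < Ideal.absNorm (𝔞 : Ideal (𝓞 K)) := by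
        by_contra h
        exact h𝔞 (Finset.mem_biUnion.2
          ⟨_, Finset.mem_range.2 (by omega), mem_normFiber.2 rfl⟩)
      have h2 := (Nat.floor_lt (Real.exp_pos _).le).1 h1
      have h3 := (Real.lt_log_iff_exp_lt h0).2 h2
      exact lt_of_lt_of_le (by linarith) (le_abs_self _)
    · rfl
  have h1 : ∑' 𝔞 : {𝔞 : coprimeIdeals 𝔪 // rayClass 𝔪 𝔞 = c.toMul},
      stepBump (Real.log (Ideal.absNorm (𝔞.1 : Ideal (𝓞 K))) - X) = ∑' 𝔞, φ 𝔞 := by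
    refine (tsum_subtype {𝔞 : coprimeIdeals 𝔪 | rayClass 𝔪 𝔞 = c.toMul} fun 𝔞 =>
      stepBump (Real.log (Ideal.absNorm (𝔞 : Ideal (𝓞 K))) - X)).trans (tsum_congr fun 𝔞 => ?_)
    rw [Set.indicator_apply]
    rfl
  rw [h1, tsum_eq_tsum_fiber hφ]
  refine tsum_congr fun n => ?_
  rw [classSum_mul_apply _ (fun n => stepBump (Real.log n - X)), classSum_apply]
  simp only [one_mul, φ]

/-- The narrow ray classes modulo `𝔪` are an instance of `ClassCount`; for `q` one takes the norm of a
power of a prime whose ray class is trivial. -/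
theorem exists_classCount (𝔪 : Ideal (𝓞 K)) [NeZero 𝔪] : ∃ (κ C δ : ℝ) (q : ℕ),
    ClassCount (classSum (𝔪 := 𝔪) fun _ => 1)
      (classSum (𝔪 := 𝔪) fun 𝔡 => idealVonMangoldt (𝔡 : Ideal (𝓞 K))) stepBump 1 κ C δ q := by
  obtain ⟨κ, C, hκ, hcount⟩ := exists_rayCount 𝔪
  obtain ⟨𝔭, h𝔭⟩ := exists_prime_mem 𝔪
  have h2 := two_le_absNorm h𝔭
  have hm : 0 < orderOf (rayClass 𝔪 𝔭) := orderOf_pos _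
  have hpow : ∀ k, rayClass 𝔪 (𝔭 ^ k) = rayClass 𝔪 𝔭 ^ k := fun k => by
    induction k with
    | zero => rw [pow_zero, pow_zero, rayClass_one]
    | succ k ih => rw [pow_succ, pow_succ, rayClass_mul, ih]
  refine ⟨κ, C, Real.log (Ideal.absNorm (𝔭 : Ideal (𝓞 K))),
    Ideal.absNorm (𝔭 : Ideal (𝓞 K)) ^ orderOf (rayClass 𝔪 𝔭), ?_⟩
  refine
    { weight := isWeight_stepBump
      A_nonneg := classSum_nonneg fun _ => zero_le_one
      L_nonneg := classSum_nonneg fun _ => idealVonMangoldt_nonneg _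
      A_zero_one := ?_
      A_one := fun c hc => ?_
      log_eq := fun c n => ?_
      summable := fun c s hs => summable_classSum_one c hs
      κ_pos := hκ
      count := fun c X hX => ?_
      two_le := h2.trans (Nat.le_self_pow hm.ne' _)
      δ_pos := Real.log_pos (by exact_mod_cast h2)
      δ_le := fun i hi => ?_ }
  · rw [classSum_apply, normFiber_one, Finset.sum_singleton, rayClass_one, ofMul_one, if_pos rfl]
  · rw [classSum_apply, normFiber_one, Finset.sum_singleton, rayClass_one, ofMul_one,
      if_neg hc.symm]
  · rw [classSum_mul_apply _ (fun n => Real.log n), sum_classSum_mul, classSum_apply]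
    refine Finset.sum_congr rfl fun 𝔞 h𝔞 => ?_
    rw [sum_normPairs_idealVonMangoldt h𝔞, one_mul]
  · rw [tsum_classSum_mul_stepBump]
    exact hcount _ X hX
  · rw [classSum_apply]
    have hk : orderOf (rayClass 𝔪 𝔭) * i ≠ 0 := (Nat.mul_pos hm hi).ne'
    have hmem : 𝔭 ^ (orderOf (rayClass 𝔪 𝔭) * i) ∈
        normFiber 𝔪 ((Ideal.absNorm (𝔭 : Ideal (𝓞 K)) ^ orderOf (rayClass 𝔪 𝔭)) ^ i) := by
      rw [mem_normFiber, SubmonoidClass.coe_pow, map_pow, pow_mul]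
    refine le_trans (le_of_eq ?_) (Finset.single_le_sum (fun 𝔞 _ => ?_) hmem)
    · rw [hpow, pow_mul, pow_orderOf_eq_one, one_pow, ofMul_one, if_pos rfl,
        SubmonoidClass.coe_pow, idealVonMangoldt_prime_pow h𝔭 hk]
    · split_ifs
      exacts [idealVonMangoldt_nonneg _, le_rfl]

/-- Every class of the narrow ray class group contains infinitely many primes: the von Mangoldt mass
of the class diverges, whereas the powers `𝔭 ^ k` with `k ≥ 2` contribute a finite amount. -/
theorem infinite_primes_rayClass [NeZero 𝔪] (c : RayClassGroup 𝔪) :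
    {𝔭 : coprimeIdeals 𝔪 | Prime (𝔭 : Ideal (𝓞 K)) ∧ rayClass 𝔪 𝔭 = c}.Infinite := by
  intro hfin
  set P := {𝔭 : coprimeIdeals 𝔪 | Prime (𝔭 : Ideal (𝓞 K)) ∧ rayClass 𝔪 𝔭 = c} with hP
  let f : coprimeIdeals 𝔪 → ℝ := fun 𝔡 =>
    idealVonMangoldt (𝔡 : Ideal (𝓞 K)) / Ideal.absNorm (𝔡 : Ideal (𝓞 K))
  have hf : ∀ 𝔡, 0 ≤ f 𝔡 := fun 𝔡 => div_nonneg (idealVonMangoldt_nonneg _) (Nat.cast_nonneg _)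
  let e : {𝔭 : coprimeIdeals 𝔪 // Prime (𝔭 : Ideal (𝓞 K))} × ℕ → coprimeIdeals 𝔪 := fun x =>
    x.1.1 ^ (x.2 + 2)
  have he : Function.Injective e := by
    rintro ⟨𝔭, k⟩ ⟨𝔮, l⟩ h
    have h1 := congrArg (fun x : coprimeIdeals 𝔪 => normalizedFactors (x : Ideal (𝓞 K))) h
    simp only [e, SubmonoidClass.coe_pow] at h1
    rw [normalizedFactors_prime_pow 𝔭.2, normalizedFactors_prime_pow 𝔮.2] at h1
    have h2 : k = l := by simpa using congrArg Multiset.card h1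
    subst h2
    have h3 : (𝔭.1 : Ideal (𝓞 K)) = 𝔮.1 := Multiset.eq_of_mem_replicate
      (h1 ▸ Multiset.mem_replicate.2 ⟨by omega, rfl⟩ :
        (𝔭.1 : Ideal (𝓞 K)) ∈ Multiset.replicate (k + 2) (𝔮.1 : Ideal (𝓞 K)))
    rw [Subtype.ext (Subtype.ext h3)]
  have hF1 : Summable (P.indicator f) :=
    summable_of_ne_finset_zero (s := hfin.toFinset) fun 𝔡 h𝔡 =>
      Set.indicator_of_notMem (by simpa using h𝔡) _
  have hF2 : Summable ((Set.range e).indicator f) := by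
    rw [← he.summable_iff fun x hx => Set.indicator_of_notMem hx _]
    have hs : Summable fun x : {𝔭 : coprimeIdeals 𝔪 // Prime (𝔭 : Ideal (𝓞 K))} × ℕ =>
        2 * (((Ideal.absNorm (x.1.1 : Ideal (𝓞 K)) : ℝ) ^ (3 / 2 : ℝ))⁻¹ * (1 / 2 : ℝ) ^ x.2) := by
      refine Summable.mul_left 2 (Summable.mul_of_nonneg
        ((summable_norm_rpow 𝔪 (by norm_num : (1 : ℝ) < 3 / 2)).comp_injective
          Subtype.val_injective) summable_geometric_two ?_ ?_)
      · intro 𝔭; simp only [Pi.zero_apply, Function.comp_apply]; positivity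
      · intro k; simp only [Pi.zero_apply]; positivity
    refine hs.of_nonneg_of_le (fun x => Set.indicator_nonneg (fun 𝔡 _ => hf 𝔡) _) fun x => ?_
    obtain ⟨𝔭, k⟩ := x
    have h2 := two_le_absNorm 𝔭.2
    set N : ℝ := (Ideal.absNorm (𝔭.1 : Ideal (𝓞 K)) : ℝ) with hN
    have hN2 : (2 : ℝ) ≤ N := by rw [hN]; exact_mod_cast h2
    have hN0 : 0 < N := by linarith
    rw [Function.comp_apply, Set.indicator_of_mem (Set.mem_range_self _)]
    simp only [f, e, SubmonoidClass.coe_pow]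
    rw [idealVonMangoldt_prime_pow 𝔭.2 (by omega), map_pow, Nat.cast_pow, ← hN]
    have hlog : Real.log N ≤ 2 * N ^ (1 / 2 : ℝ) := by
      have := Real.log_le_rpow_div hN0.le (by norm_num : (0 : ℝ) < 1 / 2)
      linarith
    have hsq : N ^ 2 = N ^ (1 / 2 : ℝ) * N ^ (3 / 2 : ℝ) := by
      rw [← Real.rpow_add hN0]
      norm_num
    have hp1 : 0 < N ^ (1 / 2 : ℝ) := Real.rpow_pos_of_pos hN0 _
    have hp2 : 0 < N ^ (3 / 2 : ℝ) := Real.rpow_pos_of_pos hN0 _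
    calc Real.log N / N ^ (k + 2) ≤ 2 * N ^ (1 / 2 : ℝ) / N ^ (k + 2) := by gcongr
      _ = 2 * ((N ^ (3 / 2 : ℝ))⁻¹ * (N⁻¹) ^ k) := by
        rw [pow_add, hsq, inv_pow]
        field_simp
      _ ≤ 2 * ((N ^ (3 / 2 : ℝ))⁻¹ * (1 / 2) ^ k) := by
        gcongr
        rw [one_div]
        gcongr
  have hsum : Summable fun 𝔡 : coprimeIdeals 𝔪 => if rayClass 𝔪 𝔡 = c then f 𝔡 else 0 := by
    refine (hF1.add hF2).of_nonneg_of_le (fun 𝔡 => by split_ifs; exacts [hf 𝔡, le_rfl]) fun 𝔡 => ?_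
    have hi1 : 0 ≤ P.indicator f 𝔡 := Set.indicator_nonneg (fun 𝔡 _ => hf 𝔡) _
    have hi2 : 0 ≤ (Set.range e).indicator f 𝔡 := Set.indicator_nonneg (fun 𝔡 _ => hf 𝔡) _
    split_ifs with hc
    swap
    · exact add_nonneg hi1 hi2
    by_cases hpp : IsPrimePow (𝔡 : Ideal (𝓞 K))
    swap
    · have : f 𝔡 = 0 := by simp only [f, idealVonMangoldt, if_neg hpp, zero_div]
      rw [this]
      exact add_nonneg hi1 hi2
    obtain ⟨𝔭, k, h𝔭, hk, h𝔡⟩ := hpp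
    obtain rfl | hk1 := eq_or_ne k 1
    · have : 𝔡 ∈ P := ⟨by rw [← h𝔡, pow_one]; exact h𝔭, hc⟩
      rw [Set.indicator_of_mem this]
      linarith
    · have hmem : 𝔭 ∈ coprimeIdeals 𝔪 := by
        refine mem_coprimeIdeals_of_mul_left (𝔞 := 𝔭 ^ (k - 1)) ?_
        rw [← pow_succ, Nat.sub_add_cancel hk, h𝔡]
        exact 𝔡.2
      have : 𝔡 ∈ Set.range e := by
        refine ⟨(⟨⟨𝔭, hmem⟩, h𝔭⟩, k - 2), Subtype.ext ?_⟩
        simp only [e, SubmonoidClass.coe_pow]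
        rw [Nat.sub_add_cancel (by omega), h𝔡]
      rw [Set.indicator_of_mem this]
      linarith
  obtain ⟨κ, C, δ, q, h⟩ := exists_classCount 𝔪
  refine h.not_summable (Additive.ofMul c) ?_
  refine ((summable_iff_fiber fun 𝔡 => by split_ifs; exacts [hf 𝔡, le_rfl]).1 hsum).congr
    fun n => ?_
  rw [classSum_apply, Finset.sum_div]
  refine Finset.sum_congr rfl fun 𝔡 h𝔡 => ?_
  simp only [f, mem_normFiber.1 h𝔡, EmbeddingLike.apply_eq_iff_eq]
  split_ifs <;> simp

end PrimesInClasses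

/-! ### Square roots in the completions -/

section Hensel

open Metric

/-- Hensel's lemma for `x + x ^ 2 = a`: the map `x ↦ a - x ^ 2` contracts the ball of radius `‖a‖`. -/
lemma exists_add_sq_eq {L : Type*} [NormedField L] [IsUltrametricDist L] [CompleteSpace L]
    {a : L} (ha : ‖a‖ < 1) : ∃ x : L, ‖x‖ ≤ ‖a‖ ∧ x + x ^ 2 = a := by
  have hmaps : Set.MapsTo (fun x : L => a - x ^ 2) (closedBall 0 ‖a‖) (closedBall 0 ‖a‖) := by
    intro x hx
    rw [mem_closedBall_zero_iff] at hx ⊢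
    have h := IsUltrametricDist.norm_add_le_max a (-(x ^ 2))
    rw [← sub_eq_add_neg, norm_neg, norm_pow] at h
    refine h.trans (max_le le_rfl ?_)
    nlinarith [norm_nonneg x, norm_nonneg a]
  have hcontr : ContractingWith ‖a‖₊ (hmaps.restrict _ _ _) := by
    refine ⟨by exact_mod_cast ha, LipschitzWith.of_dist_le_mul ?_⟩
    rintro ⟨x, hx⟩ ⟨y, hy⟩
    rw [mem_closedBall_zero_iff] at hx hy
    rw [Subtype.dist_eq, Subtype.dist_eq, dist_eq_norm, dist_eq_norm]
    simp only [Set.MapsTo.val_restrict_apply, coe_nnnorm]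
    have h : (a - x ^ 2) - (a - y ^ 2) = -(x + y) * (x - y) := by ring
    rw [h, norm_mul, norm_neg]
    exact mul_le_mul_of_nonneg_right
      ((IsUltrametricDist.norm_add_le_max x y).trans (max_le hx hy)) (norm_nonneg _)
  obtain ⟨y, hy, hfix, -⟩ := ContractingWith.exists_fixedPoint'
    (isClosed_closedBall.isComplete) hmaps hcontr
    (x := 0) (by simp) (edist_ne_top _ _)
  refine ⟨y, by simpa using hy, ?_⟩
  have h : a - y ^ 2 = y := hfix
  linear_combination -h

variable {F : Type*} [Field F] [NumberField F]

/-- If `α ≡ 1` to a higher order than that of `4`, then `(1 + 2 x) ^ 2 = α` for the solution `x` of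
`x + x ^ 2 = (α - 1) / 4`. -/
lemma isUnitSquareAt_of_sub_mem {α : 𝓞 F} {𝔭 : HeightOneSpectrum (𝓞 F)} {e : ℕ}
    (hα : α - 1 ∈ 𝔭.asIdeal ^ e) (h4 : (4 : 𝓞 F) ∉ 𝔭.asIdeal ^ e) :
    IsUnitSquareAt F (α : F) 𝔭 := by
  have hval : ∀ r : 𝓞 F, Valued.v (algebraMap F (𝔭.adicCompletion F) (r : F)) =
      𝔭.intValuation r := by
    intro r
    rw [HeightOneSpectrum.algebraMap_adicCompletion]
    simp only [Function.comp_apply, Algebra.algebraMap_self, RingHom.id_apply]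
    rw [HeightOneSpectrum.valuedAdicCompletion_eq_valuation',
      HeightOneSpectrum.valuation_of_algebraMap]
  have hlt : 𝔭.intValuation (α - 1) < 𝔭.intValuation 4 := by
    rw [← HeightOneSpectrum.intValuation_le_pow_iff_mem] at hα h4
    exact hα.trans_lt (not_le.mp h4)
  have h40 : (4 : 𝔭.adicCompletion F) ≠ 0 := by
    have : CharZero (𝔭.adicCompletion F) :=
      charZero_of_injective_algebraMap (algebraMap F (𝔭.adicCompletion F)).injective
    norm_num
  set A : 𝔭.adicCompletion F := algebraMap F (𝔭.adicCompletion F) (α : F) with hA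
  have hv : Valued.v (A - 1) < Valued.v (4 : 𝔭.adicCompletion F) := by
    have h1 := hval (α - 1)
    have h2 := hval 4
    have e1 : ((α - 1 : 𝓞 F) : F) = α - 1 := by simp
    have e2 : ((4 : 𝓞 F) : F) = 4 := map_ofNat (algebraMap (𝓞 F) F) 4
    rw [e1, map_sub, map_one] at h1
    rw [e2, map_ofNat] at h2
    rw [h1, h2]; exact hlt
  have ha : Valued.v ((A - 1) / 4) < 1 := by
    rw [map_div₀]
    exact (div_lt_one₀ ((Valuation.pos_iff _).mpr h40)).mpr hv
  have hnorm : ‖(A - 1) / 4‖ < 1 := Valued.toNormedField.norm_lt_one_iff.mpr ha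
  have : IsUltrametricDist (𝔭.adicCompletion F) := by
    open scoped Valued in exact inferInstance
  obtain ⟨x, hx, hxe⟩ := exists_add_sq_eq hnorm
  have hx1 : Valued.v x < 1 := Valued.toNormedField.norm_lt_one_iff.mp (hx.trans_lt hnorm)
  have hx2 : Valued.v (2 * x) < 1 := by
    rw [map_mul]
    refine mul_lt_one_of_nonneg_of_lt_one_right ?_ zero_le hx1
    have h := (Valued.v : Valuation (𝔭.adicCompletion F) _).map_add 1 1
    rw [one_add_one_eq_two] at h
    simpa using h
  have hy1 : Valued.v (1 + 2 * x) = 1 := Valuation.map_one_add_of_lt _ hx2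
  have hu : IsUnit (⟨1 + 2 * x, hy1.le⟩ : 𝔭.adicCompletionIntegers F) :=
    HeightOneSpectrum.adicCompletionIntegers.isUnit_iff_valued_eq_one.mpr hy1
  refine ⟨hu.unit, ?_⟩
  change (1 + 2 * x) ^ 2 = A
  have : A = 1 + 4 * ((A - 1) / 4) := by field_simp; ring
  rw [this, ← hxe]; ring

lemma IsUnitSquareAt.mul {α β : F} {𝔭 : HeightOneSpectrum (𝓞 F)}
    (hα : IsUnitSquareAt F α 𝔭) (hβ : IsUnitSquareAt F β 𝔭) : IsUnitSquareAt F (α * β) 𝔭 := by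
  obtain ⟨y, hy⟩ := hα
  obtain ⟨z, hz⟩ := hβ
  refine ⟨y * z, ?_⟩
  rw [map_mul, ← hy, ← hz, ← mul_pow]
  simp

lemma IsUnitSquareAt.inv {α : F} {𝔭 : HeightOneSpectrum (𝓞 F)}
    (hα : IsUnitSquareAt F α 𝔭) : IsUnitSquareAt F α⁻¹ 𝔭 := by
  obtain ⟨y, hy⟩ := hα
  refine ⟨y⁻¹, ?_⟩
  rw [map_inv₀, ← hy, ← inv_pow]
  congr 1
  refine eq_inv_of_mul_eq_one_left ?_
  have h : ((y⁻¹ * y : (𝔭.adicCompletionIntegers F)ˣ) : 𝔭.adicCompletionIntegers F) = 1 := by simp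
  exact_mod_cast congrArg (Subtype.val) h

/-- The exponent `N(4)` is large enough at every prime at once, because `N(𝔭) ^ e ≥ 2 ^ e > e`. -/
lemma four_notMem_pow (𝔭 : HeightOneSpectrum (𝓞 F)) :
    (4 : 𝓞 F) ∉ 𝔭.asIdeal ^ (Ideal.absNorm (Ideal.span {(4 : 𝓞 F)})) := by
  intro h
  set e := Ideal.absNorm (Ideal.span {(4 : 𝓞 F)}) with he
  have he0 : e ≠ 0 := by
    rw [he, Ne, Ideal.absNorm_eq_zero_iff, Ideal.span_singleton_eq_bot]
    norm_num
  have hdvd : Ideal.absNorm (𝔭.asIdeal ^ e) ∣ e :=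
    Ideal.absNorm_dvd_absNorm_of_le ((Ideal.span_singleton_le_iff_mem _).mpr h)
  rw [map_pow] at hdvd
  have h1 : 2 ^ e ≤ Ideal.absNorm 𝔭.asIdeal ^ e :=
    Nat.pow_le_pow_left (NumberField.HeightOneSpectrum.one_lt_absNorm 𝔭) e
  have h2 := Nat.le_of_dvd (Nat.pos_of_ne_zero he0) hdvd
  have h3 := Nat.lt_two_pow_self (n := e)
  omega

end Hensel

/-! ### Signs at the real places -/

section Assembly

set_option linter.unusedSectionVars false

open scoped Classical
open InfinitePlace

variable {F : Type*} [Field F] [NumberField F]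

lemma isReal_ofReal_comp (σ : F →+* ℝ) :
    ComplexEmbedding.IsReal (Complex.ofRealHom.comp σ) := by
  rw [ComplexEmbedding.isReal_iff]
  ext x
  simp [ComplexEmbedding.conjugate_coe_eq]

/-- A real embedding is one of the real coordinates of the mixed embedding. -/
lemma exists_realPlace (σ : F →+* ℝ) : ∃ w : {w : InfinitePlace F // IsReal w},
    ∀ x : F, (mixedEmbedding F x).1 w = σ x := by
  refine ⟨⟨InfinitePlace.mk (Complex.ofRealHom.comp σ), isReal_mk_iff.mpr (isReal_ofReal_comp σ)⟩,
    fun x => ?_⟩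
  rw [mixedEmbedding.mixedEmbedding_apply_isReal]
  apply Complex.ofReal_injective
  rw [embedding_of_isReal_apply, embedding_mk_eq_of_isReal (isReal_ofReal_comp σ)]
  rfl

lemma mk_ofReal_injective {σ τ : F →+* ℝ}
    (h : InfinitePlace.mk (Complex.ofRealHom.comp σ) = InfinitePlace.mk (Complex.ofRealHom.comp τ)) :
    σ = τ := by
  have h2 := congrArg InfinitePlace.embedding h
  rw [embedding_mk_eq_of_isReal (isReal_ofReal_comp σ),
    embedding_mk_eq_of_isReal (isReal_ofReal_comp τ)] at h2
  ext x
  exact Complex.ofReal_injective (RingHom.congr_fun h2 x)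

/-- Weak approximation at the infinite places yields an integer with prescribed signs; the
denominator `b` of an approximating element is removed by multiplying with `b ^ 2`. -/
lemma exists_signs (T : Set (F →+* ℝ)) : ∃ θ : 𝓞 F, θ ≠ 0 ∧
    (∀ σ ∈ T, σ (θ : F) < 0) ∧ ∀ σ ∉ T, 0 < σ (θ : F) := by
  let t : InfinitePlace F → F := fun v =>
    if ∃ σ ∈ T, InfinitePlace.mk (Complex.ofRealHom.comp σ) = v then -1 else 1
  obtain ⟨x, hx⟩ : ∃ x : F, ∀ v : InfinitePlace F, v (x - t v) < 1 := by
    obtain ⟨x, hx⟩ := (InfinitePlace.denseRange_algebraMap_pi F).exists_dist_lt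
      (fun v => (WithAbs.equiv v.1).symm (t v)) one_pos
    refine ⟨x, fun v => ?_⟩
    have h := (dist_pi_lt_iff one_pos).mp hx v
    rw [dist_comm, dist_eq_norm, WithAbs.norm_eq_apply_ofAbs] at h
    exact h
  have hσ : ∀ σ : F →+* ℝ,
      |σ x - σ (t (InfinitePlace.mk (Complex.ofRealHom.comp σ)))| < 1 := by
    intro σ
    have h := hx (InfinitePlace.mk (Complex.ofRealHom.comp σ))
    rw [InfinitePlace.apply, RingHom.comp_apply, Complex.ofRealHom_eq_coe, Complex.norm_real,
      map_sub] at h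
    exact h
  have hx0 : x ≠ 0 := by
    rintro rfl
    have v : InfinitePlace F := Classical.arbitrary _
    have h := hx v
    simp only [t] at h
    have hneg : v (-1) = 1 := by
      rw [← InfinitePlace.norm_embedding_eq]
      simp
    split_ifs at h <;> simp [hneg] at h
  obtain ⟨a, b, hb, hab⟩ := IsFractionRing.div_surjective (A := 𝓞 F) x
  have hb0 : (b : F) ≠ 0 := by simpa using nonZeroDivisors.ne_zero hb
  have hθ : ((a * b : 𝓞 F) : F) = x * (b : F) ^ 2 := by
    have : ((a * b : 𝓞 F) : F) = (a : F) * b := by simp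
    rw [this, ← hab]
    field_simp
  have hsq : ∀ σ : F →+* ℝ, 0 < σ (b : F) ^ 2 := fun σ =>
    sq_pos_of_ne_zero ((map_ne_zero σ).mpr hb0)
  refine ⟨a * b, ?_, ?_, ?_⟩
  · intro h
    rw [h] at hθ
    have : x * (b : F) ^ 2 = 0 := by rw [← hθ]; simp
    exact mul_ne_zero hx0 (pow_ne_zero 2 hb0) this
  · intro σ hσT
    rw [hθ, map_mul, map_pow]
    refine mul_neg_of_neg_of_pos ?_ (hsq σ)
    have h := hσ σ
    simp only [t] at h
    rw [if_pos ⟨σ, hσT, rfl⟩, map_neg, map_one] at h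
    linarith [(abs_lt.mp h).2]
  · intro σ hσT
    rw [hθ, map_mul, map_pow]
    refine mul_pos ?_ (hsq σ)
    have h := hσ σ
    simp only [t] at h
    rw [if_neg, map_one] at h
    · linarith [(abs_lt.mp h).1]
    · rintro ⟨τ, hτ, e⟩
      exact hσT (mk_ofReal_injective e ▸ hτ)

end Assembly

/-! ### The auxiliary prime -/

/-- Let `F` be a number field, `Ξf` a finite set of maximal ideals of `O_F`,
`Ξinf` a set of real embeddings of `F`, `S` a finite set of maximal ideals, and `I` a nonzero
ideal of `O_F` not contained in any member of `Ξf`.  Then there exist a maximal ideal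
`𝔮 ∉ S ∪ Ξf` and `α ∈ Fˣ` with `I·𝔮 = α·O_F`, `α` a square of a unit at every `𝔭 ∈ Ξf`,
`σ α < 0` for `σ ∈ Ξinf`, and `σ α > 0` for every real embedding `σ ∉ Ξinf`. -/
theorem exists_auxiliary_prime_and_generator
    (Ξf : Finset (HeightOneSpectrum (𝓞 F))) (Ξinf : Set (F →+* ℝ))
    (S : Finset (HeightOneSpectrum (𝓞 F)))
    (I : Ideal (𝓞 F)) (hI : I ≠ 0)
    (hIΞ : ∀ 𝔭 ∈ Ξf, ¬ I ≤ 𝔭.asIdeal) :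
    ∃ (𝔮 : HeightOneSpectrum (𝓞 F)) (α : F),
      𝔮 ∉ S ∧ 𝔮 ∉ Ξf ∧ α ≠ 0 ∧
      (↑(I * 𝔮.asIdeal) : FractionalIdeal (𝓞 F)⁰ F)
        = FractionalIdeal.spanSingleton (𝓞 F)⁰ α ∧
      (∀ 𝔭 ∈ Ξf, IsUnitSquareAt F α 𝔭) ∧
      (∀ σ : F →+* ℝ, σ ∈ Ξinf → σ α < 0) ∧
      (∀ σ : F →+* ℝ, σ ∉ Ξinf → 0 < σ α) := by
  set e := Ideal.absNorm (Ideal.span {(4 : 𝓞 F)}) with he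
  have he0 : e ≠ 0 := by
    rw [he, Ne, Ideal.absNorm_eq_zero_iff, Ideal.span_singleton_eq_bot]
    norm_num
  set 𝔪 : Ideal (𝓞 F) := ∏ 𝔭 ∈ Ξf, 𝔭.asIdeal ^ e with h𝔪
  have : NeZero 𝔪 := ⟨Finset.prod_ne_zero_iff.mpr fun 𝔭 _ => pow_ne_zero e 𝔭.ne_bot⟩
  have hle : ∀ 𝔭 ∈ Ξf, 𝔪 ≤ 𝔭.asIdeal ^ e := fun 𝔭 h𝔭 =>
    Ideal.le_of_dvd (Finset.dvd_prod_of_mem _ h𝔭)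
  have hIm : I ∈ coprimeIdeals 𝔪 := by
    refine ⟨hI, IsCoprime.prod_right fun 𝔭 h𝔭 => IsCoprime.pow_right ?_⟩
    rw [Ideal.isCoprime_iff_sup_eq, sup_comm]
    exact 𝔭.isMaximal.1.2 _ (left_lt_sup.mpr (hIΞ 𝔭 h𝔭))
  obtain ⟨θ, hθ0, hθneg, hθpos⟩ := exists_signs Ξinf
  obtain ⟨β, hβI, hβ0, hβm, hβθ⟩ := exists_mem_sign hIm hθ0
  obtain ⟨𝔯, h𝔯⟩ := Ideal.dvd_iff_le.2 ((Ideal.span_singleton_le_iff_mem _).2 hβI)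
  have h𝔯m : 𝔯 ∈ coprimeIdeals 𝔪 := by
    apply mem_coprimeIdeals_of_mul_left (𝔞 := I)
    rw [← h𝔯]
    exact ⟨by simpa using hβ0, isCoprime_span_of_sub_mem hβm⟩
  obtain ⟨⟨𝔮, h𝔮m⟩, ⟨h𝔮p, h𝔮c⟩, h𝔮S⟩ :=
    (infinite_primes_rayClass (rayClass 𝔪 ⟨𝔯, h𝔯m⟩)).exists_notMem_finite
      ((S.finite_toSet.image fun 𝔭 => 𝔭.asIdeal).preimage Subtype.val_injective.injOn)
  obtain ⟨α₁, β₁, hα₁, hβ₁, heq⟩ := rayClass_eq_iff.mp h𝔮c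
  dsimp only at h𝔮p heq
  have hsq : ∀ γ : 𝓞 F, γ - 1 ∈ 𝔪 → ∀ 𝔭 ∈ Ξf, IsUnitSquareAt F (γ : F) 𝔭 := fun γ hγ 𝔭 h𝔭 =>
    isUnitSquareAt_of_sub_mem (hle 𝔭 h𝔭 hγ) (four_notMem_pow 𝔭)
  have hα₁0 : (α₁ : F) ≠ 0 := by simpa using hα₁.ne_zero
  have hβ₁0 : (β₁ : F) ≠ 0 := by simpa using hβ₁.ne_zero
  have hβ0' : (β : F) ≠ 0 := by simpa using hβ0
  have hsign : ∀ σ : F →+* ℝ, 0 < σ ((β : F) * β₁ * (α₁ : F)⁻¹) * σ (θ : F) := by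
    intro σ
    obtain ⟨w, hw⟩ := exists_realPlace σ
    have h1 := hβθ w
    have h2 := hα₁.pos w
    have h3 := hβ₁.pos w
    rw [hw] at h2 h3
    rw [hw, hw] at h1
    rw [map_mul, map_mul, map_inv₀]
    have : 0 < (σ β * σ θ) * (σ β₁ * (σ α₁)⁻¹) := by positivity
    calc _ < _ := this
      _ = _ := by ring
  refine ⟨⟨𝔮, Ideal.isPrime_of_prime h𝔮p, h𝔮p.ne_zero⟩, (β : F) * β₁ * (α₁ : F)⁻¹, ?_, ?_, ?_, ?_, ?_, ?_, ?_⟩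
  · intro h
    exact h𝔮S ⟨_, h, rfl⟩
  · intro h
    have h1 : 𝔪 ≤ 𝔮 := (hle _ h).trans (Ideal.pow_le_self he0)
    have h2 := h𝔮m.2
    rw [Ideal.isCoprime_iff_sup_eq, sup_eq_left.mpr h1] at h2
    exact h𝔮p.not_isUnit (Ideal.isUnit_iff.mpr h2)
  · exact mul_ne_zero (mul_ne_zero hβ0' hβ₁0) (inv_ne_zero hα₁0)
  · have h1 : Ideal.span {α₁} * (I * 𝔮) = Ideal.span {β * β₁} := by
      rw [← Ideal.span_singleton_mul_span_singleton, h𝔯]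
      calc _ = I * (Ideal.span {α₁} * 𝔮) := by ring
        _ = _ := by rw [heq]; ring
    have h2 := congrArg (fun J : Ideal (𝓞 F) => (J : FractionalIdeal (𝓞 F)⁰ F)) h1
    simp only [FractionalIdeal.coeIdeal_mul, FractionalIdeal.coeIdeal_span_singleton, map_mul] at h2
    have h3 : FractionalIdeal.spanSingleton (𝓞 F)⁰ (α₁ : F)⁻¹ *
        FractionalIdeal.spanSingleton (𝓞 F)⁰ (α₁ : F) = 1 := by
      rw [FractionalIdeal.spanSingleton_mul_spanSingleton, inv_mul_cancel₀ hα₁0,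
        FractionalIdeal.spanSingleton_one]
    calc (↑(I * 𝔮) : FractionalIdeal (𝓞 F)⁰ F)
        = (FractionalIdeal.spanSingleton (𝓞 F)⁰ (α₁ : F)⁻¹ *
          FractionalIdeal.spanSingleton (𝓞 F)⁰ (α₁ : F)) * (I * 𝔮) := by
            rw [h3, one_mul, FractionalIdeal.coeIdeal_mul]
      _ = FractionalIdeal.spanSingleton (𝓞 F)⁰ (α₁ : F)⁻¹ *
          FractionalIdeal.spanSingleton (𝓞 F)⁰ ((β : F) * β₁) := by rw [mul_assoc, h2]
      _ = _ := by rw [FractionalIdeal.spanSingleton_mul_spanSingleton, mul_comm]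
  · intro 𝔭 h𝔭
    exact ((hsq β hβm 𝔭 h𝔭).mul (hsq β₁ hβ₁.sub_mem 𝔭 h𝔭)).mul (hsq α₁ hα₁.sub_mem 𝔭 h𝔭).inv
  · intro σ hσ
    exact neg_of_mul_pos_left (hsign σ) (hθneg σ hσ).le
  · intro σ hσ
    exact pos_of_mul_pos_left (hsign σ) (hθpos σ hσ).le

end PrincipalizationLemma
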